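/- arXiv:math/0201297 — 8 statements merged into one kernel-verified Lean document; each statement's English description precedes it below -/
import Mathlib

section
/- Let k be an algebraically closed field of characteristic p ≠ 2 and let G be a finite subgroup of PGL₂(k). If p does not divide the order of G, then G is isomorphic to a cyclic group, a dihedral group, the symmetric group S₄, the alternating group A₄, or the alternating group A₅. If p > 0 divides the order of G, then one of the following holds: G is a semidirect product Q ⋊ C where Q is a normal elementary abelian Sylow p-subgroup of G (an abelian p-group of exponent p) and C is a cyclic group of order prime to p; or p = 3 and G is isomorphic to A₅; or G is isomorphic to PSL₂(F_q) or to PGL₂(F_q) for some prime power q = p^s, s ≥ 1. -/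
/-!
The group `PGL₂(k)` acts on the projective line `OnePoint k` by Möbius transformations. The proof
counts, for a finite subgroup `G`, the pairs of a nontrivial element and a fixed point of it in two
ways: by elements and by orbits of points with nontrivial stabilizer (`exists_orbit_reps`). A
nontrivial element has one or two fixed points. In the first case it is conjugate to a translation
and has order `p`, in the second case it is conjugate to a homothety and has order prime to `p`
(`fixed_dichotomy`).

If `p` does not divide the order of `G`, then every nontrivial element has two fixed points, and the
point stabilizers are cyclic, since they embed into `kˣ`. This is the situation of `klein`: the
class formula leaves at most three nontrivial orbits. With at most two orbits, or with a stabilizer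
of index at most 2, `G` is cyclic or dihedral. Otherwise there are three orbits and the order is 12,
24 or 60, with stabilizers of the orders known from the polyhedral groups. Then the centralizers of
the elements of order 3 and of the involutions are small enough to determine the number of Sylow
subgroups, and `G` acts faithfully on them (`iso_A4`, `iso_S4`, `iso_A5`).

If `p` divides the order of `G`, then an element of order `p` has a unique fixed point `x`. When `G`
fixes `x`, the Schur–Zassenhaus theorem exhibits `G` as a semidirect product of its translations by a
subgroup of `kˣ` (`semidirect`). Otherwise, coordinates are chosen such that `x = ∞`, the element is
`z ↦ z + 1`, and `0` belongs to the orbit of `∞`. Let `q` be the number of translations in `G`, let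
`m` be the number of linear parts `a` of affine maps `z ↦ a * z + b` in `G`, and let `1 + n * q` be
the length of the orbit of `∞`. The elements with a unique fixed point are the conjugates of the
translations, and the class formula shows that there is exactly one other orbit with nontrivial
stabilizers, of order `e` say, and that `e * (1 + n * (q - 2)) = m * (1 + n * q)` (`class_formula`).
As `m < q`, there are only two kinds of solutions (`modular_numerics`).

* `n = 1` and `q - 1` divides `2 * m`. The linear parts and zero are more than half of the vectors of
  translations, so these vectors form the additive group generated by the linear parts, hence a ring
  and thus a finite field `F` of order `q` (`trans_mul_mem`). The orbit of `∞` is the projective line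
  over `F`, and `G` is a subgroup of `PGL₂(F)` that contains the elementary matrices. The subgroup
  that these generate, `PSL₂(F)`, has index at most 2 (`modular_PSL_or_PGL`).
* `q = 3`, `n = 3`, `m = 2`, `e = 5`. Then `G` has order 60, and the centralizers of elements of
  order 2 and 3 are again small enough for `iso_A5` (`modular_A5`).
-/

/-- `PGL₂(k)`: the quotient of the group `GL₂(k)` of invertible `2×2` matrices over `k`
by its center (the scalar matrices). -/
abbrev PGL2 (k : Type*) [Field k] : Type _ :=
  GL (Fin 2) k ⧸ Subgroup.center (GL (Fin 2) k)

/-- `PSL₂(F)`: the special linear group modulo its center; over a field this is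
(abstractly) the image of `SL₂(F)` in `PGL₂(F)`. -/
abbrev PSL2 (F : Type*) [Field F] : Type _ :=
  Matrix.SpecialLinearGroup (Fin 2) F ⧸ Subgroup.center (Matrix.SpecialLinearGroup (Fin 2) F)

/-! ### Recognizing small groups -/

namespace Dickson

section GroupTheory

set_option linter.unusedSectionVars false

variable {G : Type*} [Group G] [Finite G]

/-- The orbit–stabilizer theorem for conjugation. -/
lemma card_conj_class_mul (c : G) :
    Nat.card (Set.range fun g : G => g * c * g⁻¹) *
      Nat.card (Subgroup.centralizer ({c} : Set G)) = Nat.card G := by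
  rw [← (Subgroup.centralizer ({c} : Set G)).index_mul_card]
  congr 1
  have hc : ∀ g h : G, g * c * g⁻¹ = h * c * h⁻¹ ↔
      g⁻¹ * h ∈ Subgroup.centralizer ({c} : Set G) := by
    intro g h
    rw [Subgroup.mem_centralizer_singleton_iff]
    constructor <;> intro H
    · calc g⁻¹ * h * c = g⁻¹ * (h * c * h⁻¹) * h := by group
        _ = c * (g⁻¹ * h) := by rw [← H]; group
    · calc g * c * g⁻¹ = g * (c * (g⁻¹ * h)) * h⁻¹ := by group
        _ = h * c * h⁻¹ := by rw [← H]; group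
  refine Nat.card_congr (Equiv.symm (Equiv.ofBijective
    (Quotient.lift (fun g : G => (⟨g * c * g⁻¹, g, rfl⟩ : Set.range fun g : G => g * c * g⁻¹))
      ?_) ⟨?_, ?_⟩))
  · intro a b hab
    exact Subtype.ext ((hc a b).2 (QuotientGroup.leftRel_apply.1 hab))
  · intro x y
    induction x using Quotient.inductionOn
    induction y using Quotient.inductionOn
    intro h
    exact Quotient.sound (QuotientGroup.leftRel_apply.2 ((hc _ _).1 (congrArg Subtype.val h)))
  · rintro ⟨_, g, rfl⟩
    exact ⟨Quotient.mk _ g, rfl⟩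

lemma card_le_conj_class_mul {c : G} {n : ℕ}
    (h : Nat.card (Subgroup.centralizer ({c} : Set G)) ≤ n) :
    Nat.card G ≤ (Set.range fun g : G => g * c * g⁻¹).ncard * n := by
  rw [← card_conj_class_mul c]
  exact Nat.mul_le_mul_left _ h

/-- If the Sylow `ℓ`-subgroups are abelian, contain the centralizers of their nontrivial elements,
and there are at least two of them, then conjugation on the set of Sylow `ℓ`-subgroups is
faithful: a kernel `K` meets every Sylow subgroup `P` trivially and normalizes it, hence
centralizes it, hence lies in it. -/
lemma sylow_faithful (ℓ : ℕ) [Fact ℓ.Prime]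
    (hcent : ∀ P : Sylow ℓ G, ∀ x ∈ P, x ≠ 1 → ∀ y, y * x = x * y → y ∈ P)
    (hcomm : ∀ P : Sylow ℓ G, ∀ x ∈ P, ∀ y ∈ P, x * y = y * x)
    (hdvd : ℓ ∣ Nat.card G)
    (hne : Nat.card (Sylow ℓ G) ≠ 1) (g : G) (hg : ∀ Q : Sylow ℓ G, g • Q = Q) : g = 1 := by
  obtain ⟨P⟩ : Nonempty (Sylow ℓ G) := inferInstance
  obtain ⟨Q, hQ⟩ : ∃ Q : Sylow ℓ G, Q ≠ P := by
    by_contra! h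
    exact hne (Nat.card_eq_one_iff_exists.2 ⟨P, h⟩)
  have key : ∀ y : G, (∀ Q : Sylow ℓ G, y • Q = Q) → y ∈ P → y = 1 := by
    intro y hy hyP
    by_contra hy1
    have hyQ : y ∈ Q := by
      have h1 : y ∈ (P : Subgroup G) ⊓ Subgroup.normalizer (Q : Set G) :=
        ⟨hyP, Sylow.smul_eq_iff_mem_normalizer.1 (hy Q)⟩
      rw [P.isPGroup'.inf_normalizer_sylow Q] at h1
      exact h1.2
    apply hQ
    apply Sylow.ext
    apply le_antisymm
    · intro z hz
      exact hcent P y hyP hy1 z (hcomm Q z hz y hyQ)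
    · intro z hz
      exact hcent Q y hyQ hy1 z (hcomm P z hz y hyP)
  have hgN : ∀ x ∈ P, g * x * g⁻¹ ∈ P := by
    intro x hx
    have := Sylow.smul_eq_iff_mem_normalizer.1 (hg P)
    exact (Subgroup.mem_normalizer_iff.1 this x).1 hx
  have hcommg : ∀ x ∈ P, g * x = x * g := by
    intro x hx
    have h1 : g * x * g⁻¹ * x⁻¹ = 1 := by
      apply key
      · intro Q
        rw [mul_smul, mul_smul, mul_smul, inv_smul_eq_iff.2 (hg (x⁻¹ • Q)).symm,
          smul_inv_smul, hg]
      · exact mul_mem (hgN x hx) (inv_mem hx)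
    calc g * x = (g * x * g⁻¹ * x⁻¹) * (x * g) := by group
      _ = x * g := by rw [h1, one_mul]
  obtain ⟨x, hx, hx1⟩ : ∃ x ∈ P, x ≠ 1 := by
    by_contra! h
    have : (P : Subgroup G) = ⊥ := (Subgroup.eq_bot_iff_forall _).2 h
    exact P.ne_bot_of_dvd_card hdvd this
  exact key g hg (hcent P x hx hx1 g (hcommg x hx))

lemma card_sylow {ℓ k m : ℕ} [hℓ : Fact ℓ.Prime] (hG : Nat.card G = ℓ ^ k * m) (hm : ¬ ℓ ∣ m)
    (P : Sylow ℓ G) : Nat.card P = ℓ ^ k := by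
  have hm0 : m ≠ 0 := by rintro rfl; exact hm (dvd_zero _)
  rw [P.card_eq_multiplicity, hG, Nat.factorization_mul (pow_ne_zero _ hℓ.out.ne_zero) hm0]
  simp [hℓ.out.factorization_self, Nat.factorization_eq_zero_of_not_dvd hm]

lemma exists_embedding_perm {α : Type*} [Finite α] [MulAction G α] {n : ℕ} (hn : Nat.card α = n)
    (h : ∀ g : G, (∀ a : α, g • a = a) → g = 1) :
    ∃ f : G →* Equiv.Perm (Fin n), Function.Injective f := by
  let e : α ≃ Fin n := Finite.equivFinOfCardEq hn
  refine ⟨(e.permCongrHom.toMonoidHom).comp (MulAction.toPermHom G α), ?_⟩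
  rw [MonoidHom.coe_comp]
  refine (Equiv.injective e.permCongrHom.toEquiv).comp ?_
  rw [injective_iff_map_eq_one]
  intro g hg
  exact h g fun a => Equiv.Perm.ext_iff.1 hg a

lemma iso_perm {n : ℕ} (f : G →* Equiv.Perm (Fin n)) (hf : Function.Injective f)
    (hG : Nat.card G = n.factorial) : Nonempty (G ≃* Equiv.Perm (Fin n)) := by
  refine ⟨MulEquiv.ofBijective f ?_⟩
  rw [Nat.bijective_iff_injective_and_card]
  exact ⟨hf, by rw [hG, Nat.card_perm, Nat.card_fin]⟩

lemma iso_alternating {n : ℕ} (f : G →* Equiv.Perm (Fin n)) (hf : Function.Injective f)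
    (hG : 2 * Nat.card G = n.factorial) : Nonempty (G ≃* alternatingGroup (Fin n)) := by
  have h1 : f.range.index = 2 := by
    have h2 := f.range.index_mul_card
    rw [Nat.card_congr (MonoidHom.ofInjective hf).toEquiv.symm, Nat.card_perm, Nat.card_fin,
      ← hG] at h2
    exact Nat.eq_of_mul_eq_mul_right Nat.card_pos h2
  rw [← Equiv.Perm.eq_alternatingGroup_of_index_eq_two h1]
  exact ⟨MonoidHom.ofInjective hf⟩

section Three

variable (hc : ∀ c : G, orderOf c = 3 → Nat.card (Subgroup.centralizer ({c} : Set G)) ≤ 3)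
include hc

/-- If the centralizers of the elements of order 3 have order 3, then there is more than one Sylow
3-subgroup, because a conjugacy class of elements of order 3 has at least four elements. By the
Sylow theorems there are four of them, and they are permuted faithfully. -/
lemma exists_embedding_perm_four (hG : Nat.card G = 12 ∨ Nat.card G = 24) :
    ∃ f : G →* Equiv.Perm (Fin 4), Function.Injective f := by
  have : Fact (Nat.Prime 3) := ⟨Nat.prime_three⟩
  have hdvd : 3 ∣ Nat.card G := by rcases hG with h | h <;> rw [h] <;> decide
  have hPcard : ∀ P : Sylow 3 G, Nat.card P = 3 := by
    intro P
    rcases hG with h | h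
    · exact card_sylow (k := 1) (m := 4) (by rw [h]; norm_num) (by decide) P
    · exact card_sylow (k := 1) (m := 8) (by rw [h]; norm_num) (by decide) P
  have hord : ∀ P : Sylow 3 G, ∀ x ∈ P, x ≠ 1 → orderOf x = 3 := by
    intro P x hx hx1
    have h1 : orderOf x ∣ 3 := by
      rw [← hPcard P]; exact Subgroup.orderOf_dvd_natCard _ hx
    rcases (Nat.dvd_prime Nat.prime_three).1 h1 with h | h
    · exact absurd (orderOf_eq_one_iff.1 h) hx1
    · exact h
  have hcomm : ∀ P : Sylow 3 G, ∀ x ∈ P, ∀ y ∈ P, x * y = y * x := by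
    intro P x hx y hy
    have : IsCyclic P := isCyclic_of_prime_card (hPcard P)
    have := (IsCyclic.isMulCommutative (α := P)).is_comm.comm ⟨x, hx⟩ ⟨y, hy⟩
    exact congrArg Subtype.val this
  have hcent : ∀ P : Sylow 3 G, ∀ x ∈ P, x ≠ 1 → ∀ y, y * x = x * y → y ∈ P := by
    intro P x hx hx1 y hy
    have h1 : (P : Subgroup G) = Subgroup.centralizer ({x} : Set G) := by
      apply Subgroup.eq_of_le_of_card_ge
      · intro z hz
        rw [Subgroup.mem_centralizer_singleton_iff]
        exact hcomm P z hz x hx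
      · rw [hPcard P]
        exact hc x (hord P x hx hx1)
    have : y ∈ (P : Subgroup G) := by
      rw [h1, Subgroup.mem_centralizer_singleton_iff]; exact hy
    exact this
  have hn1 : Nat.card (Sylow 3 G) ≠ 1 := by
    intro h1
    obtain ⟨c, hco⟩ := exists_prime_orderOf_dvd_card' 3 hdvd
    obtain ⟨P, hP⟩ := Nat.card_eq_one_iff_exists.1 h1
    have h2 : (Set.range fun g : G => g * c * g⁻¹) ⊆ (P : Set G) := by
      rintro _ ⟨g, rfl⟩
      have hpg : IsPGroup 3 (Subgroup.zpowers (g * c * g⁻¹)) := by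
        apply IsPGroup.of_card (n := 1)
        rw [Nat.card_zpowers, pow_one, ← hco]
        exact orderOf_injective (MulAut.conj g).toMonoidHom (MulAut.conj g).injective c
      obtain ⟨Q, hQ⟩ := hpg.exists_le_sylow
      rw [hP Q] at hQ
      exact hQ (Subgroup.mem_zpowers _)
    have h3 := Set.ncard_le_ncard h2 (Set.toFinite _)
    have h4 : (P : Set G).ncard = 3 := hPcard P
    have h5 := card_le_conj_class_mul (hc c hco)
    rw [h4] at h3
    omega
  have hn4 : Nat.card (Sylow 3 G) = 4 := by
    obtain ⟨P⟩ : Nonempty (Sylow 3 G) := inferInstance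
    have h1 := P.card_dvd_index
    have h2 := card_sylow_modEq_one 3 G
    have h3 := (P : Subgroup G).index_mul_card
    have h3' : Nat.card (P : Subgroup G) = 3 := hPcard P
    rw [h3'] at h3
    have h4 : (P : Subgroup G).index = 4 ∨ (P : Subgroup G).index = 8 := by omega
    generalize Nat.card (Sylow 3 G) = n at *
    have : n ≤ 8 := by
      rcases h4 with h4 | h4 <;> rw [h4] at h1 <;> have := Nat.le_of_dvd (by norm_num) h1 <;> omega
    unfold Nat.ModEq at h2
    have : n = 4 ∨ n = 7 := by omega
    rcases this with h | h
    · exact h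
    · subst h
      rcases h4 with h4 | h4 <;> rw [h4] at h1 <;> revert h1 <;> decide
  exact exists_embedding_perm hn4 (sylow_faithful 3 hcent hcomm hdvd hn1)

lemma iso_A4 (hG : Nat.card G = 12) : Nonempty (G ≃* alternatingGroup (Fin 4)) := by
  obtain ⟨f, hf⟩ := exists_embedding_perm_four hc (Or.inl hG)
  exact iso_alternating f hf (by rw [hG]; rfl)

lemma iso_S4 (hG : Nat.card G = 24) : Nonempty (G ≃* Equiv.Perm (Fin 4)) := by
  obtain ⟨f, hf⟩ := exists_embedding_perm_four hc (Or.inr hG)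
  exact iso_perm f hf (by rw [hG]; rfl)

/-- If the centralizers of elements of order 3 have order 3 and those of involutions have order at
most 4, then the Sylow 2-subgroups, of order 4, contain the centralizers of their nontrivial
elements, hence meet pairwise trivially. The sizes of the conjugacy classes bound the number of
nontrivial 2-elements between 15 and 40, which leaves only five Sylow 2-subgroups, and these are
permuted faithfully. -/
lemma iso_A5 (hG : Nat.card G = 60)
    (ht : ∀ t : G, orderOf t = 2 → Nat.card (Subgroup.centralizer ({t} : Set G)) ≤ 4) :
    Nonempty (G ≃* alternatingGroup (Fin 5)) := by
  classical
  have : Fact (Nat.Prime 3) := ⟨Nat.prime_three⟩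
  have : Fact (Nat.Prime 2) := ⟨Nat.prime_two⟩
  have := Fintype.ofFinite G
  have := Fintype.ofFinite (Sylow 2 G)
  have hPcard : ∀ P : Sylow 2 G, Nat.card P = 4 := by
    intro P
    exact card_sylow (k := 2) (m := 15) (by rw [hG]; norm_num) (by decide) P
  have hcomm : ∀ P : Sylow 2 G, ∀ x ∈ P, ∀ y ∈ P, x * y = y * x := by
    intro P x hx y hy
    have := IsPGroup.isMulCommutative_of_card_eq_prime_sq (p := 2) (G := P) (by rw [hPcard P]; rfl)
    exact congrArg Subtype.val (this.is_comm.comm ⟨x, hx⟩ ⟨y, hy⟩)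
  have hcent2 : ∀ P : Sylow 2 G, ∀ x ∈ P, orderOf x = 2 → ∀ y, y * x = x * y → y ∈ P := by
    intro P x hx hx1 y hy
    have h1 : (P : Subgroup G) = Subgroup.centralizer ({x} : Set G) := by
      apply Subgroup.eq_of_le_of_card_ge
      · intro z hz
        rw [Subgroup.mem_centralizer_singleton_iff]
        exact hcomm P z hz x hx
      · rw [hPcard P]
        exact ht x hx1
    have : y ∈ (P : Subgroup G) := by
      rw [h1, Subgroup.mem_centralizer_singleton_iff]; exact hy
    exact this
  have hord : ∀ P : Sylow 2 G, ∀ x ∈ P, orderOf x ∣ 4 := by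
    intro P x hx
    rw [← hPcard P]; exact Subgroup.orderOf_dvd_natCard _ hx
  have hcent : ∀ P : Sylow 2 G, ∀ x ∈ P, x ≠ 1 → ∀ y, y * x = x * y → y ∈ P := by
    intro P x hx hx1 y hy
    by_cases h2 : x ^ 2 = 1
    · exact hcent2 P x hx (orderOf_eq_prime h2 hx1) y hy
    · have h4 : (x ^ 2) ^ 2 = 1 := by
        rw [← pow_mul]; exact orderOf_dvd_iff_pow_eq_one.1 (hord P x hx)
      refine hcent2 P (x ^ 2) (pow_mem hx 2) (orderOf_eq_prime h4 h2) y ?_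
      have : Commute y x := hy
      exact this.pow_right 2
  have hdisj : ∀ P Q : Sylow 2 G, ∀ x ∈ P, x ∈ Q → x ≠ 1 → P = Q := by
    intro P Q x hP hQ hx
    apply Sylow.ext
    apply le_antisymm
    · intro z hz
      exact hcent Q x hQ hx z (hcomm P z hz x hP)
    · intro z hz
      exact hcent P x hP hx z (hcomm Q z hz x hQ)
  -- `A` is the set of nontrivial `2`-elements
  let A : Finset G := Finset.univ.biUnion
    fun P : Sylow 2 G => (Finset.univ.filter fun x => x ∈ P).erase 1
  have hA : A.card = Nat.card (Sylow 2 G) * 3 := by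
    rw [Finset.card_biUnion]
    · rw [Finset.sum_const_nat (m := 3), Finset.card_univ, Nat.card_eq_fintype_card]
      intro P _
      rw [Finset.card_erase_of_mem (by simp [one_mem])]
      have := hPcard P
      rw [Nat.card_eq_fintype_card, Fintype.card_subtype] at this
      exact congrArg (· - 1) this
    · intro P _ Q _ hPQ
      change Disjoint _ _
      rw [Finset.disjoint_left]
      intro x hxP hxQ
      simp only [Finset.mem_erase, Finset.mem_filter, Finset.mem_univ, true_and] at hxP hxQ
      exact hPQ (hdisj P Q x hxP.2 hxQ.2 hxP.1)
  have hmemA : ∀ x ∈ A, x ^ 4 = 1 := by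
    intro x hx
    simp only [A, Finset.mem_biUnion, Finset.mem_erase, Finset.mem_filter, Finset.mem_univ,
      true_and] at hx
    obtain ⟨P, _, hx⟩ := hx
    exact orderOf_dvd_iff_pow_eq_one.1 (hord P x hx)
  have hconj : ∀ g x : G, orderOf (g * x * g⁻¹) = orderOf x := fun g x =>
    orderOf_injective (MulAut.conj g).toMonoidHom (MulAut.conj g).injective x
  obtain ⟨c, hco⟩ := exists_prime_orderOf_dvd_card' (G := G) 3 (by rw [hG]; decide)
  obtain ⟨t, hto⟩ := exists_prime_orderOf_dvd_card' (G := G) 2 (by rw [hG]; decide)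
  -- the conjugacy class of an involution has at least 15 elements, all in `A`
  have hlow : 15 ≤ A.card := by
    have h1 := card_le_conj_class_mul (ht t hto)
    have h2 : (Set.range fun g : G => g * t * g⁻¹) ⊆ (A : Set G) := by
      rintro _ ⟨g, rfl⟩
      have hpg : IsPGroup 2 (Subgroup.zpowers (g * t * g⁻¹)) := by
        apply IsPGroup.of_card (n := 1)
        rw [Nat.card_zpowers, pow_one, hconj, hto]
      obtain ⟨Q, hQ⟩ := hpg.exists_le_sylow
      simp only [A, Finset.coe_biUnion, Set.mem_iUnion, Finset.mem_coe, Finset.mem_erase,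
        Finset.mem_filter, Finset.mem_univ, true_and, exists_prop]
      refine ⟨Q, ?_, hQ (Subgroup.mem_zpowers _)⟩
      intro h
      have := hconj g t
      rw [h, orderOf_one, hto] at this
      omega
    have h3 := Set.ncard_le_ncard h2 (Set.toFinite _)
    rw [Set.ncard_coe_finset] at h3
    omega
  -- the conjugacy class of an element of order 3 has at least 20 elements, none of them in `A`
  have hup : A.card ≤ 40 := by
    have h1 := card_le_conj_class_mul (hc c hco)
    have h2 : Disjoint (A : Set G) (Set.range fun g : G => g * c * g⁻¹) := by
      rw [Set.disjoint_right]
      rintro _ ⟨g, rfl⟩ hx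
      have := orderOf_dvd_iff_pow_eq_one.2 (hmemA _ hx)
      rw [hconj, hco] at this
      revert this; decide
    have h3 := Set.ncard_union_eq h2 (Set.toFinite _) (Set.toFinite _)
    have h4 := Set.ncard_le_card ((A : Set G) ∪ (Set.range fun g : G => g * c * g⁻¹))
    rw [h3, Set.ncard_coe_finset] at h4
    omega
  -- the number of Sylow subgroups divides 15 and lies between 5 and 13
  have hn5 : Nat.card (Sylow 2 G) = 5 := by
    obtain ⟨P⟩ : Nonempty (Sylow 2 G) := inferInstance
    have h1 := P.card_dvd_index
    have h3 := (P : Subgroup G).index_mul_card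
    have h3' : Nat.card (P : Subgroup G) = 4 := hPcard P
    rw [h3', hG] at h3
    have h4 : (P : Subgroup G).index = 15 := by omega
    rw [h4] at h1
    rw [hA] at hlow hup
    generalize Nat.card (Sylow 2 G) = n at *
    have : 5 ≤ n := by omega
    have : n ≤ 13 := by omega
    interval_cases n <;> first | rfl | (revert h1; decide)
  obtain ⟨f, hf⟩ := exists_embedding_perm hn5
    (sylow_faithful 2 hcent hcomm (by rw [hG]; decide) (by omega))
  exact iso_alternating f hf (by rw [hG]; rfl)

end Three

/-- A group of order `2 * n` with a cyclic subgroup of order `n`, generated by `r`, and an involution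
outside of it that inverts `r`, is dihedral. -/
lemma iso_dihedral {n : ℕ} (r s : G) (hG : Nat.card G = 2 * n) (hr : orderOf r = n)
    (hs : s ∉ Subgroup.zpowers r) (hs2 : s * s = 1) (hsr : s * r * s = r⁻¹) :
    Nonempty (G ≃* DihedralGroup n) := by
  have hn : 0 < n := hr ▸ orderOf_pos r
  have : NeZero n := ⟨hn.ne'⟩
  have hsinv : s⁻¹ = s := inv_eq_of_mul_eq_one_left hs2
  have hzs : ∀ i : ℤ, s * r ^ i * s = r ^ (-i) := by
    intro i
    have := conj_zpow (a := s) (b := r) (i := i)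
    rw [hsinv, hsr] at this
    rw [← this, inv_zpow, zpow_neg]
  have hrs : ∀ i : ℤ, r ^ i * s = s * r ^ (-i) := by
    intro i
    rw [← hzs, ← mul_assoc, ← mul_assoc, hs2, one_mul]
  let z : ZMod n → ℤ := fun i => (i.val : ℤ)
  have hz : ∀ i j : ℤ, r ^ i = r ^ j ↔ (i : ZMod n) = (j : ZMod n) := by
    intro i j
    rw [zpow_eq_zpow_iff_modEq, hr, ZMod.intCast_eq_intCast_iff]
  have hzc : ∀ i : ZMod n, ((z i : ℤ) : ZMod n) = i := by
    intro i; simp [z]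
  let f : DihedralGroup n → G := fun x => match x with
    | DihedralGroup.r i => r ^ z i
    | DihedralGroup.sr i => s * r ^ z i
  have hmul : ∀ x y, f (x * y) = f x * f y := by
    rintro (i | i) (j | j)
    · change r ^ z (i + j) = r ^ z i * r ^ z j
      rw [← zpow_add, hz]; simp [hzc]
    · change s * r ^ z (j - i) = r ^ z i * (s * r ^ z j)
      rw [← mul_assoc, hrs, mul_assoc, ← zpow_add]
      congr 1
      rw [hz]; push_cast; rw [hzc, hzc, hzc]; ring
    · change s * r ^ z (i + j) = s * r ^ z i * r ^ z j
      rw [mul_assoc, ← zpow_add]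
      congr 1
      rw [hz]; simp [hzc]
    · change r ^ z (j - i) = s * r ^ z i * (s * r ^ z j)
      rw [← mul_assoc, hzs, ← zpow_add, hz]
      push_cast; rw [hzc, hzc, hzc]; ring
  let F : DihedralGroup n →* G := MonoidHom.mk' f hmul
  refine ⟨(MulEquiv.ofBijective F ?_).symm⟩
  rw [Nat.bijective_iff_injective_and_card]
  refine ⟨?_, by rw [hG, DihedralGroup.nat_card]⟩
  rw [injective_iff_map_eq_one]
  rintro (i | i) hi
  · change r ^ z i = 1 at hi
    rw [← zpow_zero r, hz, hzc] at hi
    rw [hi]; simp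
  · exfalso
    change s * r ^ z i = 1 at hi
    apply hs
    rw [eq_inv_of_mul_eq_one_left hi]
    exact inv_mem (Subgroup.zpow_mem_zpowers r _)

end GroupTheory

end Dickson

/-! ### Fixed points and stabilizers -/

namespace Dickson

section Counting

open MulAction

variable {G X : Type*} [Group G] [MulAction G X]

lemma card_orbit_mul (x : X) :
    Nat.card (orbit G x) * Nat.card (stabilizer G x) = Nat.card G := by
  rw [← Nat.card_prod]
  exact Nat.card_congr (orbitProdStabilizerEquivGroup G x)

lemma card_stabilizer_of_mem_orbit {x y : X} (h : x ∈ orbit G y) :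
    Nat.card (stabilizer G x) = Nat.card (stabilizer G y) :=
  Nat.card_congr (stabilizerEquivStabilizerOfOrbitRel h).toEquiv

/-- The class formula for the points with nontrivial stabilizer: `R` is a set of representatives
of their orbits, and both sides count the pairs `(g, x)` with `g ≠ 1` and `g • x = x`. -/
lemma exists_orbit_reps [Fintype G] [DecidableEq G]
    (hfin : ∀ g : G, g ≠ 1 → (fixedBy X g).Finite) :
    ∃ R : Finset X, (∀ r ∈ R, stabilizer G r ≠ ⊥) ∧
      (∀ x, stabilizer G x ≠ ⊥ → ∃ r ∈ R, x ∈ orbit G r) ∧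
      (∀ r ∈ R, ∀ r' ∈ R, r ∈ orbit G r' → r = r') ∧
      (∑ r ∈ R, (1 - 1 / (Nat.card (stabilizer G r) : ℚ))) * Nat.card G =
        ∑ g ∈ Finset.univ.erase (1 : G), ((fixedBy X g).ncard : ℚ) := by
  classical
  have hSfin : (⋃ g ∈ (Finset.univ.erase (1 : G)), fixedBy X g).Finite := by
    refine Set.Finite.biUnion (Finset.finite_toSet _) ?_
    intro g hg
    exact hfin g (Finset.ne_of_mem_erase hg)
  let S : Finset X := hSfin.toFinset
  have hS : ∀ x, x ∈ S ↔ stabilizer G x ≠ ⊥ := by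
    intro x
    rw [Subgroup.ne_bot_iff_exists_ne_one]
    simp [S, mem_stabilizer_iff, and_comm]
  have hstab : ∀ x : X, 0 < Nat.card (stabilizer G x) := fun x => Nat.card_pos
  let rep : X → X := fun x => (Quotient.mk (orbitRel G X) x).out
  have hrep : ∀ x, rep x ∈ orbit G x := fun x =>
    Quotient.exact (Quotient.out_eq (Quotient.mk (orbitRel G X) x))
  have hrep_eq : ∀ x y, x ∈ orbit G y → rep x = rep y := by
    intro x y h
    have : Quotient.mk (orbitRel G X) x = Quotient.mk (orbitRel G X) y := Quotient.sound h
    simp only [rep, this]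
  have hS_orbit : ∀ x y, x ∈ orbit G y → x ∈ S → y ∈ S := by
    intro x y h hx
    rw [hS] at *
    rw [Ne, ← Subgroup.card_eq_one] at *
    rwa [← card_stabilizer_of_mem_orbit h]
  refine ⟨S.image rep, ?_, ?_, ?_, ?_⟩
  · intro r hr
    obtain ⟨x, hx, rfl⟩ := Finset.mem_image.1 hr
    rw [← hS]
    exact hS_orbit x _ ((orbitRel G X).symm (hrep x)) hx
  · intro x hx
    exact ⟨rep x, Finset.mem_image_of_mem _ ((hS x).2 hx), (orbitRel G X).symm (hrep x)⟩
  · intro r hr r' hr' h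
    obtain ⟨x, hx, rfl⟩ := Finset.mem_image.1 hr
    obtain ⟨x', hx', rfl⟩ := Finset.mem_image.1 hr'
    have h1 := hrep_eq _ _ h
    have h2 := hrep_eq _ _ (hrep x)
    have h3 := hrep_eq _ _ (hrep x')
    rw [← h2, ← h3, h1]
  · have h1 : ∑ g ∈ Finset.univ.erase (1 : G), ((fixedBy X g).ncard : ℚ) =
        ∑ x ∈ S, ((Nat.card (stabilizer G x) : ℚ) - 1) := by
      have h2 : ∀ g ∈ Finset.univ.erase (1 : G), ((fixedBy X g).ncard : ℚ) =
          ∑ x ∈ S, if g • x = x then (1 : ℚ) else 0 := by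
        intro g hg
        rw [Finset.sum_boole]
        congr 1
        rw [← Set.ncard_coe_finset]
        congr 1
        ext x
        simp only [mem_fixedBy, Finset.coe_filter, Set.mem_ofPred_eq]
        constructor
        · intro h
          refine ⟨?_, h⟩
          rw [hS, Subgroup.ne_bot_iff_exists_ne_one]
          refine ⟨⟨g, h⟩, ?_⟩
          intro h'
          exact Finset.ne_of_mem_erase hg (congrArg Subtype.val h')
        · exact fun h => h.2
      rw [Finset.sum_congr rfl h2, Finset.sum_comm]
      refine Finset.sum_congr rfl ?_
      intro x _
      have h3 : Nat.card (stabilizer G x) = ∑ g : G, if g • x = x then 1 else 0 := by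
        rw [Finset.sum_boole, Nat.card_eq_fintype_card, Fintype.card_subtype]
        rfl
      rw [h3, ← Finset.add_sum_erase _ _ (Finset.mem_univ (1 : G))]
      simp
    rw [h1, ← Finset.sum_fiberwise_of_maps_to (t := S.image rep)
      (fun x hx => Finset.mem_image_of_mem rep hx), Finset.sum_mul]
    refine Finset.sum_congr rfl ?_
    intro r hr
    obtain ⟨x, hx, rfl⟩ := Finset.mem_image.1 hr
    have hmem : ∀ y, y ∈ S.filter (fun i => rep i = rep x) ↔ y ∈ orbit G (rep x) := by
      intro y
      rw [Finset.mem_filter]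
      constructor
      · rintro ⟨_, h⟩
        rw [← h]
        exact (orbitRel G X).symm (hrep y)
      · intro h
        have hyx : y ∈ orbit G x := (orbitRel G X).trans h (hrep x)
        exact ⟨hS_orbit _ _ ((orbitRel G X).symm hyx) hx, hrep_eq _ _ hyx⟩
    rw [Finset.sum_congr rfl (g := fun _ => ((Nat.card (stabilizer G (rep x)) : ℚ) - 1))
      (fun y hy => by rw [card_stabilizer_of_mem_orbit ((hmem y).1 hy)])]
    rw [Finset.sum_const, nsmul_eq_mul]
    have hc : (S.filter (fun i => rep i = rep x)).card = Nat.card (orbit G (rep x)) := by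
      rw [← Set.ncard_coe_finset, ← Nat.card_coe_set_eq]
      congr 2
      ext y
      exact hmem y
    rw [hc, ← card_orbit_mul (G := G) (rep x)]
    have := (hstab (rep x)).ne'
    push_cast
    field_simp

variable (h1 : ∀ g : G, ∃ x : X, g • x = x)
  (h3 : ∀ g : G, ∀ x y z : X, x ≠ y → x ≠ z → y ≠ z → g • x = x → g • y = y → g • z = z → g = 1)

include h1 h3

/-- An element that exchanges two points is an involution, because its square also fixes a fixed
point of the element, hence three points. -/
lemma swap_mul_self {g : G} {x y : X} (hxy : x ≠ y) (hx : g • x = y) (hy : g • y = x) :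
    g * g = 1 := by
  obtain ⟨z, hz⟩ := h1 g
  refine h3 _ x y z hxy ?_ ?_ ?_ ?_ ?_
  · rintro rfl; exact hxy (hz.symm.trans hx)
  · rintro rfl; exact hxy (hy.symm.trans hz)
  · rw [mul_smul, hx, hy]
  · rw [mul_smul, hy, hx]
  · rw [mul_smul, hz, hz]

/-- An element `d` that commutes with `g` preserves the set `{x, y}` of fixed points of `g`. If it
exchanged `x` and `y`, then so would `d * g`, and both would be involutions, whence `g * g = 1`. -/
lemma fixes_of_commute {g d : G} {x y : X} (hg : ∀ z, g • z = z ↔ z = x ∨ z = y)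
    (hg2 : g * g ≠ 1) (hd : d * g = g * d) : d • x = x := by
  have hgx : g • x = x := (hg x).2 (Or.inl rfl)
  have hgy : g • y = y := (hg y).2 (Or.inr rfl)
  have hdx : d • x = x ∨ d • x = y := by
    rw [← hg, ← mul_smul, ← hd, mul_smul, hgx]
  have hdy : d • y = x ∨ d • y = y := by
    rw [← hg, ← mul_smul, ← hd, mul_smul, hgy]
  rcases hdx with h | h
  · exact h
  by_cases hxy : x = y
  · rw [h, hxy]
  have hdy' : d • y = x := by
    rcases hdy with h' | h'
    · exact h'
    · exact absurd (smul_left_cancel d (h.trans h'.symm)) hxy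
  have e1 := swap_mul_self h1 h3 hxy h hdy'
  have e2 : (d * g) * (d * g) = 1 := by
    apply swap_mul_self h1 h3 hxy
    · rw [mul_smul, hgx, h]
    · rw [mul_smul, hgy, hdy']
  exfalso
  apply hg2
  calc g * g = (d * d) * (g * g) := by rw [e1, one_mul]
    _ = d * (d * g) * g := by simp only [mul_assoc]
    _ = d * (g * d) * g := by rw [hd]
    _ = (d * g) * (d * g) := by simp only [mul_assoc]
    _ = 1 := e2

variable [Finite G]

lemma card_centralizer_le_stabilizer {g : G} {x y : X} (hg : ∀ z, g • z = z ↔ z = x ∨ z = y)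
    (hg2 : g * g ≠ 1) :
    Nat.card (Subgroup.centralizer ({g} : Set G)) ≤ Nat.card (stabilizer G x) := by
  apply Subgroup.card_le_of_le
  intro d hd
  rw [Subgroup.mem_centralizer_singleton_iff] at hd
  exact fixes_of_commute h1 h3 hg hg2 hd

omit h1 h3 in
/-- The centralizer of `t` permutes the two fixed points of `t`. -/
lemma card_centralizer_le_two_mul {t : G} {x y : X} (ht : ∀ z, t • z = z ↔ z = x ∨ z = y) :
    Nat.card (Subgroup.centralizer ({t} : Set G)) ≤
      2 * Nat.card (stabilizer G x ⊓ stabilizer G y : Subgroup G) := by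
  have htx : t • x = x := (ht x).2 (Or.inl rfl)
  have hty : t • y = y := (ht y).2 (Or.inr rfl)
  have hpres : ∀ d ∈ Subgroup.centralizer ({t} : Set G),
      (d • x = x ∨ d • x = y) ∧ (d • y = x ∨ d • y = y) := by
    intro d hd
    rw [Subgroup.mem_centralizer_singleton_iff] at hd
    constructor
    · rw [← ht, ← mul_smul, ← hd, mul_smul, htx]
    · rw [← ht, ← mul_smul, ← hd, mul_smul, hty]
  rw [← card_orbit_mul (G := Subgroup.centralizer ({t} : Set G)) x]
  apply Nat.mul_le_mul
  · have : (orbit (Subgroup.centralizer ({t} : Set G)) x) ⊆ {x, y} := by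
      rintro _ ⟨d, rfl⟩
      exact (hpres d d.2).1
    refine (Nat.card_mono (Set.toFinite _) this).trans ?_
    rw [Nat.card_coe_set_eq]
    exact (Set.ncard_insert_le x {y}).trans (by simp)
  · refine Nat.card_le_card_of_injective
      (fun d => (⟨d.1.1, ?_⟩ : (stabilizer G x ⊓ stabilizer G y : Subgroup G))) ?_
    · have hdx : d.1.1 • x = x := d.2
      refine ⟨hdx, ?_⟩
      rcases (hpres d.1.1 d.1.2).2 with h | h
      · have hyx : y = x := smul_left_cancel d.1.1 (h.trans hdx.symm)
        rw [hyx]; exact hdx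
      · exact h
    · intro a b hab
      exact Subtype.ext (Subtype.ext (Subtype.mk.inj hab))

end Counting

/-- The solutions of the class formula of a group of order `g` with three nontrivial orbits, whose
stabilizers have orders `a ≤ b ≤ c`. Since the left hand side exceeds 1, necessarily `a = 2` and
`b ≤ 3`. -/
lemma klein_numerics_ordered {a b c g : ℕ} (ha : 2 ≤ a) (hab : a ≤ b) (hbc : b ≤ c) (hg : 0 < g)
    (h : (1 : ℚ) / a + 1 / b + 1 / c = 1 + 2 / g) :
    g = 2 * c ∨ (g = 12 ∧ a = 2 ∧ b = 3 ∧ c = 3) ∨ (g = 24 ∧ a = 2 ∧ b = 3 ∧ c = 4) ∨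
      (g = 60 ∧ a = 2 ∧ b = 3 ∧ c = 5) := by
  have hb0 : 0 < b := by omega
  have hc0 : 0 < c := by omega
  have ha0 : 0 < a := by omega
  have key : g * (b * c + a * c + a * b) = a * b * c * (g + 2) := by
    field_simp at h
    have : (g : ℚ) * (b * c + a * c + a * b) = a * b * c * (g + 2) := by linarith
    exact_mod_cast this
  have hlt : a * b * c * g < g * (b * c + a * c + a * b) := by
    rw [key]; nlinarith [mul_pos (mul_pos ha0 hb0) hc0]
  have hlt' : a * b * c < b * c + a * c + a * b := by
    rw [mul_comm] at hlt; exact lt_of_mul_lt_mul_left hlt (Nat.zero_le _)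
  have ha2 : a = 2 := by
    by_contra hne
    have h1 : 3 ≤ a := by omega
    have h2 : a * c ≤ b * c := Nat.mul_le_mul_right _ hab
    have h3 : a * b ≤ c * b := Nat.mul_le_mul_right _ (hab.trans hbc)
    have h4 : 3 * (b * c) ≤ a * (b * c) := Nat.mul_le_mul_right _ h1
    nlinarith
  subst ha2
  have hb3 : b ≤ 3 := by
    by_contra hne
    have h1 : 4 ≤ b := by omega
    nlinarith
  interval_cases b
  · left; nlinarith
  · have hc5 : c < 6 := by omega
    right
    interval_cases c <;> omega

/-- The solutions of the class formula without an ordering of the three stabilizers. -/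
lemma klein_numerics {a b c g : ℕ} (ha : 2 ≤ a) (hb : 2 ≤ b) (hc : 2 ≤ c) (hg : 0 < g)
    (h : (1 : ℚ) / a + 1 / b + 1 / c = 1 + 2 / g) :
    (g = 2 * a ∨ g = 2 * b ∨ g = 2 * c) ∨
    (g = 12 ∧ ∀ e, e = a ∨ e = b ∨ e = c → e = 2 ∨ e = 3) ∨
    (g = 24 ∧ ∀ e, e = a ∨ e = b ∨ e = c → e = 2 ∨ e = 3 ∨ e = 4) ∨
    (g = 60 ∧ ∀ e, e = a ∨ e = b ∨ e = c → e = 2 ∨ e = 3 ∨ e = 5) := by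
  rcases le_total a b with hab | hab <;> rcases le_total b c with hbc | hbc <;>
    rcases le_total a c with hac | hac
  · have := klein_numerics_ordered ha hab hbc hg h
    grind
  · have := klein_numerics_ordered ha hab hbc hg h
    grind
  · have := klein_numerics_ordered ha hac hbc hg (by rw [← h]; ring)
    grind
  · have := klein_numerics_ordered hc hac hab hg (by rw [← h]; ring)
    grind
  · have := klein_numerics_ordered hb hab hac hg (by rw [← h]; ring)
    grind
  · have := klein_numerics_ordered hb hbc hac hg (by rw [← h]; ring)
    grind
  · have := klein_numerics_ordered hc hbc hab hg (by rw [← h]; ring)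
    grind
  · have := klein_numerics_ordered hc hbc hab hg (by rw [← h]; ring)
    grind

/-! ### Groups whose nontrivial elements have two fixed points -/

section Klein

open MulAction

variable {G X : Type*} [Group G] [MulAction G X] [Finite G]

/-- Klein's classification, for a finite group all of whose nontrivial elements have exactly two
fixed points and whose point stabilizers are cyclic. -/
theorem klein [Nonempty X]
    (hfix : ∀ g : G, g ≠ 1 → ∃ x y : X, x ≠ y ∧ ∀ z, g • z = z ↔ z = x ∨ z = y)
    (hcyc : ∀ x : X, IsCyclic (stabilizer G x)) :
    IsCyclic G ∨ (∃ n : ℕ, Nonempty (G ≃* DihedralGroup n)) ∨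
      Nonempty (G ≃* Equiv.Perm (Fin 4)) ∨
      Nonempty (G ≃* alternatingGroup (Fin 4)) ∨
      Nonempty (G ≃* alternatingGroup (Fin 5)) := by
  classical
  have := Fintype.ofFinite G
  have h1 : ∀ g : G, ∃ x : X, g • x = x := by
    intro g
    by_cases hg : g = 1
    · exact ⟨Classical.arbitrary X, by rw [hg, one_smul]⟩
    · obtain ⟨x, y, _, h⟩ := hfix g hg
      exact ⟨x, (h x).2 (Or.inl rfl)⟩
  have h3 : ∀ g : G, ∀ x y z : X, x ≠ y → x ≠ z → y ≠ z → g • x = x → g • y = y → g • z = z →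
      g = 1 := by
    intro g x y z hxy hxz hyz hx hy hz
    by_contra hg
    obtain ⟨a, b, hab, h⟩ := hfix g hg
    rw [h] at hx hy hz
    grind
  have hncard : ∀ g : G, g ≠ 1 → (fixedBy X g).ncard = 2 := by
    intro g hg
    obtain ⟨a, b, hab, h⟩ := hfix g hg
    have : fixedBy X g = {a, b} := by
      ext z; simp [h z]
    rw [this, Set.ncard_pair hab]
  obtain ⟨R, hR1, hR2, hR3, hR⟩ := exists_orbit_reps (G := G) (X := X) (by
    intro g hg
    apply Set.finite_of_ncard_pos
    rw [hncard g hg]; norm_num)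
  set N := Nat.card G with hN
  have hNpos : 0 < N := Nat.card_pos
  have hsum2 : ∑ g ∈ Finset.univ.erase (1 : G), ((fixedBy X g).ncard : ℚ) = (N - 1) * 2 := by
    rw [Finset.sum_congr rfl (g := fun _ => (2 : ℚ))
      (fun g hg => by rw [hncard g (Finset.ne_of_mem_erase hg)]; norm_num), Finset.sum_const,
      Finset.card_erase_of_mem (Finset.mem_univ _), Finset.card_univ, ← Nat.card_eq_fintype_card,
      ← hN, nsmul_eq_mul, Nat.cast_sub hNpos, Nat.cast_one]
  rw [hsum2] at hR
  set e : X → ℕ := fun r => Nat.card (stabilizer G r) with he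
  have heq : ∑ r ∈ R, (1 - 1 / (e r : ℚ)) = 2 - 2 / N := by
    have : (N : ℚ) ≠ 0 := by exact_mod_cast hNpos.ne'
    field_simp
    rw [hR]; push_cast; ring
  have he2 : ∀ r ∈ R, 2 ≤ e r := by
    intro r hr
    have := hR1 r hr
    rw [Ne, ← Subgroup.card_eq_one] at this
    have h0 : 0 < e r := Nat.card_pos
    have h0' : e r ≠ 1 := this
    omega
  have heN : ∀ r, e r ≤ N := fun r =>
    Nat.le_of_dvd hNpos (Subgroup.card_subgroup_dvd_card _)
  have hhalf : ∀ r ∈ R, (1 / 2 : ℚ) ≤ 1 - 1 / (e r : ℚ) := by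
    intro r hr
    have h2 : (2 : ℚ) ≤ e r := by exact_mod_cast he2 r hr
    have : (1 : ℚ) / e r ≤ 1 / 2 := one_div_le_one_div_of_le (by norm_num) h2
    linarith
  have hNq : (0 : ℚ) < N := by exact_mod_cast hNpos
  -- there are at most three orbits, as each contributes at least `1 / 2` to a sum less than `2`
  have hRcard : R.card ≤ 3 := by
    have h4 := Finset.card_nsmul_le_sum R _ _ hhalf
    rw [heq, nsmul_eq_mul] at h4
    have : (0 : ℚ) < 2 / N := by positivity
    have : (R.card : ℚ) < 4 := by linarith
    have : R.card < 4 := by exact_mod_cast this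
    omega
  -- the order of a nontrivial stabilizer is that of the stabilizer of a representative
  have hstab : ∀ (g : G) (x : X), g ≠ 1 → g • x = x → ∃ r ∈ R, Nat.card (stabilizer G x) = e r := by
    intro g x hg hx
    obtain ⟨r, hr, hxr⟩ := hR2 x (by
      rw [Subgroup.ne_bot_iff_exists_ne_one]
      exact ⟨⟨g, hx⟩, fun h => hg (congrArg Subtype.val h)⟩)
    exact ⟨r, hr, card_stabilizer_of_mem_orbit hxr⟩
  have hdvd : ∀ (g : G) (x : X), g • x = x → orderOf g ∣ Nat.card (stabilizer G x) :=
    fun g x hx => Subgroup.orderOf_dvd_natCard _ hx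
  -- the centralizer of an element of order 3 lies in the stabilizer of a fixed point
  have hcent3 : ∀ c : G, orderOf c = 3 → ∃ r ∈ R, 3 ∣ e r ∧
      Nat.card (Subgroup.centralizer ({c} : Set G)) ≤ e r := by
    intro c hc
    have hc1 : c ≠ 1 := by rintro rfl; simp at hc
    have hc2 : c * c ≠ 1 := by
      intro h
      have := orderOf_dvd_of_pow_eq_one (n := 2) (x := c) (by rw [pow_two, h])
      rw [hc] at this; revert this; decide
    obtain ⟨x, y, hxy, hf⟩ := hfix c hc1
    have hx : c • x = x := (hf x).2 (Or.inl rfl)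
    obtain ⟨r, hr, her⟩ := hstab c x hc1 hx
    refine ⟨r, hr, ?_, ?_⟩
    · rw [← her, ← hc]; exact hdvd c x hx
    · rw [← her]; exact card_centralizer_le_stabilizer h1 h3 hf hc2
  have hcent2 : ∀ t : G, orderOf t = 2 → ∃ r ∈ R, 2 ∣ e r ∧
      Nat.card (Subgroup.centralizer ({t} : Set G)) ≤ 2 * e r := by
    intro c hc
    have hc1 : c ≠ 1 := by rintro rfl; simp at hc
    obtain ⟨x, y, hxy, hf⟩ := hfix c hc1
    have hx : c • x = x := (hf x).2 (Or.inl rfl)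
    obtain ⟨r, hr, her⟩ := hstab c x hc1 hx
    refine ⟨r, hr, ?_, ?_⟩
    · rw [← her, ← hc]; exact hdvd c x hx
    · rw [← her]
      exact (card_centralizer_le_two_mul hf).trans
        (Nat.mul_le_mul_left _ (Subgroup.card_le_of_le inf_le_left))
  -- a stabilizer of index 2 forces a dihedral group
  have hdih : ∀ r ∈ R, N = 2 * e r → ∃ n : ℕ, Nonempty (G ≃* DihedralGroup n) := by
    intro x hx hNx
    have hne : stabilizer G x ≠ ⊥ := hR1 x hx
    have := hcyc x
    obtain ⟨⟨c, hcx⟩, hc⟩ := IsCyclic.exists_generator (α := stabilizer G x)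
    have hgen : Subgroup.zpowers c = stabilizer G x := by
      apply le_antisymm
      · rw [Subgroup.zpowers_le]; exact hcx
      · intro z hz
        obtain ⟨i, hi⟩ := hc ⟨z, hz⟩
        exact ⟨i, congrArg Subtype.val hi⟩
    have hc1 : c ≠ 1 := by
      rintro rfl
      apply hne
      rw [← hgen, Subgroup.zpowers_one_eq_bot]
    have hcx' : c • x = x := hcx
    obtain ⟨y, hyx, hf⟩ : ∃ y, x ≠ y ∧ ∀ z, c • z = z ↔ z = x ∨ z = y := by
      obtain ⟨a, b, hab, hf⟩ := hfix c hc1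
      rcases (hf x).1 hcx' with h | h
      · exact ⟨b, h ▸ hab, h ▸ hf⟩
      · refine ⟨a, h ▸ hab.symm, fun z => ?_⟩
        rw [hf, h]; tauto
    have hcy : c • y = y := (hf y).2 (Or.inr rfl)
    have hidx : Nat.card (orbit G x) = 2 := by
      have h4 := card_orbit_mul (G := G) x
      have h5 : 0 < Nat.card (stabilizer G x) := Nat.card_pos
      change _ = N at h4
      rw [hNx] at h4
      exact Nat.eq_of_mul_eq_mul_right h5 h4
    -- the stabilizer of `x` has index 2, hence fixes the other point of the orbit, too
    obtain ⟨s, hs⟩ : ∃ s : G, s • x ≠ x := by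
      by_contra! h
      have : orbit G x = {x} := by
        ext z; constructor
        · rintro ⟨g, rfl⟩; exact h g
        · rintro rfl; exact mem_orbit_self _
      rw [this] at hidx
      simp at hidx
    have hor : orbit G x = {x, s • x} := by
      symm
      apply Set.eq_of_subset_of_ncard_le
      · rintro z (rfl | rfl)
        · exact mem_orbit_self _
        · exact mem_orbit _ _
      · rw [← Nat.card_coe_set_eq, hidx, Set.ncard_pair hs.symm]
      · exact Set.finite_of_ncard_pos (by rw [← Nat.card_coe_set_eq, hidx]; norm_num)
    have horb : ∀ g : G, g • x = x ∨ g • x = s • x := by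
      intro g
      have : g • x ∈ orbit G x := mem_orbit _ _
      rw [hor] at this
      exact this
    have hsx : s • x = y := by
      have h5 : c • s • x = s • x := by
        rcases horb (c * s) with h | h
        · rw [mul_smul] at h
          exact absurd (smul_left_cancel c (h.trans hcx'.symm)) hs
        · rw [← mul_smul]; exact h
      rcases (hf _).1 h5 with h | h
      · exact absurd h hs
      · exact h
    have hsy : s • y = x := by
      have h6 : s • y = x ∨ s • y = y := by
        have := horb (s * s)
        rw [mul_smul, hsx] at this
        exact this
      rcases h6 with h | h
      · exact h
      · exact absurd (smul_left_cancel s (hsx.trans h.symm)) hyx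
    have hs2 : s * s = 1 := swap_mul_self h1 h3 hyx hsx hsy
    have hsc2 : (s * c) * (s * c) = 1 := by
      apply swap_mul_self h1 h3 hyx
      · rw [mul_smul, hcx', hsx]
      · rw [mul_smul, hcy, hsy]
    have hco : orderOf c = e x := by
      rw [← Nat.card_zpowers, hgen]
    refine ⟨e x, iso_dihedral c s hNx hco ?_ hs2 ?_⟩
    · rw [hgen]; exact hs
    · exact eq_inv_of_mul_eq_one_left (by rw [← hsc2]; simp only [mul_assoc])
  obtain hc | hc | hc | hc : R.card = 0 ∨ R.card = 1 ∨ R.card = 2 ∨ R.card = 3 := by omega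
  · rw [Finset.card_eq_zero] at hc
    rw [hc, Finset.sum_empty] at heq
    have hN1 : N = 1 := by
      field_simp at heq
      have : (N : ℚ) = 1 := by linarith
      exact_mod_cast this
    left
    have : Subsingleton G := (Nat.card_eq_one_iff_unique.1 hN1).1
    exact isCyclic_of_subsingleton
  · obtain ⟨a, rfl⟩ := Finset.card_eq_one.1 hc
    rw [Finset.sum_singleton] at heq
    exfalso
    have ha := he2 a (by simp)
    have h2 : (2 : ℚ) ≤ e a := by exact_mod_cast ha
    have h4 : (e a : ℚ) ≤ N := by exact_mod_cast heN a
    have : (1 : ℚ) / N ≤ 1 / e a := one_div_le_one_div_of_le (by linarith) h4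
    have : (1 : ℚ) / N ≤ 1 / 2 := one_div_le_one_div_of_le (by linarith) (by linarith)
    have h5 : (2 : ℚ) / N = 2 * (1 / N) := by ring
    have h6 : (0 : ℚ) < 1 / e a := by positivity
    linarith
  · obtain ⟨a, b, hab, rfl⟩ := Finset.card_eq_two.1 hc
    rw [Finset.sum_pair hab] at heq
    left
    have ha := he2 a (by simp)
    have hb := he2 b (by simp)
    have h2 : (2 : ℚ) ≤ e a := by exact_mod_cast ha
    have h2' : (2 : ℚ) ≤ e b := by exact_mod_cast hb
    have h4 : (e a : ℚ) ≤ N := by exact_mod_cast heN a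
    have h4' : (e b : ℚ) ≤ N := by exact_mod_cast heN b
    have h5 : (2 : ℚ) / N = 2 * (1 / N) := by ring
    have h6 : (1 : ℚ) / N ≤ 1 / e a := one_div_le_one_div_of_le (by linarith) h4
    have h6' : (1 : ℚ) / N ≤ 1 / e b := one_div_le_one_div_of_le (by linarith) h4'
    have h7 : (1 : ℚ) / N = 1 / e a := by linarith
    have h8 : (N : ℚ) = e a := by
      field_simp at h7; linarith
    have h9 : Nat.card (stabilizer G a) = Nat.card G := by
      have : N = e a := by exact_mod_cast h8
      exact this.symm
    have htop : stabilizer G a = ⊤ := Subgroup.eq_top_of_card_eq _ h9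
    have := hcyc a
    rw [htop] at this
    exact isCyclic_of_surjective (Subgroup.topEquiv (G := G)).toMonoidHom
      (Subgroup.topEquiv (G := G)).surjective
  · obtain ⟨a, b, c, hab, hac, hbc, rfl⟩ := Finset.card_eq_three.1 hc
    have hsum : (1 : ℚ) / e a + 1 / e b + 1 / e c = 1 + 2 / N := by
      rw [Finset.sum_insert (by simp [hab, hac]), Finset.sum_pair hbc] at heq
      linarith
    have hmem : ∀ r ∈ ({a, b, c} : Finset X), e r = e a ∨ e r = e b ∨ e r = e c := by
      intro r hr
      simp only [Finset.mem_insert, Finset.mem_singleton] at hr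
      rcases hr with rfl | rfl | rfl <;> simp
    rcases klein_numerics (he2 a (by simp)) (he2 b (by simp)) (he2 c (by simp)) hNpos hsum with
      h | ⟨h, h'⟩ | ⟨h, h'⟩ | ⟨h, h'⟩
    · right; left
      rcases h with h | h | h
      · exact hdih a (by simp) h
      · exact hdih b (by simp) h
      · exact hdih c (by simp) h
    · right; right; right; left
      refine iso_A4 (fun x hx => ?_) h
      obtain ⟨r, hr, hd, hle⟩ := hcent3 x hx
      have := h' (e r) (hmem r hr)
      omega
    · right; right; left
      refine iso_S4 (fun x hx => ?_) h
      obtain ⟨r, hr, hd, hle⟩ := hcent3 x hx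
      have := h' (e r) (hmem r hr)
      omega
    · right; right; right; right
      refine iso_A5 (fun x hx => ?_) h (fun x hx => ?_)
      · obtain ⟨r, hr, hd, hle⟩ := hcent3 x hx
        have := h' (e r) (hmem r hr)
        omega
      · obtain ⟨r, hr, hd, hle⟩ := hcent2 x hx
        have := h' (e r) (hmem r hr)
        omega

end Klein

end Dickson

/-! ### Möbius transformations -/

namespace Dickson

section Moebius

open MulAction OnePoint

variable {k : Type*} [Field k]

/-- The class in `PGL₂(k)` of the matrix with rows `(a, b)` and `(c, d)`. -/
def mob (a b c d : k) (h : a * d - b * c ≠ 0) : PGL2 k :=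
  QuotientGroup.mk (Matrix.GeneralLinearGroup.mkOfDetNeZero !![a, b; c, d]
    (by rwa [Matrix.det_fin_two_of]))

lemma exists_mob (g : PGL2 k) : ∃ a b c d h, g = mob a b c d h := by
  induction g using QuotientGroup.induction_on with
  | H g =>
    refine ⟨g 0 0, g 0 1, g 1 0, g 1 1, ?_, ?_⟩
    · have := g.det_ne_zero
      rwa [Matrix.det_fin_two] at this
    · rw [mob]
      congr 1
      ext i j
      fin_cases i <;> fin_cases j <;> rfl

lemma mob_mul {a b c d a' b' c' d' : k} (h h') :
    mob a b c d h * mob a' b' c' d' h' =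
      mob (a * a' + b * c') (a * b' + b * d') (c * a' + d * c') (c * b' + d * d') (by
        have := mul_ne_zero h h'
        intro h0
        apply this
        linear_combination h0) := by
  rw [mob, mob, mob, ← QuotientGroup.mk_mul]
  congr 1
  ext i j
  fin_cases i <;> fin_cases j <;>
    simp [Matrix.GeneralLinearGroup.mkOfDetNeZero, Matrix.mul_apply, Fin.sum_univ_two]

lemma mob_eq_iff {a b c d a' b' c' d' : k} (h h') :
    mob a b c d h = mob a' b' c' d' h' ↔
      ∃ u : kˣ, a * u = a' ∧ b * u = b' ∧ c * u = c' ∧ d * u = d' := by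
  rw [mob, mob]
  refine Iff.trans (Matrix.ProjGenLinGroup.mk_eq_mk_iff) ?_
  refine exists_congr fun u => ?_
  constructor
  · intro h
    have e1 := congrArg (fun g : GL (Fin 2) k => g 0 0) h
    have e2 := congrArg (fun g : GL (Fin 2) k => g 0 1) h
    have e3 := congrArg (fun g : GL (Fin 2) k => g 1 0) h
    have e4 := congrArg (fun g : GL (Fin 2) k => g 1 1) h
    simp [Matrix.GeneralLinearGroup.mkOfDetNeZero] at e1 e2 e3 e4
    exact ⟨e1, e2, e3, e4⟩
  · rintro ⟨e1, e2, e3, e4⟩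
    ext i j
    fin_cases i <;> fin_cases j <;>
      simp [Matrix.GeneralLinearGroup.mkOfDetNeZero, *]

lemma mob_one : mob (1 : k) 0 0 1 (by simp) = 1 := by
  rw [mob, QuotientGroup.eq_one_iff]
  convert Subgroup.one_mem _
  ext i j
  fin_cases i <;> fin_cases j <;> simp [Matrix.GeneralLinearGroup.mkOfDetNeZero]

variable [DecidableEq k]

lemma scalar_smul (u : kˣ) (x : OnePoint k) :
    Matrix.GeneralLinearGroup.scalar (Fin 2) u • x = x := by
  cases x with
  | infty => simp [smul_infty_eq_ite]
  | coe x => simp [smul_some_eq_ite]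

/-- The action of `PGL₂(k)` on the projective line by Möbius transformations. -/
instance pglAction : MulAction (PGL2 k) (OnePoint k) :=
  Matrix.ProjGenLinGroup.mulActionOfGL scalar_smul

lemma mk_smul (g : GL (Fin 2) k) (x : OnePoint k) :
    (QuotientGroup.mk g : PGL2 k) • x = g • x := rfl

lemma mob_smul_infty {a b c d : k} (h) :
    mob a b c d h • (∞ : OnePoint k) = if c = 0 then ∞ else ((a / c : k) : OnePoint k) := by
  rw [mob, mk_smul, smul_infty_eq_ite]
  rfl

lemma mob_smul_coe {a b c d : k} (h) (z : k) :
    mob a b c d h • (z : OnePoint k) =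
      if c * z + d = 0 then ∞ else (((a * z + b) / (c * z + d) : k) : OnePoint k) := by
  rw [mob, mk_smul, smul_some_eq_ite]
  rfl

omit [DecidableEq k] in
/-- The affine map `z ↦ a * z + b`. -/
def aff (a : kˣ) (b : k) : PGL2 k := mob a b 0 1 (by simp)

omit [DecidableEq k] in
lemma aff_mul (a a' : kˣ) (b b' : k) : aff a b * aff a' b' = aff (a * a') (a * b' + b) := by
  rw [aff, aff, aff, mob_mul, mob_eq_iff]
  exact ⟨1, by simp⟩

omit [DecidableEq k] in
lemma aff_one : aff (1 : kˣ) (0 : k) = 1 := by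
  rw [← mob_one, aff, mob_eq_iff]
  exact ⟨1, by simp⟩

omit [DecidableEq k] in
lemma aff_inj {a a' : kˣ} {b b' : k} : aff a b = aff a' b' ↔ a = a' ∧ b = b' := by
  rw [aff, aff, mob_eq_iff]
  constructor
  · rintro ⟨u, h1, h2, -, h3⟩
    rw [one_mul] at h3
    rw [h3, mul_one] at h1 h2
    exact ⟨Units.ext h1, h2⟩
  · rintro ⟨rfl, rfl⟩
    exact ⟨1, by simp⟩

omit [DecidableEq k] in
lemma aff_eq_one {a : kˣ} {b : k} : aff a b = 1 ↔ a = 1 ∧ b = 0 := by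
  rw [← aff_one, aff_inj]

omit [DecidableEq k] in
lemma aff_inv (a : kˣ) (b : k) : (aff a b)⁻¹ = aff a⁻¹ (-(a⁻¹ * b)) := by
  rw [inv_eq_iff_mul_eq_one, aff_mul, aff_eq_one]
  simp

omit [DecidableEq k] in
lemma aff_zero_pow (a : kˣ) (n : ℕ) : aff a 0 ^ n = aff (a ^ n) 0 := by
  induction n with
  | zero => simp [aff_one]
  | succ n ih => rw [pow_succ, ih, aff_mul, pow_succ]; simp

omit [DecidableEq k] in
lemma aff_one_pow (b : k) (n : ℕ) : aff 1 b ^ n = aff 1 (n * b) := by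
  induction n with
  | zero => simp [aff_one]
  | succ n ih =>
    rw [pow_succ, ih, aff_mul, aff_inj]
    push_cast
    exact ⟨by simp, by simp; ring⟩

@[simp] lemma aff_smul_infty (a : kˣ) (b : k) : aff a b • (∞ : OnePoint k) = ∞ := by
  rw [aff, mob_smul_infty]; simp

@[simp] lemma aff_smul_coe (a : kˣ) (b z : k) :
    aff a b • (z : OnePoint k) = ((a * z + b : k) : OnePoint k) := by
  rw [aff, mob_smul_coe]; simp

lemma exists_aff {g : PGL2 k} (hg : g • (∞ : OnePoint k) = ∞) : ∃ a b, g = aff a b := by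
  obtain ⟨a, b, c, d, h, rfl⟩ := exists_mob g
  rw [mob_smul_infty] at hg
  have hc : c = 0 := by
    by_contra hc
    rw [if_neg hc] at hg
    exact coe_ne_infty _ hg
  subst hc
  simp only [mul_zero, sub_zero] at h
  have ha : a ≠ 0 := left_ne_zero_of_mul h
  have hd : d ≠ 0 := right_ne_zero_of_mul h
  refine ⟨Units.mk0 a ha / Units.mk0 d hd, b / d, ?_⟩
  rw [aff, mob_eq_iff]
  refine ⟨(Units.mk0 d hd)⁻¹, ?_⟩
  simp [hd, div_eq_mul_inv]

lemma exists_smul_infty (x : OnePoint k) : ∃ g : PGL2 k, g • (∞ : OnePoint k) = x := by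
  cases x with
  | infty => exact ⟨1, one_smul _ _⟩
  | coe c => exact ⟨mob c (-1) 1 0 (by simp), by rw [mob_smul_infty]; simp⟩

lemma ne_infty_iff {x : OnePoint k} : x ≠ ∞ ↔ ∃ c : k, x = c := by
  rw [OnePoint.ne_infty_iff_exists]
  simp only [eq_comm]

/-- `PGL₂(k)` acts transitively on triples of distinct points. -/
lemma exists_smul_triple {x y z : OnePoint k} (hxy : x ≠ y) (hxz : x ≠ z) (hyz : y ≠ z) :
    ∃ g : PGL2 k, g • (∞ : OnePoint k) = x ∧ g • ((0 : k) : OnePoint k) = y ∧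
      g • ((1 : k) : OnePoint k) = z := by
  obtain ⟨g, rfl⟩ := exists_smul_infty x
  obtain ⟨c, hc⟩ : ∃ c : k, g⁻¹ • y = c := ne_infty_iff.1 fun h => hxy (by rw [← h, smul_inv_smul])
  obtain ⟨d, hd⟩ : ∃ d : k, g⁻¹ • z = d := ne_infty_iff.1 fun h => hxz (by rw [← h, smul_inv_smul])
  have hcd : d - c ≠ 0 := by
    intro h
    rw [sub_eq_zero] at h
    rw [h, ← hc] at hd
    exact hyz (smul_left_cancel _ hd).symm
  refine ⟨g * aff (Units.mk0 _ hcd) c, ?_, ?_, ?_⟩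
  · rw [mul_smul, aff_smul_infty]
  · rw [mul_smul, aff_smul_coe, mul_zero, zero_add, ← hc, smul_inv_smul]
  · rw [mul_smul, aff_smul_coe]
    simp only [Units.val_mk0, mul_one, sub_add_cancel]
    rw [← hd, smul_inv_smul]

omit [DecidableEq k] in
lemma conj_smul_iff {G X : Type*} [Group G] [MulAction G X] (g t : G) (x : X) :
    (t⁻¹ * g * t) • x = x ↔ g • t • x = t • x := by
  rw [mul_smul, mul_smul, inv_smul_eq_iff]

/-- A Möbius transformation with three fixed points is trivial. -/
lemma fixes_three (g : PGL2 k) (x y z : OnePoint k) (hxy : x ≠ y) (hxz : x ≠ z) (hyz : y ≠ z)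
    (hx : g • x = x) (hy : g • y = y) (hz : g • z = z) : g = 1 := by
  obtain ⟨t, rfl, rfl, rfl⟩ := exists_smul_triple hxy hxz hyz
  rw [← conj_smul_iff] at hx hy hz
  obtain ⟨a, b, hab⟩ := exists_aff hx
  rw [hab, aff_smul_coe, OnePoint.coe_eq_coe] at hy hz
  have hb : b = 0 := by simpa using hy
  have ha : (a : k) = 1 := by simpa [hb] using hz
  have : aff a b = 1 := aff_eq_one.2 ⟨Units.ext ha, hb⟩
  rw [this, mul_eq_one_iff_eq_inv, inv_mul_eq_iff_eq_mul] at hab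
  simpa using hab

section AlgClosed

variable [IsAlgClosed k] [NeZero (2 : k)]

lemma exists_fixed (g : PGL2 k) : ∃ x : OnePoint k, g • x = x := by
  obtain ⟨a, b, c, d, h, rfl⟩ := exists_mob g
  by_cases hc : c = 0
  · exact ⟨∞, by rw [mob_smul_infty, if_pos hc]⟩
  obtain ⟨x, hx⟩ := exists_quadratic_eq_zero (a := c) (b := d - a) (c := -b) hc
    (IsAlgClosed.exists_eq_mul_self _)
  refine ⟨(x : OnePoint k), ?_⟩
  have hne : c * x + d ≠ 0 := by
    intro h0
    have h1 : a * x + b = 0 := by linear_combination (-1) * hx + x * h0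
    have hx0 : c * (a * x + b) - a * (c * x + d) = 0 := by rw [h0, h1]; ring
    apply h
    linear_combination -hx0
  rw [mob_smul_coe, if_neg hne, OnePoint.coe_eq_coe, div_eq_iff hne]
  linear_combination -hx

/-- A nontrivial element of `PGL₂(k)` with a fixed point has either one fixed point, and then it is
conjugate to a translation, or two fixed points, and then it is conjugate to a homothety. Only the
orders are recorded: a translation has order the characteristic, and a homothety has the order of
its ratio. -/
lemma fixed_dichotomy {g : PGL2 k} (hg : g ≠ 1) {x : OnePoint k} (hx : g • x = x) :
    ((∀ z, g • z = z ↔ z = x) ∧ ∀ n : ℕ, g ^ n = 1 ↔ (n : k) = 0) ∨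
      ∃ y, x ≠ y ∧ (∀ z, g • z = z ↔ z = x ∨ z = y) ∧
        ∃ a : kˣ, ∀ n : ℕ, g ^ n = 1 ↔ a ^ n = 1 := by
  by_cases hy : ∃ y, x ≠ y ∧ g • y = y
  · right
    obtain ⟨y, hxy, hy⟩ := hy
    refine ⟨y, hxy, fun z => ⟨fun hz => ?_, ?_⟩, ?_⟩
    · by_contra! h
      exact hg (fixes_three g x y z hxy h.1.symm h.2.symm hx hy hz)
    · rintro (rfl | rfl) <;> assumption
    · obtain ⟨z, hz⟩ : ∃ z : OnePoint k, z ≠ x ∧ z ≠ y := by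
        by_contra! h
        by_cases h1 : x = ∞
        · have := h ((0 : k) : OnePoint k) (by rw [h1]; exact coe_ne_infty _)
          have h2 := h ((1 : k) : OnePoint k) (by rw [h1]; exact coe_ne_infty _)
          rw [← this, OnePoint.coe_eq_coe] at h2
          exact one_ne_zero h2
        · have h2 := h ∞ (Ne.symm h1)
          obtain ⟨c, rfl⟩ := ne_infty_iff.1 h1
          have := h ((c + 1 : k) : OnePoint k) (by rw [Ne, OnePoint.coe_eq_coe]; simp)
          rw [← h2] at this
          exact coe_ne_infty _ this
      obtain ⟨t, ht1, ht2, -⟩ := exists_smul_triple hxy hz.1.symm hz.2.symm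
      rw [← ht1, ← conj_smul_iff] at hx
      rw [← ht2, ← conj_smul_iff] at hy
      obtain ⟨a, b, hab⟩ := exists_aff hx
      rw [hab, aff_smul_coe, OnePoint.coe_eq_coe] at hy
      have hb : b = 0 := by simpa using hy
      subst hb
      refine ⟨a, fun n => ?_⟩
      have h5 : (t⁻¹ * g * t) ^ n = t⁻¹ * g ^ n * t := by
        have := conj_pow (i := n) (a := t⁻¹) (b := g)
        rwa [inv_inv] at this
      rw [hab, aff_zero_pow] at h5
      have h6 : g ^ n = 1 ↔ aff (a ^ n) 0 = 1 := by
        rw [h5]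
        constructor
        · intro h; rw [h]; simp
        · intro h
          rw [mul_eq_one_iff_eq_inv, inv_mul_eq_iff_eq_mul] at h
          simpa using h
      rw [h6, aff_eq_one]
      simp
  · left
    push Not at hy
    refine ⟨fun z => ⟨fun hz => ?_, ?_⟩, ?_⟩
    · by_contra h
      exact hy z (Ne.symm h) hz
    · rintro rfl; exact hx
    · obtain ⟨t, rfl⟩ := exists_smul_infty x
      rw [← conj_smul_iff] at hx
      obtain ⟨a, b, hab⟩ := exists_aff hx
      have ha : a = 1 := by
        by_contra ha
        have ha' : 1 - (a : k) ≠ 0 := by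
          intro h
          exact ha (Units.ext (sub_eq_zero.1 h).symm)
        refine hy (t • ((b / (1 - a) : k) : OnePoint k)) ?_ ?_
        · intro h
          exact coe_ne_infty _ (smul_left_cancel _ h).symm
        · rw [← conj_smul_iff, hab, aff_smul_coe, OnePoint.coe_eq_coe]
          field_simp
          ring
      subst ha
      have hb : b ≠ 0 := by
        rintro rfl
        rw [aff_one, mul_eq_one_iff_eq_inv, inv_mul_eq_iff_eq_mul] at hab
        exact hg (by simpa using hab)
      intro n
      have h5 : (t⁻¹ * g * t) ^ n = t⁻¹ * g ^ n * t := by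
        have := conj_pow (i := n) (a := t⁻¹) (b := g)
        rwa [inv_inv] at this
      rw [hab, aff_one_pow] at h5
      have h6 : g ^ n = 1 ↔ aff 1 (n * b) = 1 := by
        rw [h5]
        constructor
        · intro h; rw [h]; simp
        · intro h
          rw [mul_eq_one_iff_eq_inv, inv_mul_eq_iff_eq_mul] at h
          simpa using h
      rw [h6, aff_eq_one]
      simp [hb]

end AlgClosed

/-- The homomorphism that sends an affine map `z ↦ a * z + b` to its linear part `a`. -/
lemma exists_linear_part {S : Type*} [Group S] (φ : S →* PGL2 k)
    (h : ∀ s, φ s • (∞ : OnePoint k) = ∞) :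
    ∃ χ : S →* kˣ, ∀ s a b, φ s = aff a b → χ s = a := by
  choose A B hAB using fun s => exists_aff (h s)
  refine ⟨MonoidHom.mk' A ?_, ?_⟩
  · intro s t
    have := hAB (s * t)
    rw [map_mul, hAB s, hAB t, aff_mul, aff_inj] at this
    exact this.1.symm
  · intro s a b hs
    have := hAB s
    rw [hs, aff_inj] at this
    exact this.1.symm

/-- A finite group of Möbius transformations with a common fixed point and without translations
is cyclic, because it embeds into the multiplicative group of the field. -/
lemma isCyclic_of_fixes {S : Type*} [Group S] [Finite S] (φ : S →* PGL2 k)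
    (hφ : Function.Injective φ) (x : OnePoint k) (h : ∀ s, φ s • x = x)
    (h2 : ∀ s, φ s ≠ 1 → ∃ y, y ≠ x ∧ φ s • y = y) : IsCyclic S := by
  obtain ⟨t, rfl⟩ := exists_smul_infty x
  obtain ⟨χ, hχ⟩ := exists_linear_part ((MulAut.conj t⁻¹).toMonoidHom.comp φ) (by
    intro s
    have := (conj_smul_iff (φ s) t (∞ : OnePoint k)).2 (h s)
    simpa using this)
  have hinj : Function.Injective χ := by
    rw [injective_iff_map_eq_one]
    intro s hs
    by_contra hs1
    have hφs : φ s ≠ 1 := fun h' => hs1 (hφ (h'.trans (map_one φ).symm))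
    have h3 := (conj_smul_iff (φ s) t (∞ : OnePoint k)).2 (h s)
    obtain ⟨a, b, hab⟩ := exists_aff h3
    have ha := hχ s a b (by simpa using hab)
    rw [hs] at ha
    subst ha
    obtain ⟨y, hy, hy'⟩ := h2 s hφs
    obtain ⟨c, hc⟩ : ∃ c : k, t⁻¹ • y = c :=
      ne_infty_iff.1 fun h => hy (by rw [← h, smul_inv_smul])
    have hyt : y = t • (c : OnePoint k) := by rw [← hc, smul_inv_smul]
    rw [hyt, ← conj_smul_iff, hab, aff_smul_coe, OnePoint.coe_eq_coe] at hy'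
    have hb : b = 0 := by simpa using hy'
    rw [hb, aff_one, mul_eq_one_iff_eq_inv, inv_mul_eq_iff_eq_mul] at hab
    exact hφs (by simpa using hab)
  exact isCyclic_of_injective_ringHom ((Units.coeHom k).comp χ)
    (Units.val_injective.comp hinj)

/-- The part of the classification for groups of order prime to the characteristic. -/
theorem dickson_prime_to_char [IsAlgClosed k] (p : ℕ) [CharP k p] (hp : p ≠ 2)
    (G : Subgroup (PGL2 k)) [Finite G] (hG : ¬ p ∣ Nat.card G) :
    IsCyclic G ∨ (∃ n : ℕ, Nonempty (G ≃* DihedralGroup n)) ∨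
      Nonempty (G ≃* Equiv.Perm (Fin 4)) ∨
      Nonempty (G ≃* alternatingGroup (Fin 4)) ∨
      Nonempty (G ≃* alternatingGroup (Fin 5)) := by
  have : NeZero (2 : k) := ⟨Ring.two_ne_zero (by rwa [ringChar.eq k p])⟩
  have hfix : ∀ g : G, g ≠ 1 → ∀ x : OnePoint k, (g : PGL2 k) • x = x →
      ∃ y, x ≠ y ∧ ∀ z : OnePoint k, g • z = z ↔ z = x ∨ z = y := by
    intro g hg x hx
    rcases fixed_dichotomy (fun h => hg (Subtype.ext h)) hx with ⟨-, h⟩ | ⟨y, hxy, h, -⟩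
    · exfalso
      have h1 := (h (orderOf g)).1 (by rw [← Subgroup.orderOf_coe, pow_orderOf_eq_one])
      rw [CharP.cast_eq_zero_iff k p] at h1
      exact hG (h1.trans (orderOf_dvd_natCard g))
    · exact ⟨y, hxy, h⟩
  refine klein (X := OnePoint k) ?_ ?_
  · intro g hg
    obtain ⟨x, hx⟩ := exists_fixed (g : PGL2 k)
    exact ⟨x, hfix g hg x hx⟩
  · intro x
    refine isCyclic_of_fixes (G.subtype.comp (stabilizer G x).subtype) ?_ x (fun s => s.2) ?_
    · exact Subtype.val_injective.comp Subtype.val_injective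
    · intro s hs
      obtain ⟨y, hxy, h⟩ := hfix s.1 (fun h => hs (congrArg Subtype.val h)) x s.2
      exact ⟨y, hxy.symm, (h y).2 (Or.inr rfl)⟩

end Moebius

end Dickson

/-! ### Translations and linear parts in characteristic `p` -/

namespace Dickson

section Modular

open MulAction OnePoint

variable {k : Type*} [Field k] [DecidableEq k]

lemma conj_conj {G : Type*} [Group G] (t g : G) : t * (t⁻¹ * g * t) * t⁻¹ = g := by
  simp only [mul_assoc, mul_inv_cancel, mul_one, mul_inv_cancel_left]

lemma conj_eq_one {G : Type*} [Group G] {t g : G} : t⁻¹ * g * t = 1 ↔ g = 1 := by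
  constructor
  · intro h
    have := conj_conj t g
    rw [h] at this
    rw [← this]; simp
  · rintro rfl; simp

lemma aff_one_smul_eq_iff {b : k} (hb : b ≠ 0) (z : OnePoint k) :
    aff 1 b • z = z ↔ z = ∞ := by
  constructor
  · intro h
    by_contra hz
    obtain ⟨c, rfl⟩ := ne_infty_iff.1 hz
    rw [aff_smul_coe, OnePoint.coe_eq_coe] at h
    exact hb (by simpa using h)
  · rintro rfl; simp

/-- A Möbius transformation whose only fixed point is `∞` is a translation, since
`z ↦ a * z + b` with `a ≠ 1` also fixes `b / (1 - a)`. -/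
lemma exists_eq_aff_one {g : PGL2 k} (hg : ∀ z : OnePoint k, g • z = z ↔ z = ∞) :
    ∃ b, b ≠ 0 ∧ g = aff 1 b := by
  obtain ⟨a, b, rfl⟩ := exists_aff ((hg ∞).2 rfl)
  have ha : a = 1 := by
    by_contra ha
    have ha' : 1 - (a : k) ≠ 0 := fun h => ha (Units.ext (sub_eq_zero.1 h).symm)
    refine coe_ne_infty (b / (1 - a) : k) ((hg _).1 ?_)
    rw [aff_smul_coe, OnePoint.coe_eq_coe]
    field_simp
    ring
  subst ha
  refine ⟨b, ?_, rfl⟩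
  rintro rfl
  have := hg ((0 : k) : OnePoint k)
  simp at this

section Prime

variable (p : ℕ) [hpF : Fact p.Prime] [CharP k p]

omit [DecidableEq k] in
/-- A field of characteristic `p` has no roots of unity of order `p`. -/
lemma not_dvd_card_of_units {S : Type*} [Group S] [Finite S] (χ : S →* kˣ)
    (hχ : Function.Injective χ) : ¬ p ∣ Nat.card S := by
  intro h
  obtain ⟨s, hs⟩ := exists_prime_orderOf_dvd_card' p h
  have h1 : (χ s : k) ^ p = 1 := by
    rw [← Units.val_pow_eq_pow_val, ← map_pow, ← hs, pow_orderOf_eq_one, map_one, Units.val_one]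
  have h2 : ((χ s : k) - 1) ^ p = 0 := by
    rw [sub_pow_char, h1, one_pow, sub_self]
  have h3 : s = 1 := by
    apply hχ
    rw [map_one]
    exact Units.ext (sub_eq_zero.1 (pow_eq_zero_iff hpF.out.ne_zero |>.1 h2))
  rw [h3, orderOf_one] at hs
  exact hpF.out.one_lt.ne hs

/-- The case of a group with a common fixed point: the translations form a normal elementary
abelian Sylow subgroup, and the Schur–Zassenhaus theorem provides a complement, which embeds into
the multiplicative group of the field. -/
theorem semidirect [IsAlgClosed k] [NeZero (2 : k)] (G : Subgroup (PGL2 k)) [Finite G]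
    (x : OnePoint k) (hx : ∀ g ∈ G, g • x = x) :
    ∃ Q C : Subgroup G, Q.Normal ∧ (∃ P : Sylow p G, (P : Subgroup G) = Q) ∧
      (∀ x ∈ Q, x ^ p = 1) ∧ (∀ x ∈ Q, ∀ y ∈ Q, x * y = y * x) ∧
      IsCyclic C ∧ ¬ p ∣ Nat.card C ∧ Q ⊓ C = ⊥ ∧ Q ⊔ C = ⊤ := by
  obtain ⟨t, rfl⟩ := exists_smul_infty x
  have hfix : ∀ s : G, (t⁻¹ * s * t : PGL2 k) • (∞ : OnePoint k) = ∞ := fun s =>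
    (conj_smul_iff _ _ _).2 (hx s s.2)
  obtain ⟨χ, hχ⟩ := exists_linear_part ((MulAut.conj t⁻¹).toMonoidHom.comp G.subtype) (by
    intro s
    simpa using hfix s)
  have hQ : ∀ s ∈ χ.ker, ∃ b, (s : PGL2 k) = t * aff 1 b * t⁻¹ := by
    intro s hs
    obtain ⟨a, b, hab⟩ := exists_aff (hfix s)
    have ha := hχ s a b (by simpa using hab)
    rw [MonoidHom.mem_ker.1 hs] at ha
    refine ⟨b, ?_⟩
    rw [ha, ← hab, conj_conj]
  have hexp : ∀ s ∈ χ.ker, s ^ p = 1 := by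
    intro s hs
    obtain ⟨b, hb⟩ := hQ s hs
    apply Subtype.ext
    rw [Subgroup.coe_pow, hb, conj_pow, aff_one_pow, CharP.cast_eq_zero, zero_mul, aff_one]
    simp
  have hpg : IsPGroup p χ.ker := by
    intro s
    refine ⟨1, ?_⟩
    rw [pow_one]
    exact Subtype.ext (hexp s s.2)
  have hidx : ¬ p ∣ χ.ker.index := by
    rw [Subgroup.index_ker]
    have : Finite χ.range := Finite.of_surjective _ χ.rangeRestrict_surjective
    exact not_dvd_card_of_units p χ.range.subtype Subtype.val_injective
  have hcop : Nat.Coprime (Nat.card χ.ker) χ.ker.index := by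
    obtain ⟨n, hn⟩ := IsPGroup.iff_card.1 hpg
    rw [hn]
    exact Nat.Coprime.pow_left _ ((Nat.Prime.coprime_iff_not_dvd hpF.out).2 hidx)
  obtain ⟨C, hC⟩ := Subgroup.exists_right_complement'_of_coprime hcop
  have hCc : ¬ p ∣ Nat.card C := by
    rwa [← hC.symm.index_eq_card]
  refine ⟨χ.ker, C, inferInstance, ⟨hpg.toSylow hidx, rfl⟩, hexp, ?_, ?_, hCc, ?_, ?_⟩
  · intro s hs s' hs'
    obtain ⟨b, hb⟩ := hQ s hs
    obtain ⟨b', hb'⟩ := hQ s' hs'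
    apply Subtype.ext
    rw [Subgroup.coe_mul, Subgroup.coe_mul, hb, hb', conj_mul, conj_mul, aff_mul, aff_mul]
    congr 3
    simp [add_comm]
  · refine isCyclic_of_fixes (G.subtype.comp C.subtype)
      (Subtype.val_injective.comp Subtype.val_injective) (t • ∞) (fun s => hx _ s.1.2) ?_
    intro s hs
    rcases fixed_dichotomy hs (hx _ s.1.2) with ⟨-, h⟩ | ⟨y, hxy, h, -⟩
    · exfalso
      have h1 := (h (orderOf s)).1 (by rw [← map_pow, pow_orderOf_eq_one, map_one])
      rw [CharP.cast_eq_zero_iff k p] at h1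
      exact hCc (h1.trans (orderOf_dvd_natCard s))
    · exact ⟨y, hxy.symm, (h y).2 (Or.inr rfl)⟩
  · exact hC.disjoint.eq_bot
  · exact hC.sup_eq_top

end Prime

/-- The vectors of the translations contained in `G`. -/
def trans (G : Subgroup (PGL2 k)) : AddSubgroup k where
  carrier := {b | aff 1 b ∈ G}
  zero_mem' := by
    change aff 1 0 ∈ G
    rw [aff_one]; exact G.one_mem
  add_mem' := by
    intro b c hb hc
    have := G.mul_mem hb hc
    rw [aff_mul] at this
    simpa [add_comm] using this
  neg_mem' := by
    intro b hb
    have := G.inv_mem hb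
    rw [aff_inv] at this
    simpa using this

/-- The linear parts of the affine maps contained in `G`. -/
def lin (G : Subgroup (PGL2 k)) : Subgroup kˣ where
  carrier := {a | ∃ b, aff a b ∈ G}
  one_mem' := ⟨0, by rw [aff_one]; exact G.one_mem⟩
  mul_mem' := by
    rintro a c ⟨b, hb⟩ ⟨d, hd⟩
    have := G.mul_mem hb hd
    rw [aff_mul] at this
    exact ⟨_, this⟩
  inv_mem' := by
    rintro a ⟨b, hb⟩
    have := G.inv_mem hb
    rw [aff_inv] at this
    exact ⟨_, this⟩

variable {G : Subgroup (PGL2 k)}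

lemma mem_trans {b : k} : b ∈ trans G ↔ aff 1 b ∈ G := Iff.rfl

lemma mem_lin {a : kˣ} : a ∈ lin G ↔ ∃ b, aff a b ∈ G := Iff.rfl

/-- Conjugation by an affine map multiplies the vector of a translation by the linear part. -/
lemma mul_mem_trans {a : kˣ} {b : k} (ha : a ∈ lin G) (hb : b ∈ trans G) :
    (a : k) * b ∈ trans G := by
  obtain ⟨c, hc⟩ := ha
  have := G.mul_mem (G.mul_mem hc hb) (G.inv_mem hc)
  rw [aff_inv, aff_mul, aff_mul] at this
  rw [mem_trans]
  convert this using 1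
  rw [aff_inj]
  refine ⟨by simp, ?_⟩
  simp

variable [Finite G]

instance : Finite (trans G) :=
  Finite.of_injective (fun b : trans G => (⟨aff 1 b.1, b.2⟩ : G)) (by
    intro b c h
    have := congrArg Subtype.val h
    simp only [aff_inj] at this
    exact Subtype.ext this.2)

instance : Finite (lin G) := by
  choose f hf using fun a : lin G => a.2
  refine Finite.of_injective (fun a : lin G => (⟨aff a.1 (f a), hf a⟩ : G)) ?_
  intro b c h
  have := congrArg Subtype.val h
  simp only [aff_inj] at this
  exact Subtype.ext this.1

/-- On the stabilizer of `∞`, the linear part is a homomorphism whose kernel consists of the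
translations. -/
lemma card_stab_infty : Nat.card (stabilizer G (∞ : OnePoint k)) =
    Nat.card (trans G) * Nat.card (lin G) := by
  obtain ⟨χ, hχ⟩ := exists_linear_part (G.subtype.comp (stabilizer G (∞ : OnePoint k)).subtype)
    (fun s => s.2)
  rw [← Subgroup.card_mul_index χ.ker, Subgroup.index_ker]
  congr 1
  · refine (Nat.card_congr (Equiv.ofBijective (fun b : trans G =>
      (⟨⟨⟨aff 1 b.1, b.2⟩, aff_smul_infty _ _⟩, hχ _ _ _ rfl⟩ : χ.ker)) ⟨?_, ?_⟩)).symm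
    · intro b c h
      have := congrArg (fun x => x.1.1.1) h
      simp only [aff_inj] at this
      exact Subtype.ext this.2
    · rintro ⟨s, hs⟩
      obtain ⟨a, b, hab⟩ := exists_aff s.2
      have ha := hχ s a b hab
      rw [MonoidHom.mem_ker.1 hs] at ha
      subst ha
      refine ⟨⟨b, ?_⟩, ?_⟩
      · rw [mem_trans, ← hab]; exact s.1.2
      · exact Subtype.ext (Subtype.ext (Subtype.ext hab.symm))
  · have hr : χ.range = lin G := by
      ext a
      constructor
      · rintro ⟨s, rfl⟩
        obtain ⟨a, b, hab⟩ := exists_aff s.2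
        rw [hχ s a b hab]
        refine ⟨b, ?_⟩
        rw [← hab]
        exact s.1.2
      · rintro ⟨b, hb⟩
        exact ⟨⟨⟨aff a b, hb⟩, aff_smul_infty _ _⟩, hχ _ _ _ rfl⟩
    rw [hr]

lemma coe_mem_trans (h1 : (1 : k) ∈ trans G) {a : kˣ} (ha : a ∈ lin G) : (a : k) ∈ trans G := by
  simpa using mul_mem_trans ha h1

/-- If `G` contains `z ↦ z + 1`, then the linear parts are nonzero elements of `trans G`. -/
lemma card_lin_lt (h1 : (1 : k) ∈ trans G) : Nat.card (lin G) < Nat.card (trans G) := by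
  have h : Nat.card (Option (lin G)) ≤ Nat.card (trans G) := by
    refine Nat.card_le_card_of_injective (fun a : Option (lin G) =>
      a.elim (0 : trans G) (fun a => ⟨(a.1 : k), coe_mem_trans h1 a.2⟩)) ?_
    rintro (_ | a) (_ | b) h
    · rfl
    · have := congrArg Subtype.val h
      exact absurd this.symm b.1.ne_zero
    · have := congrArg Subtype.val h
      exact absurd this a.1.ne_zero
    · have := congrArg Subtype.val h
      exact congrArg Option.some (Subtype.ext (Units.ext this))
  rw [Finite.card_option] at h
  omega

/-- The additive group `trans G` is killed by `p`, so its order is a power of `p`. -/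
lemma card_trans (p : ℕ) [hpF : Fact p.Prime] [CharP k p] (h1 : (1 : k) ∈ trans G) :
    ∃ s, 1 ≤ s ∧ Nat.card (trans G) = p ^ s := by
  have hpg : IsPGroup p (Multiplicative (trans G)) := by
    intro b
    refine ⟨1, ?_⟩
    rw [pow_one]
    change Multiplicative.ofAdd (p • Multiplicative.toAdd b) = 1
    have : p • Multiplicative.toAdd b = 0 := by
      apply Subtype.ext
      rw [AddSubgroup.coe_nsmul, nsmul_eq_mul, CharP.cast_eq_zero, zero_mul]; rfl
    rw [this]; rfl
  obtain ⟨s, hs⟩ := IsPGroup.iff_card.1 hpg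
  have hs' : Nat.card (trans G) = p ^ s := hs
  refine ⟨s, ?_, hs'⟩
  have h2 := card_lin_lt h1
  have h3 : 0 < Nat.card (lin G) := Nat.card_pos
  rw [hs'] at h2
  by_contra h
  have : s = 0 := by omega
  subst this
  simp at h2
  omega

/-- The translations act freely on the finite points of the orbit of `∞`, so the number of these
points is a multiple of `|trans G|`. -/
lemma card_orbit_infty : ∃ n, Nat.card (orbit G (∞ : OnePoint k)) = 1 + n * Nat.card (trans G) := by
  classical
  have hfin : (orbit G (∞ : OnePoint k)).Finite := Set.finite_range _
  set O : Set k := {z | (z : OnePoint k) ∈ orbit G (∞ : OnePoint k)} with hO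
  have hOfin : O.Finite := hfin.preimage (OnePoint.coe_injective.injOn)
  have hor : orbit G (∞ : OnePoint k) = insert ∞ ((↑) '' O) := by
    ext z
    by_cases hz : z = ∞
    · subst hz; simp
    · obtain ⟨c, rfl⟩ := ne_infty_iff.1 hz
      simp [hO]
  have hcard : Nat.card (orbit G (∞ : OnePoint k)) = O.ncard + 1 := by
    rw [Nat.card_coe_set_eq, hor, Set.ncard_insert_of_notMem _ (hOfin.image _),
      Set.ncard_image_of_injective _ OnePoint.coe_injective]
    simp
  have hdvd : Nat.card (trans G) ∣ O.ncard := by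
    rw [Set.ncard_eq_toFinset_card O hOfin, Finset.card_eq_sum_card_image
      (fun z : k => (QuotientAddGroup.mk z : k ⧸ trans G))]
    apply Finset.dvd_sum
    intro c hc
    obtain ⟨z, hz, rfl⟩ := Finset.mem_image.1 hc
    rw [Set.Finite.mem_toFinset] at hz
    apply dvd_of_eq
    symm
    rw [← Set.ncard_coe_finset, ← Nat.card_coe_set_eq]
    symm
    refine Nat.card_congr (Equiv.ofBijective (fun b : trans G => ⟨z + b.1, ?_⟩) ⟨?_, ?_⟩)
    · simp only [Finset.coe_filter, Set.Finite.mem_toFinset, Set.mem_ofPred_eq]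
      constructor
      · obtain ⟨g, hg⟩ := hz
        refine ⟨⟨aff 1 b.1, b.2⟩ * g, ?_⟩
        change (_ * g) • ∞ = _
        change g • ∞ = _ at hg
        rw [mul_smul, hg]
        change aff 1 b.1 • (z : OnePoint k) = _
        rw [aff_smul_coe]; simp
      · rw [QuotientAddGroup.eq]
        simp
    · intro b c h
      have := congrArg Subtype.val h
      exact Subtype.ext (add_left_cancel this)
    · rintro ⟨w, hw⟩
      simp only [Finset.coe_filter, Set.Finite.mem_toFinset, Set.mem_ofPred_eq] at hw
      have h2 := QuotientAddGroup.eq.1 hw.2.symm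
      exact ⟨⟨_, h2⟩, by simp⟩
  obtain ⟨n, hn⟩ := hdvd
  exact ⟨n, by rw [hcard, hn]; ring⟩

end Modular

end Dickson

/-! ### The class formula in characteristic `p` -/

namespace Dickson

section Modular

open MulAction OnePoint

variable {k : Type*} [Field k] [DecidableEq k]

section Numerics

/-- The solutions of the class formula. Here `q` is the order of the group of translations, `m`
that of the group of linear parts, `1 + n * q` the length of the orbit of `∞`, and `e` the order of
the stabilizers in the other nontrivial orbit. The equation shows that `1 + n * (q - 2)`, which is
prime to `n`, divides `2 * m`, and `m < q` leaves few possibilities. -/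
lemma modular_numerics {q m n e : ℕ} (hq : 3 ≤ q) (hodd : Odd q) (hm : 1 ≤ m) (hmq : m < q)
    (hn : 1 ≤ n) (h : e * (1 + n * (q - 2)) = m * (1 + n * q)) :
    (n = 1 ∧ q - 1 ∣ 2 * m) ∨ (q = 3 ∧ n = 3 ∧ m = 2 ∧ e = 5) := by
  obtain ⟨r, rfl⟩ : ∃ r, q = r + 2 := ⟨q - 2, by omega⟩
  simp only [Nat.add_sub_cancel] at h
  have hcop : Nat.Coprime (1 + n * r) n := by simp
  have h2 : 1 + n * r ∣ n * (2 * m) := by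
    have h3 : m * (1 + n * (r + 2)) = m * (1 + n * r) + n * (2 * m) := by ring
    rw [h3] at h
    exact (Nat.dvd_add_right (Dvd.intro_left m rfl)).1 (h ▸ Dvd.intro_left e rfl)
  have h3 : 1 + n * r ∣ 2 * m := hcop.dvd_of_dvd_mul_left h2
  have h4 : 1 + n * r ≤ 2 * m := Nat.le_of_dvd (by omega) h3
  have hr1 : 1 ≤ r := by omega
  obtain hn1 | hn2 | hn3 : n = 1 ∨ n = 2 ∨ 3 ≤ n := by omega
  · left
    subst hn1
    refine ⟨rfl, ?_⟩
    have : r + 2 - 1 = 1 + 1 * r := by omega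
    rwa [this]
  · exfalso
    subst hn2
    have h5 : Nat.Coprime (1 + 2 * r) 2 := by simp
    have := Nat.le_of_dvd (by omega) (h5.dvd_of_dvd_mul_left h3)
    have h6 : r ≠ 2 := by
      rintro rfl
      exact absurd hodd (by decide)
    omega
  · right
    have h5 : 3 * r ≤ n * r := Nat.mul_le_mul_right _ hn3
    have hr : r = 1 := by omega
    subst hr
    have hm2 : m = 2 := by
      by_contra hne
      have : m = 1 := by omega
      omega
    subst hm2
    have hn : n = 3 := by omega
    subst hn
    omega

end Numerics

variable [IsAlgClosed k] [NeZero (2 : k)]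

variable {G : Subgroup (PGL2 k)} [Finite G]

/-- An element with exactly one fixed point has order `p` and therefore fixes a point in every
orbit of length prime to `p`, such as the orbit of `∞`. -/
lemma mem_orbit_of_unique (p : ℕ) [hpF : Fact p.Prime] [CharP k p] (h1 : (1 : k) ∈ trans G)
    {g : PGL2 k} (hgG : g ∈ G) {x : OnePoint k} (hg : ∀ z, g • z = z ↔ z = x) :
    x ∈ orbit G (∞ : OnePoint k) := by
  obtain ⟨z, hz⟩ : ∃ z : OnePoint k, z ≠ x := by
    by_cases hx : x = ∞
    · exact ⟨((0 : k) : OnePoint k), by rw [hx]; exact coe_ne_infty _⟩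
    · exact ⟨∞, Ne.symm hx⟩
  have hg1 : g ≠ 1 := by
    rintro rfl
    exact hz ((hg z).1 (one_smul _ _))
  have hgp : g ^ p = 1 := by
    rcases fixed_dichotomy hg1 ((hg x).2 rfl) with ⟨-, h⟩ | ⟨y, hxy, h, -⟩
    · rw [h, CharP.cast_eq_zero]
    · exact absurd ((hg y).1 ((h y).2 (Or.inr rfl))).symm hxy
  have hpg : IsPGroup p (Subgroup.zpowers (⟨g, hgG⟩ : G)) := by
    rintro ⟨s, i, rfl⟩
    refine ⟨1, ?_⟩
    rw [pow_one]
    apply Subtype.ext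
    apply Subtype.ext
    simp only [Subgroup.coe_pow, Subgroup.coe_zpow, Subgroup.coe_one]
    rw [← zpow_natCast, zpow_comm, zpow_natCast, hgp, one_zpow]
  have hfin : Finite (orbit G (∞ : OnePoint k)) := Set.finite_range _
  have hnd : ¬ p ∣ Nat.card (orbit G (∞ : OnePoint k)) := by
    obtain ⟨n, hn⟩ := card_orbit_infty (G := G)
    obtain ⟨s, hs, hs'⟩ := card_trans p h1
    rw [hn, hs']
    intro h
    have h2 : p ∣ n * p ^ s := Dvd.dvd.mul_left (dvd_pow_self p (by omega)) n
    exact hpF.out.one_lt.ne' (Nat.dvd_one.1 ((Nat.dvd_add_left h2).1 h))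
  obtain ⟨y, hy⟩ := hpg.nonempty_fixed_point_of_prime_not_dvd_card _ hnd
  have h2 := hy ⟨⟨g, hgG⟩, Subgroup.mem_zpowers _⟩
  have h3 : g • (y : OnePoint k) = y := congrArg Subtype.val h2
  rw [hg] at h3
  rw [← h3]
  exact y.2

/-- The elements with exactly one fixed point are the conjugates of the nontrivial translations:
for each point `x` of the orbit of `∞`, choose an element of `G` that sends `∞` to `x` and use it to
conjugate. -/
lemma card_unique (p : ℕ) [hpF : Fact p.Prime] [CharP k p] (h1 : (1 : k) ∈ trans G) :
    Nat.card {g : G // ∃ x, ∀ z : OnePoint k, g • z = z ↔ z = x} =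
      Nat.card (orbit G (∞ : OnePoint k)) * (Nat.card (trans G) - 1) := by
  classical
  choose h hh using fun x : orbit G (∞ : OnePoint k) => x.2
  have hh' : ∀ x, (h x : PGL2 k) • (∞ : OnePoint k) = x := hh
  have hΓ : Nat.card {b : trans G // b ≠ 0} = Nat.card (trans G) - 1 := by
    have := Fintype.ofFinite (trans G)
    rw [Nat.card_eq_fintype_card, Nat.card_eq_fintype_card, Fintype.card_subtype_compl,
      Fintype.card_subtype_eq]
  have key : ∀ (x : orbit G (∞ : OnePoint k)) (b : {b : trans G // b ≠ 0}) (z : OnePoint k),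
      ((h x : PGL2 k) * aff 1 b.1.1 * (h x : PGL2 k)⁻¹) • z = z ↔ z = x := by
    intro x b z
    have hb : b.1.1 ≠ 0 := fun h => b.2 (Subtype.ext h)
    have := conj_smul_iff (aff 1 b.1.1) (h x : PGL2 k)⁻¹ z
    rw [inv_inv] at this
    rw [this, aff_one_smul_eq_iff hb, inv_smul_eq_iff, hh']
  rw [← hΓ, ← Nat.card_prod]
  symm
  refine Nat.card_congr (Equiv.ofBijective
    (fun y : orbit G (∞ : OnePoint k) × {b : trans G // b ≠ 0} =>
      (⟨(h y.1 * (⟨aff 1 y.2.1.1, y.2.1.2⟩ : G) * (h y.1)⁻¹ : G), y.1.1, key y.1 y.2⟩ :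
        {g : G // ∃ x, ∀ z : OnePoint k, g • z = z ↔ z = x})) ⟨?_, ?_⟩)
  · rintro ⟨x, b⟩ ⟨y, c⟩ hxy
    have h2 := congrArg (fun u => (u.1 : PGL2 k)) hxy
    simp only [Subgroup.coe_mul, Subgroup.coe_inv] at h2
    have h3 : (x : OnePoint k) = y := by
      rw [← key y c, ← h2, key x b]
    obtain rfl : x = y := Subtype.ext h3
    simp only [mul_left_inj, mul_right_inj, aff_inj] at h2
    rw [Subtype.ext (Subtype.ext h2.2)]
  · rintro ⟨g, x, hx⟩
    have hxO := mem_orbit_of_unique p h1 g.2 hx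
    set y : orbit G (∞ : OnePoint k) := ⟨x, hxO⟩ with hy
    obtain ⟨b, hb, hb'⟩ := exists_eq_aff_one (g := (h y : PGL2 k)⁻¹ * (g : PGL2 k) * (h y : PGL2 k)) (by
      intro z
      rw [conj_smul_iff]
      have := hx ((h y : PGL2 k) • z)
      refine Iff.trans this ?_
      have h3 : x = (h y : PGL2 k) • ∞ := (hh' y).symm
      rw [h3]
      exact ⟨fun h => smul_left_cancel _ h, fun h => by rw [h]⟩)
    have hbG : b ∈ trans G := by
      rw [mem_trans, ← hb']
      exact G.mul_mem (G.mul_mem (G.inv_mem (h y).2) g.2) (h y).2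
    refine ⟨⟨y, ⟨⟨b, hbG⟩, fun h => hb (congrArg Subtype.val h)⟩⟩, ?_⟩
    apply Subtype.ext
    apply Subtype.ext
    simp only [Subgroup.coe_mul, Subgroup.coe_inv]
    rw [← hb', conj_conj]

/-- If `∞` is not fixed by `G`, then there is exactly one other orbit of points with nontrivial
stabilizers, and the class formula determines the order of these stabilizers. -/
lemma class_formula (p : ℕ) [hpF : Fact p.Prime] [CharP k p] (hp : p ≠ 2)
    (h1 : (1 : k) ∈ trans G) {n : ℕ}
    (hn : Nat.card (orbit G (∞ : OnePoint k)) = 1 + n * Nat.card (trans G)) (hn0 : 1 ≤ n) :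
    ∃ e, e * (1 + n * (Nat.card (trans G) - 2)) =
        Nat.card (lin G) * (1 + n * Nat.card (trans G)) ∧
      ∀ x : OnePoint k, stabilizer G x ≠ ⊥ → x ∉ orbit G (∞ : OnePoint k) →
        Nat.card (stabilizer G x) = e := by
  classical
  have := Fintype.ofFinite G
  -- a nontrivial element has two fixed points, except for those with a unique one
  have hcard2 : ∀ g : G, g ≠ 1 → ((fixedBy (OnePoint k) g).ncard : ℚ) =
      2 - if ∃ x, ∀ z : OnePoint k, g • z = z ↔ z = x then 1 else 0 := by
    intro g hg
    obtain ⟨x, hx⟩ := exists_fixed (g : PGL2 k)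
    rcases fixed_dichotomy (fun h => hg (Subtype.ext h)) hx with ⟨h, -⟩ | ⟨y, hxy, h, -⟩
    · have h2 : fixedBy (OnePoint k) g = {x} := by
        ext z; exact h z
      rw [if_pos ⟨x, h⟩, h2, Set.ncard_singleton]
      norm_num
    · have h2 : fixedBy (OnePoint k) g = {x, y} := by
        ext z; exact h z
      rw [if_neg, h2, Set.ncard_pair hxy]
      · norm_num
      · rintro ⟨w, hw⟩
        exact hxy (((hw x).1 hx).trans ((hw y).1 ((h y).2 (Or.inr rfl))).symm)
  obtain ⟨R, hR1, hR2, hR3, hR⟩ := exists_orbit_reps (G := G) (X := OnePoint k) (by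
    intro g hg
    apply Set.finite_of_ncard_pos
    have h2 := hcard2 g hg
    have : (0 : ℚ) < (fixedBy (OnePoint k) g).ncard := by
      rw [h2]; split_ifs <;> norm_num
    exact_mod_cast this)
  have hone : ¬ ∃ x, ∀ z : OnePoint k, (1 : G) • z = z ↔ z = x := by
    rintro ⟨w, hw⟩
    have h2 := (hw ∞).1 (one_smul _ _)
    have h3 := (hw ((0 : k) : OnePoint k)).1 (one_smul _ _)
    exact coe_ne_infty _ (h3.trans h2.symm)
  have hU : ((Finset.univ.erase (1 : G)).filter
      (fun g => ∃ x, ∀ z : OnePoint k, g • z = z ↔ z = x)).card =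
      Nat.card (orbit G (∞ : OnePoint k)) * (Nat.card (trans G) - 1) := by
    rw [← card_unique p h1, Nat.card_eq_fintype_card, Fintype.card_subtype]
    congr 1
    ext g
    simp only [Finset.mem_filter, Finset.mem_erase, Finset.mem_univ, and_true, true_and]
    constructor
    · exact fun h => h.2
    · intro h
      refine ⟨?_, h⟩
      rintro rfl
      exact hone h
  set N := Nat.card G with hN
  set q := Nat.card (trans G) with hq
  set m := Nat.card (lin G) with hm
  have hNpos : 0 < N := Nat.card_pos
  have hmpos : 0 < m := Nat.card_pos
  have hqpos : 0 < q := Nat.card_pos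
  have hq3 : 3 ≤ q := by
    obtain ⟨s, hs, hs'⟩ := card_trans p h1
    have hp3 : 3 ≤ p := by
      have := hpF.out.two_le
      omega
    rw [hq, hs']
    exact hp3.trans (Nat.le_self_pow (by omega) p)
  have hsum2 : ∑ g ∈ Finset.univ.erase (1 : G), ((fixedBy (OnePoint k) g).ncard : ℚ) =
      (N - 1) * 2 - (1 + n * q) * (q - 1) := by
    rw [Finset.sum_congr rfl (fun g hg => hcard2 g (Finset.ne_of_mem_erase hg)),
      Finset.sum_sub_distrib, Finset.sum_boole, hU, Finset.sum_const,
      Finset.card_erase_of_mem (Finset.mem_univ _), Finset.card_univ, ← Nat.card_eq_fintype_card,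
      ← hN, nsmul_eq_mul, Nat.cast_sub hNpos, hn, Nat.cast_mul, Nat.cast_sub hqpos]
    push_cast
    ring
  rw [hsum2] at hR
  have hNeq : N = (1 + n * q) * (q * m) := by
    rw [hN, ← card_orbit_mul (G := G) (∞ : OnePoint k), hn, card_stab_infty]
  set e : OnePoint k → ℕ := fun r => Nat.card (stabilizer G r) with he
  have hinf : stabilizer G (∞ : OnePoint k) ≠ ⊥ := by
    rw [Ne, ← Subgroup.card_eq_one, card_stab_infty]
    intro h
    have := Nat.eq_one_of_mul_eq_one_right h
    omega
  obtain ⟨r₀, hr₀, hr₀'⟩ := hR2 ∞ hinf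
  have her₀ : e r₀ = q * m := by
    rw [he]
    change Nat.card (stabilizer G r₀) = _
    rw [← card_stabilizer_of_mem_orbit hr₀', card_stab_infty]
  have hqQ : (3 : ℚ) ≤ q := by exact_mod_cast hq3
  have hmQ : (1 : ℚ) ≤ m := by exact_mod_cast hmpos
  have hnQ : (1 : ℚ) ≤ n := by exact_mod_cast hn0
  have hNQ : (N : ℚ) = (1 + n * q) * (q * m) := by rw [hNeq]; push_cast; ring
  have hNQpos : (0 : ℚ) < N := by exact_mod_cast hNpos
  -- the class formula, with the contribution of the orbit of `∞` on the right hand side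
  have hsum : ∑ r ∈ R.erase r₀, (1 - 1 / (e r : ℚ)) =
      1 - (1 + n * (q - 2)) / ((1 + n * q) * m) := by
    have h2 : (1 - 1 / (e r₀ : ℚ)) + ∑ r ∈ R.erase r₀, (1 - 1 / (e r : ℚ)) =
        ((N - 1) * 2 - (1 + n * q) * (q - 1)) / N := by
      rw [eq_div_iff hNQpos.ne', ← hR, Finset.add_sum_erase R (fun r => 1 - 1 / (e r : ℚ)) hr₀]
    have h3 : ∑ r ∈ R.erase r₀, (1 - 1 / (e r : ℚ)) =
        ((N - 1) * 2 - (1 + n * q) * (q - 1)) / N - (1 - 1 / (e r₀ : ℚ)) := by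
      rw [← h2]; ring
    rw [h3, her₀, hNQ]
    have h4 : (1 + n * q : ℚ) ≠ 0 := by positivity
    have h5 : (q : ℚ) ≠ 0 := by positivity
    have h6 : (m : ℚ) ≠ 0 := by positivity
    push_cast
    field_simp
    ring
  have hposf : (0 : ℚ) < (1 + n * (q - 2)) / ((1 + n * q) * m) := by
    have : (0 : ℚ) ≤ n * (q - 2) := mul_nonneg (by linarith) (by linarith)
    positivity
  have he2 : ∀ r ∈ R, 2 ≤ e r := by
    intro r hr
    have := hR1 r hr
    rw [Ne, ← Subgroup.card_eq_one] at this
    have h0 : 0 < e r := Nat.card_pos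
    have h0' : e r ≠ 1 := this
    omega
  have hhalf : ∀ r ∈ R.erase r₀, (1 / 2 : ℚ) ≤ 1 - 1 / (e r : ℚ) := by
    intro r hr
    have h2 : (2 : ℚ) ≤ e r := by exact_mod_cast he2 r (Finset.mem_of_mem_erase hr)
    have : (1 : ℚ) / e r ≤ 1 / 2 := one_div_le_one_div_of_le (by norm_num) h2
    linarith
  -- each further orbit contributes at least `1 / 2` to a sum that is less than `1`
  have hRcard : (R.erase r₀).card ≤ 1 := by
    have h4 := Finset.card_nsmul_le_sum _ _ _ hhalf
    rw [hsum, nsmul_eq_mul] at h4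
    have : ((R.erase r₀).card : ℚ) < 2 := by linarith
    have : (R.erase r₀).card < 2 := by exact_mod_cast this
    omega
  -- the sum is not zero, because `1 + n * (q - 2) < (1 + n * q) * m`
  have hRne : (R.erase r₀).Nonempty := by
    rw [Finset.nonempty_iff_ne_empty]
    intro h0
    rw [h0, Finset.sum_empty] at hsum
    have h2 : (1 + n * (q - 2) : ℚ) / ((1 + n * q) * m) = 1 := by linarith
    rw [div_eq_one_iff_eq (by positivity)] at h2
    have h3 : (1 + n * q : ℚ) * 1 ≤ (1 + n * q) * m :=
      mul_le_mul_of_nonneg_left hmQ (by positivity)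
    linarith
  obtain ⟨r₁, hr₁⟩ := Finset.card_eq_one.1
    (le_antisymm hRcard (Finset.card_pos.2 hRne))
  have hr₁R : r₁ ∈ R := Finset.mem_of_mem_erase (a := r₀) (hr₁ ▸ Finset.mem_singleton_self r₁)
  refine ⟨e r₁, ?_, ?_⟩
  · rw [hr₁, Finset.sum_singleton] at hsum
    have h2 : (1 : ℚ) / e r₁ = (1 + n * (q - 2)) / ((1 + n * q) * m) := by linarith
    have h3 : (0 : ℚ) < e r₁ := by
      have := he2 r₁ hr₁R
      exact_mod_cast (by omega : 0 < e r₁)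
    rw [div_eq_div_iff (by positivity) (by positivity)] at h2
    have h4 : ((e r₁ * (1 + n * (q - 2)) : ℕ) : ℚ) = ((m * (1 + n * q) : ℕ) : ℚ) := by
      push_cast [Nat.cast_sub (by omega : 2 ≤ q)]
      linarith
    exact_mod_cast h4
  · intro x hx hxO
    obtain ⟨r, hr, hxr⟩ := hR2 x hx
    have hrr : r ∈ R.erase r₀ := by
      rw [Finset.mem_erase]
      refine ⟨?_, hr⟩
      rintro rfl
      exact hxO ((orbitRel G (OnePoint k)).trans hxr ((orbitRel G (OnePoint k)).symm hr₀'))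
    rw [hr₁, Finset.mem_singleton] at hrr
    rw [card_stabilizer_of_mem_orbit hxr, hrr]

end Modular

end Dickson

/-! ### The exceptional group and the subfield of translations -/

namespace Dickson

section Modular

open MulAction OnePoint

variable {k : Type*} [Field k] [DecidableEq k]

section

variable {G : Subgroup (PGL2 k)} [Finite G]

/-- The centralizer of a translation consists of translations. The statement is about the conjugates
of the translations, described as elements with a unique fixed point. -/
lemma card_centralizer_unique {g : G} {x : OnePoint k} (hx : x ∈ orbit G (∞ : OnePoint k))
    (hg : ∀ z : OnePoint k, g • z = z ↔ z = x) :
    Nat.card (Subgroup.centralizer ({g} : Set G)) ≤ Nat.card (trans G) := by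
  obtain ⟨h, rfl⟩ := hx
  have hG : ∀ d : G, ((h : PGL2 k)⁻¹ * (d : PGL2 k) * (h : PGL2 k)) ∈ G := fun d =>
    G.mul_mem (G.mul_mem (G.inv_mem h.2) d.2) h.2
  obtain ⟨c, hc, hgc⟩ := exists_eq_aff_one (g := ((h : PGL2 k)⁻¹ * (g : PGL2 k) * (h : PGL2 k))) (by
    intro z
    rw [conj_smul_iff]
    refine Iff.trans (hg (h • z)) ?_
    exact ⟨fun h' => smul_left_cancel h h', fun h' => by rw [h']⟩)
  have hd : ∀ d : Subgroup.centralizer ({g} : Set G), ∃ b : trans G,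
      ((h : PGL2 k)⁻¹ * (d : PGL2 k) * (h : PGL2 k)) = aff 1 b.1 := by
    rintro ⟨d, hd⟩
    rw [Subgroup.mem_centralizer_singleton_iff] at hd
    have hfix : (d : PGL2 k) • (h : PGL2 k) • (∞ : OnePoint k) = (h : PGL2 k) • ∞ := by
      refine (hg (d • h • (∞ : OnePoint k))).1 ?_
      rw [← mul_smul, ← hd, mul_smul]
      congr 1
      exact (hg _).2 rfl
    rw [← conj_smul_iff] at hfix
    obtain ⟨a, b, hab⟩ := exists_aff hfix
    have hcomm : aff a b * aff 1 c = aff 1 c * aff a b := by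
      rw [← hab, ← hgc]
      have hd' : (d : PGL2 k) * (g : PGL2 k) = g * d := congrArg Subtype.val hd
      calc _ = ((h : PGL2 k)⁻¹ * ((d : PGL2 k) * (g : PGL2 k)) * (h : PGL2 k)) := by group
        _ = _ := by rw [hd']; group
    rw [aff_mul, aff_mul, aff_inj] at hcomm
    have ha : a = 1 := by
      have h2 : (a : k) * c = 1 * c := by
        have := hcomm.2
        simp only [Units.val_one] at this
        linear_combination this
      exact Units.ext (mul_right_cancel₀ hc h2)
    subst ha
    exact ⟨⟨b, by rw [mem_trans, ← hab]; exact hG d⟩, hab⟩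
  choose f hf using hd
  refine Nat.card_le_card_of_injective f ?_
  intro d d' hdd
  have h2 := hf d
  rw [hdd, ← hf d'] at h2
  simp only [mul_left_inj, mul_right_inj] at h2
  exact Subtype.ext (Subtype.ext h2)

/-- An affine map that fixes a given finite point is determined by its linear part. -/
lemma card_stab_two {x y : OnePoint k} (hx : x ∈ orbit G (∞ : OnePoint k)) (hxy : y ≠ x) :
    Nat.card (stabilizer G x ⊓ stabilizer G y : Subgroup G) ≤ Nat.card (lin G) := by
  obtain ⟨h, rfl⟩ := hx
  change y ≠ (h : PGL2 k) • (∞ : OnePoint k) at hxy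
  obtain ⟨c, hc⟩ : ∃ c : k, (h : PGL2 k)⁻¹ • y = c :=
    ne_infty_iff.1 fun h' => hxy (by rw [← h', smul_inv_smul])
  have hy : y = (h : PGL2 k) • (c : OnePoint k) := by rw [← hc, smul_inv_smul]
  have hd : ∀ d : (stabilizer G ((fun m : G => m • (∞ : OnePoint k)) h) ⊓ stabilizer G y :
      Subgroup G), ∃ a : lin G, ((h : PGL2 k)⁻¹ * (d : PGL2 k) * (h : PGL2 k)) = aff a.1 (c - a.1 * c) := by
    rintro ⟨d, hd⟩
    have h1 : (d : PGL2 k) • (h : PGL2 k) • (∞ : OnePoint k) = (h : PGL2 k) • ∞ :=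
      (Subgroup.mem_inf.1 hd).1
    have h2 : (d : PGL2 k) • y = y := (Subgroup.mem_inf.1 hd).2
    rw [← conj_smul_iff] at h1
    rw [hy, ← conj_smul_iff] at h2
    obtain ⟨a, b, hab⟩ := exists_aff h1
    rw [hab, aff_smul_coe, OnePoint.coe_eq_coe] at h2
    have hb : b = c - a * c := by linear_combination h2
    refine ⟨⟨a, b, ?_⟩, ?_⟩
    · rw [← hab]
      exact G.mul_mem (G.mul_mem (G.inv_mem h.2) d.2) h.2
    · exact hab.trans (aff_inj.2 ⟨rfl, hb⟩)
  choose f hf using hd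
  refine Nat.card_le_card_of_injective f ?_
  intro d d' hdd
  have h2 := hf d
  rw [hdd, ← hf d'] at h2
  simp only [mul_left_inj, mul_right_inj] at h2
  exact Subtype.ext (Subtype.ext h2)

variable [IsAlgClosed k] [NeZero (2 : k)]

/-- The exceptional solution of the class formula belongs to the alternating group `A₅`. -/
lemma modular_A5 (p : ℕ) [hpF : Fact p.Prime] [CharP k p] (hp : p ≠ 2)
    (h1 : (1 : k) ∈ trans G)
    (hO : Nat.card (orbit G (∞ : OnePoint k)) = 1 + 3 * Nat.card (trans G))
    (hq : Nat.card (trans G) = 3) (hm : Nat.card (lin G) = 2)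
    (he : ∀ x : OnePoint k, stabilizer G x ≠ ⊥ → x ∉ orbit G (∞ : OnePoint k) →
        Nat.card (stabilizer G x) = 5) :
    p = 3 ∧ Nonempty (G ≃* alternatingGroup (Fin 5)) := by
  -- `p` divides `|trans G| = 3`
  have hp3 : p = 3 := by
    obtain ⟨s, hs, hs'⟩ := card_trans p h1
    rw [hq] at hs'
    have : p ∣ 3 := hs' ▸ dvd_pow_self p (by omega)
    exact (Nat.prime_dvd_prime_iff_eq hpF.out Nat.prime_three).1 this
  subst hp3
  refine ⟨rfl, iso_A5 ?_ ?_ ?_⟩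
  · intro c hc
    have hc1 : (c : PGL2 k) ≠ 1 := by
      intro h
      rw [← Subgroup.orderOf_coe, h, orderOf_one] at hc
      omega
    have hc3 : (c : PGL2 k) ^ 3 = 1 := by
      rw [← hc, ← Subgroup.orderOf_coe, pow_orderOf_eq_one]
    obtain ⟨x, hx⟩ := exists_fixed (c : PGL2 k)
    rcases fixed_dichotomy hc1 hx with ⟨h, -⟩ | ⟨y, hxy, h, a, ha⟩
    · rw [← hq]
      exact card_centralizer_unique (mem_orbit_of_unique 3 h1 c.2 h) h
    · exfalso
      have h2 : (a : k) ^ 3 = 1 := by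
        rw [← Units.val_pow_eq_pow_val, (ha 3).1 hc3, Units.val_one]
      have h3 : ((a : k) - 1) ^ 3 = 0 := by
        rw [sub_pow_char, h2, one_pow, sub_self]
      have h4 : a = 1 := Units.ext (sub_eq_zero.1 (pow_eq_zero_iff three_ne_zero |>.1 h3))
      have := (ha 1).2 (by rw [h4, one_pow])
      exact hc1 (by rwa [pow_one] at this)
  · rw [← card_orbit_mul (G := G) (∞ : OnePoint k), hO, card_stab_infty, hq, hm]
  · intro t ht
    have ht1 : (t : PGL2 k) ≠ 1 := by
      intro h
      rw [← Subgroup.orderOf_coe, h, orderOf_one] at ht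
      omega
    have ht2 : (t : PGL2 k) ^ 2 = 1 := by
      have := pow_orderOf_eq_one t
      rw [ht] at this
      exact congrArg Subtype.val this
    obtain ⟨x, hx⟩ := exists_fixed (t : PGL2 k)
    rcases fixed_dichotomy ht1 hx with ⟨-, h⟩ | ⟨y, hxy, h, -⟩
    · exact absurd ((h 2).1 ht2) (by simpa using two_ne_zero (α := k))
    · have hdvd : 2 ∣ Nat.card (stabilizer G x) := by
        have h2 := Subgroup.orderOf_dvd_natCard (stabilizer G x) (x := t) hx
        rwa [ht] at h2
      -- otherwise the stabilizer of `x` has odd order 5 and contains no involution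
      have hxO : x ∈ orbit G (∞ : OnePoint k) := by
        by_contra hxO
        rw [he x ?_ hxO] at hdvd
        · omega
        · intro hb
          rw [(Subgroup.eq_bot_iff_card _).1 hb] at hdvd
          omega
      refine (card_centralizer_le_two_mul (G := G) (t := t) (x := x) (y := y) h).trans ?_
      have := card_stab_two hxO hxy.symm
      omega

end

/-- If there are enough linear parts, then the vectors of the translations form a ring: the
additive group generated by the linear parts has more than half of the elements of `trans G`, so it
is all of `trans G`, and the linear parts act on `trans G` by multiplication. -/
lemma trans_mul_mem {G : Subgroup (PGL2 k)} [Finite G] (h1 : (1 : k) ∈ trans G)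
    (hm : Nat.card (trans G) - 1 ∣ 2 * Nat.card (lin G)) {x y : k} (hx : x ∈ trans G)
    (hy : y ∈ trans G) : x * y ∈ trans G := by
  set A := AddSubgroup.closure ((fun a : kˣ => (a : k)) '' (lin G : Set kˣ)) with hA
  have hle : A ≤ trans G := by
    rw [hA, AddSubgroup.closure_le]
    rintro _ ⟨a, ha, rfl⟩
    exact coe_mem_trans h1 ha
  have hmpos : 0 < Nat.card (lin G) := Nat.card_pos
  have hAeq : A = trans G := by
    have hfinA : Finite A := Finite.of_injective _ (AddSubgroup.inclusion_injective hle)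
    have hcard : Nat.card (Option (lin G)) ≤ Nat.card A := by
      refine Nat.card_le_card_of_injective (fun a : Option (lin G) =>
        a.elim (0 : A) (fun a => ⟨(a.1 : k), AddSubgroup.subset_closure ⟨a.1, a.2, rfl⟩⟩)) ?_
      rintro (_ | a) (_ | b) h
      · rfl
      · have := congrArg Subtype.val h
        exact absurd this.symm b.1.ne_zero
      · have := congrArg Subtype.val h
        exact absurd this a.1.ne_zero
      · have := congrArg Subtype.val h
        exact congrArg Option.some (Subtype.ext (Units.ext this))
    rw [Finite.card_option] at hcard
    have h2 := Nat.le_of_dvd (by omega) hm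
    obtain ⟨r, hr⟩ := AddSubgroup.card_dvd_of_le hle
    have hqpos : 0 < Nat.card (trans G) := Nat.card_pos
    have hr1 : r = 1 := by
      have h3 : r ≠ 0 := by rintro rfl; omega
      by_contra h4
      have : 2 ≤ r := by omega
      have : Nat.card A * 2 ≤ Nat.card A * r := Nat.mul_le_mul_left _ this
      omega
    rw [hr1, mul_one] at hr
    apply SetLike.coe_injective
    refine Set.eq_of_subset_of_ncard_le hle ?_
      (Set.finite_coe_iff.1 (inferInstanceAs (Finite (trans G))))
    rw [← Nat.card_coe_set_eq, ← Nat.card_coe_set_eq]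
    exact hr.le
  rw [← hAeq] at hx
  induction hx using AddSubgroup.closure_induction with
  | mem x hx =>
    obtain ⟨a, ha, rfl⟩ := hx
    exact mul_mem_trans ha hy
  | zero => rw [zero_mul]; exact (trans G).zero_mem
  | add x z _ _ h h' => rw [add_mul]; exact (trans G).add_mem h h'
  | neg x _ h => rw [neg_mul]; exact (trans G).neg_mem h

/-- The finite ring `trans G` is a field, isomorphic to every finite field of the same order. -/
lemma exists_field_hom {G : Subgroup (PGL2 k)} [Finite G] (h1 : (1 : k) ∈ trans G)
    (hm : Nat.card (trans G) - 1 ∣ 2 * Nat.card (lin G)) (F : Type) [Field F] [Fintype F]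
    (hF : Fintype.card F = Nat.card (trans G)) :
    ∃ i : F →+* k, ∀ x, x ∈ trans G ↔ ∃ y, i y = x := by
  classical
  let S : Subring k :=
    { trans G with
      one_mem' := h1
      mul_mem' := fun hx hy => trans_mul_mem h1 hm hx hy }
  have hS : ∀ x, x ∈ S ↔ x ∈ trans G := fun x => Iff.rfl
  have hfin : Finite S := inferInstanceAs (Finite (trans G))
  have := Fintype.ofFinite S
  let _ : Field S := Fintype.fieldOfDomain S
  have hcard : Fintype.card F = Fintype.card S := by
    rw [hF, ← Nat.card_eq_fintype_card]; rfl
  let φ : F ≃+* S := FiniteField.ringEquivOfCardEq hcard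
  refine ⟨S.subtype.comp φ.toRingHom, fun x => ⟨fun hx => ?_, ?_⟩⟩
  · exact ⟨φ.symm ⟨x, hx⟩, by simp⟩
  · rintro ⟨y, rfl⟩
    exact (φ y).2

end Modular

end Dickson

/-! ### Projective groups over a finite field -/

namespace Dickson

section FiniteField

variable {F : Type*} [Field F]

/-- The elementary matrices generate `SL₂`. -/
lemma mob_mem_of_det_eq_one {K : Subgroup (PGL2 F)}
    (hU : ∀ x : F, mob 1 x 0 1 (by simp) ∈ K) (hL : ∀ x : F, mob 1 0 x 1 (by simp) ∈ K)
    {a b c d : F} (h : a * d - b * c ≠ 0) (h1 : a * d - b * c = 1) : mob a b c d h ∈ K := by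
  -- a matrix with `c ≠ 0` is a product of three elementary matrices
  have key : ∀ {a b c d : F} (h : a * d - b * c ≠ 0), a * d - b * c = 1 → c ≠ 0 →
      mob a b c d h ∈ K := by
    intro a b c d h h1 hc
    have h2 := K.mul_mem (K.mul_mem (hU ((a - 1) / c)) (hL c)) (hU ((d - 1) / c))
    rw [mob_mul, mob_mul] at h2
    refine (?_ : mob a b c d h = _) ▸ h2
    rw [mob_eq_iff]
    refine ⟨1, ?_, ?_, ?_, ?_⟩ <;> simp only [Units.val_one] <;> field_simp
    · ring
    · linear_combination -h1
    · ring
    · ring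
  by_cases hc : c = 0
  · subst hc
    have ha : a ≠ 0 := by
      rintro rfl
      simp at h
    have h2 := K.mul_mem (K.inv_mem (hL 1)) (key (a := a) (b := b) (c := a) (d := b + d)
      (by intro h0; apply h; linear_combination h0) (by linear_combination h1) ha)
    refine (?_ : mob a b 0 d h = _) ▸ h2
    rw [eq_inv_mul_iff_mul_eq, mob_mul, mob_eq_iff]
    exact ⟨1, by simp⟩
  · exact key h h1 hc

/-- The images of the elementary matrices generate the classes of square determinant, because these
have representatives of determinant 1. -/
lemma mob_mem_of_isSquare {K : Subgroup (PGL2 F)}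
    (hU : ∀ x : F, mob 1 x 0 1 (by simp) ∈ K) (hL : ∀ x : F, mob 1 0 x 1 (by simp) ∈ K)
    {a b c d : F} (h : a * d - b * c ≠ 0) (h1 : IsSquare (a * d - b * c)) :
    mob a b c d h ∈ K := by
  obtain ⟨r, hr⟩ := h1
  have hr0 : r ≠ 0 := by
    rintro rfl
    exact h (by simpa using hr)
  have h2 : a / r * (d / r) - b / r * (c / r) = 1 := by
    field_simp
    linear_combination hr
  have h3 := mob_mem_of_det_eq_one hU hL (by rw [h2]; exact one_ne_zero) h2
  refine (?_ : mob a b c d h = _) ▸ h3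
  rw [mob_eq_iff]
  refine ⟨(Units.mk0 r hr0)⁻¹, ?_⟩
  simp [div_eq_mul_inv]

lemma exists_mob_eq_toPGL (g : PSL2 F) : ∃ a b c d, ∃ h : a * d - b * c = 1,
    Matrix.ProjectiveSpecialLinearGroup.toPGL g =
      mob a b c d (by rw [h]; exact one_ne_zero) := by
  induction g using QuotientGroup.induction_on with
  | H g =>
    refine ⟨g 0 0, g 0 1, g 1 0, g 1 1, ?_, ?_⟩
    · have := g.det_coe
      rwa [Matrix.det_fin_two] at this
    · rw [mob]
      refine congrArg QuotientGroup.mk ?_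
      ext i j
      fin_cases i <;> fin_cases j <;> rfl

lemma mob_mem_range {a b c d : F} (h : a * d - b * c ≠ 0) (h1 : a * d - b * c = 1) :
    mob a b c d h ∈ (Matrix.ProjectiveSpecialLinearGroup.toPGL : PSL2 F →* PGL2 F).range := by
  refine ⟨QuotientGroup.mk ⟨!![a, b; c, d], by rw [Matrix.det_fin_two_of, h1]⟩, ?_⟩
  rw [mob]
  refine congrArg QuotientGroup.mk ?_
  ext i j
  fin_cases i <;> fin_cases j <;> rfl

/-- Over a finite field, the classes of square determinant have index at most two, so that a group
containing the images of the elementary matrices is the image of `SL₂` or everything. -/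
lemma iso_PSL_or_PGL [Finite F] {K : Subgroup (PGL2 F)}
    (hU : ∀ x : F, mob 1 x 0 1 (by simp) ∈ K) (hL : ∀ x : F, mob 1 0 x 1 (by simp) ∈ K) :
    Nonempty (K ≃* PSL2 F) ∨ Nonempty (K ≃* PGL2 F) := by
  classical
  have := Fintype.ofFinite F
  by_cases hsq : ∀ (a b c d : F) (h : a * d - b * c ≠ 0), mob a b c d h ∈ K →
      IsSquare (a * d - b * c)
  · left
    have hK : K = (Matrix.ProjectiveSpecialLinearGroup.toPGL : PSL2 F →* PGL2 F).range := by
      apply le_antisymm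
      · intro g hg
        obtain ⟨a, b, c, d, h, rfl⟩ := exists_mob g
        have h1 := hsq a b c d h hg
        exact mob_mem_of_isSquare (fun x => mob_mem_range _ (by ring))
          (fun x => mob_mem_range _ (by ring)) h h1
      · rintro _ ⟨g, rfl⟩
        obtain ⟨a, b, c, d, h, hg⟩ := exists_mob_eq_toPGL g
        rw [hg]
        exact mob_mem_of_det_eq_one hU hL _ h
    rw [hK]
    exact ⟨(MonoidHom.ofInjective Matrix.ProjectiveSpecialLinearGroup.toPGL_injective).symm⟩
  · right
    push Not at hsq
    obtain ⟨a, b, c, d, h, hK, hns⟩ := hsq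
    have hK : K = ⊤ := by
      refine (Subgroup.eq_top_iff' K).2 fun g => ?_
      obtain ⟨a', b', c', d', h', rfl⟩ := exists_mob g
      by_cases hs : IsSquare (a' * d' - b' * c')
      · exact mob_mem_of_isSquare hU hL h' hs
      · rw [← K.mul_mem_cancel_left hK, mob_mul]
        apply mob_mem_of_isSquare hU hL
        rw [show (a * a' + b * c') * (c * b' + d * d') - (a * b' + b * d') * (c * a' + d * c') =
          (a * d - b * c) * (a' * d' - b' * c') by ring]
        rw [← quadraticChar_one_iff_isSquare (mul_ne_zero h h'), map_mul,
          quadraticChar_neg_one_iff_not_isSquare.2 hns,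
          quadraticChar_neg_one_iff_not_isSquare.2 hs]
        norm_num
    rw [hK]
    exact ⟨Subgroup.topEquiv⟩

variable {k : Type*} [Field k]

/-- The map `PGL₂(F) → PGL₂(k)` induced by a homomorphism of fields. -/
def pglMap (i : F →+* k) : PGL2 F →* PGL2 k :=
  QuotientGroup.map _ _ (Matrix.GeneralLinearGroup.map i) (by
    rw [Matrix.GeneralLinearGroup.center_eq_range_scalar,
      Matrix.GeneralLinearGroup.center_eq_range_scalar]
    rintro _ ⟨u, rfl⟩
    refine ⟨Units.map i.toMonoidHom u, ?_⟩
    ext a b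
    fin_cases a <;> fin_cases b <;> simp)

lemma pglMap_mob (i : F →+* k) {a b c d : F} (h : a * d - b * c ≠ 0) :
    pglMap i (mob a b c d h) = mob (i a) (i b) (i c) (i d) (by
      rw [← map_mul, ← map_mul, ← map_sub]
      exact (map_ne_zero i).2 h) := by
  rw [mob, mob]
  refine congrArg QuotientGroup.mk ?_
  ext a b
  fin_cases a <;> fin_cases b <;> rfl

lemma pglMap_injective (i : F →+* k) : Function.Injective (pglMap i) := by
  rw [injective_iff_map_eq_one]
  intro g hg
  obtain ⟨a, b, c, d, h, rfl⟩ := exists_mob g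
  rw [pglMap_mob, ← mob_one, mob_eq_iff] at hg
  obtain ⟨u, h1, h2, h3, h4⟩ := hg
  have hb : b = 0 := by simpa using h2
  have hc : c = 0 := by simpa using h3
  have had : a = d := by
    apply i.injective
    exact mul_right_cancel₀ u.ne_zero (h1.trans h4.symm)
  subst hb hc had
  have ha : a ≠ 0 := by
    rintro rfl
    simp at h
  rw [← mob_one, mob_eq_iff]
  exact ⟨(Units.mk0 a ha)⁻¹, by simp [ha]⟩

end FiniteField

/-! ### The main solution of the class formula -/

section Modular

open MulAction OnePoint

variable {k : Type*} [Field k] [DecidableEq k]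

/-- The main solution of the class formula: the orbit of `∞` is the projective line over a finite
subfield, and `G` consists of transformations with coefficients in this subfield and contains the
images of its elementary matrices. -/
lemma modular_PSL_or_PGL {G : Subgroup (PGL2 k)} [Finite G] (h1 : (1 : k) ∈ trans G)
    (h0 : ((0 : k) : OnePoint k) ∈ orbit G (∞ : OnePoint k))
    (hO : Nat.card (orbit G (∞ : OnePoint k)) = 1 + Nat.card (trans G))
    (hm : Nat.card (trans G) - 1 ∣ 2 * Nat.card (lin G)) (F : Type) [Field F] [Fintype F]
    (hF : Fintype.card F = Nat.card (trans G)) :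
    Nonempty (G ≃* PSL2 F) ∨ Nonempty (G ≃* PGL2 F) := by
  obtain ⟨i, hi⟩ := exists_field_hom h1 hm F hF
  have hmem : ∀ z ∈ trans G, (z : OnePoint k) ∈ orbit G (∞ : OnePoint k) := by
    intro z hz
    obtain ⟨g, hg⟩ := h0
    refine ⟨⟨aff 1 z, mem_trans.1 hz⟩ * g, ?_⟩
    refine (mul_smul (aff 1 z) (g : PGL2 k) (∞ : OnePoint k)).trans ?_
    change (g : PGL2 k) • (∞ : OnePoint k) = ((0 : k) : OnePoint k) at hg
    rw [hg, aff_smul_coe]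
    simp
  -- the finite points of the orbit of `∞` are the vectors of the translations
  have hfin : ∀ z : k, (z : OnePoint k) ∈ orbit G (∞ : OnePoint k) → z ∈ trans G := by
    let f : Option (trans G) → orbit G (∞ : OnePoint k) := fun o =>
      o.elim ⟨∞, mem_orbit_self _⟩ (fun z => ⟨((z : k) : OnePoint k), hmem z.1 z.2⟩)
    have hf : Function.Injective f := by
      rintro (_ | a) (_ | b) h
      · rfl
      · exact absurd (congrArg Subtype.val h) (OnePoint.infty_ne_coe _)
      · exact absurd (congrArg Subtype.val h) (OnePoint.coe_ne_infty _)
      · exact congrArg Option.some (Subtype.ext (OnePoint.coe_injective (congrArg Subtype.val h)))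
    have hOfin : Finite (orbit G (∞ : OnePoint k)) := Set.finite_range _
    have hbij : Function.Bijective f := by
      rw [Nat.bijective_iff_injective_and_card]
      refine ⟨hf, ?_⟩
      rw [hO, Finite.card_option, add_comm]
    intro z hz
    obtain ⟨o, ho⟩ := hbij.2 ⟨z, hz⟩
    rcases o with _ | a
    · exact absurd (congrArg Subtype.val ho) (OnePoint.infty_ne_coe _)
    · have := OnePoint.coe_injective (congrArg Subtype.val ho)
      exact this ▸ a.2
  have horb : ∀ g ∈ G, ∀ z ∈ orbit G (∞ : OnePoint k), g • z ∈ orbit G (∞ : OnePoint k) := by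
    rintro g hg _ ⟨h, rfl⟩
    exact ⟨⟨g, hg⟩ * h, mul_smul _ _ _⟩
  have hinf : (∞ : OnePoint k) ∈ orbit G (∞ : OnePoint k) := mem_orbit_self _
  -- an element of `G` which exchanges `0` and `∞`
  obtain ⟨γ, hγ, hw⟩ : ∃ (γ : F) (hγ : i γ ≠ 0), mob 0 (i γ) 1 0 (by simpa using hγ) ∈ G := by
    obtain ⟨⟨g, hg⟩, hg0⟩ := h0
    change g • (∞ : OnePoint k) = ((0 : k) : OnePoint k) at hg0
    obtain ⟨b, hb⟩ : ∃ b : k, g⁻¹ • (∞ : OnePoint k) = b := by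
      refine ne_infty_iff.1 fun h => ?_
      rw [inv_smul_eq_iff, hg0] at h
      exact OnePoint.infty_ne_coe _ h
    have hbG : b ∈ trans G := hfin b (hb ▸ horb _ (G.inv_mem hg) _ hinf)
    have hw : g * aff 1 b ∈ G := G.mul_mem hg (mem_trans.1 hbG)
    have hw1 : (g * aff 1 b) • (∞ : OnePoint k) = ((0 : k) : OnePoint k) := by
      rw [mul_smul, aff_smul_infty, hg0]
    have hw2 : (g * aff 1 b) • ((0 : k) : OnePoint k) = ∞ := by
      rw [mul_smul, aff_smul_coe, mul_zero, zero_add, ← hb, smul_inv_smul]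
    obtain ⟨a', b', c', d', h, he⟩ := exists_mob (g * aff 1 b)
    rw [he] at hw hw1 hw2
    rw [mob_smul_infty] at hw1
    rw [mob_smul_coe] at hw2
    have hc' : c' ≠ 0 := by
      rintro rfl
      simp at hw1
    have ha' : a' = 0 := by
      rw [if_neg hc', OnePoint.coe_eq_coe, div_eq_zero_iff] at hw1
      exact hw1.resolve_right hc'
    have hd' : d' = 0 := by
      by_contra hd
      rw [if_neg (by simpa using hd)] at hw2
      exact OnePoint.coe_ne_infty _ hw2
    subst ha' hd'
    have hb' : b' ≠ 0 := by
      rintro rfl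
      simp at h
    have he2 : mob 0 b' c' 0 h = mob 0 (b' / c') 1 0 (by simp [hb', hc']) := by
      rw [mob_eq_iff]
      refine ⟨(Units.mk0 c' hc')⁻¹, by simp, ?_, ?_, by simp⟩
      · simp [div_eq_mul_inv]
      · simp [hc']
    rw [he2] at hw
    have h2 := horb _ hw _ (hmem 1 h1)
    rw [mob_smul_coe, if_neg (by simp)] at h2
    obtain ⟨γ, hγ⟩ := (hi _).1 (hfin _ h2)
    have hγ' : i γ = b' / c' := by rw [hγ]; simp
    exact ⟨γ, by rw [hγ']; exact div_ne_zero hb' hc', by simpa only [hγ'] using hw⟩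
  have hγF : γ ≠ 0 := fun h => hγ (by rw [h, map_zero])
  have hwF : pglMap i (mob 0 γ 1 0 (by simpa using hγF)) = mob 0 (i γ) 1 0 (by simpa using hγ) := by
    rw [pglMap_mob, mob_eq_iff]
    exact ⟨1, by simp⟩
  have hUF : ∀ x : F, pglMap i (mob 1 x 0 1 (by simp)) = aff 1 (i x) := by
    intro x
    rw [pglMap_mob, aff, mob_eq_iff]
    exact ⟨1, by simp⟩
  -- elements fixing `∞` are defined over `F`
  have haff : ∀ g ∈ G, g • (∞ : OnePoint k) = ∞ → g ∈ (pglMap i).range := by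
    intro g hg hgi
    obtain ⟨a, b, rfl⟩ := exists_aff hgi
    obtain ⟨α, hα⟩ := (hi _).1 (coe_mem_trans h1 (mem_lin.2 ⟨b, hg⟩))
    obtain ⟨β, hβ⟩ := (hi b).1 (hfin b (by
      have := horb _ hg _ (hmem 0 (trans G).zero_mem)
      rwa [aff_smul_coe, mul_zero, zero_add] at this))
    have hα0 : α ≠ 0 := by
      rintro rfl
      rw [map_zero] at hα
      exact a.ne_zero hα.symm
    refine ⟨mob α β 0 1 (by simpa using hα0), ?_⟩
    rw [pglMap_mob, aff, mob_eq_iff]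
    exact ⟨1, by simp [hα, hβ]⟩
  have hrange : G ≤ (pglMap i).range := by
    intro g hg
    by_cases hgi : g • (∞ : OnePoint k) = ∞
    · exact haff g hg hgi
    · obtain ⟨b, hb⟩ := ne_infty_iff.1 hgi
      have hbG : b ∈ trans G := hfin b (hb ▸ horb _ hg _ hinf)
      obtain ⟨β, rfl⟩ := (hi b).1 hbG
      have hUG := mem_trans.1 hbG
      have h2 := haff _ (G.mul_mem hw (G.mul_mem (G.inv_mem hUG) hg)) (by
        rw [mul_smul, mul_smul, hb, aff_inv, aff_smul_coe, mob_smul_coe, if_pos (by simp)])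
      rw [← hwF, ← hUF] at h2
      have h3 := (Subgroup.mul_mem_cancel_left (pglMap i).range (MonoidHom.mem_range.2 ⟨_, rfl⟩)).1 h2
      exact (Subgroup.mul_mem_cancel_left (pglMap i).range
        ((pglMap i).range.inv_mem (MonoidHom.mem_range.2 ⟨_, rfl⟩))).1 h3
  set K := G.comap (pglMap i) with hK
  have hKG : K.map (pglMap i) = G := by
    rw [hK, Subgroup.map_comap_eq, inf_eq_right.2 hrange]
  have hU : ∀ x : F, mob 1 x 0 1 (by simp) ∈ K := by
    intro x
    rw [hK, Subgroup.mem_comap, hUF]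
    exact mem_trans.1 ((hi _).2 ⟨x, rfl⟩)
  have hL : ∀ x : F, mob 1 0 x 1 (by simp) ∈ K := by
    intro x
    have hwK : mob 0 γ 1 0 (by simpa using hγF) ∈ K := by
      rw [hK, Subgroup.mem_comap, hwF]
      exact hw
    -- conjugation by `z ↦ γ / z` exchanges the two types of elementary matrices
    have h2 := K.mul_mem (K.mul_mem hwK (hU (γ * x))) hwK
    rw [mob_mul, mob_mul] at h2
    refine (?_ : mob 1 0 x 1 _ = _) ▸ h2
    rw [mob_eq_iff]
    refine ⟨Units.mk0 γ hγF, ?_, ?_, ?_, ?_⟩ <;> simp [mul_comm]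
  let e : K ≃* G := (K.equivMapOfInjective _ (pglMap_injective i)).trans
    (MulEquiv.subgroupCongr hKG)
  exact (iso_PSL_or_PGL hU hL).imp (fun ⟨f⟩ => ⟨e.symm.trans f⟩) (fun ⟨f⟩ => ⟨e.symm.trans f⟩)

end Modular

end Dickson

/-! ### The two halves of the classification -/

namespace Dickson

section Main

open MulAction OnePoint

variable {k : Type*} [Field k] [DecidableEq k] [IsAlgClosed k] [NeZero (2 : k)]

/-- The groups of order divisible by `p` without a common fixed point, in coordinates in which `G`
contains `z ↦ z + 1` and an element that sends `∞` to `0`. -/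
lemma dickson_normalized (p : ℕ) [hpF : Fact p.Prime] [CharP k p] (hp : p ≠ 2)
    {G : Subgroup (PGL2 k)} [Finite G] (h1 : (1 : k) ∈ trans G)
    (h0 : ((0 : k) : OnePoint k) ∈ orbit G (∞ : OnePoint k)) :
    (p = 3 ∧ Nonempty (G ≃* alternatingGroup (Fin 5))) ∨
      (∃ s : ℕ, 1 ≤ s ∧
        ∀ (F : Type) [Field F] [Fintype F], Fintype.card F = p ^ s →
          (Nonempty (G ≃* PSL2 F) ∨ Nonempty (G ≃* PGL2 F))) := by
  obtain ⟨s, hs, hs'⟩ := card_trans p h1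
  obtain ⟨n, hn⟩ := card_orbit_infty (G := G)
  have hn0 : 1 ≤ n := by
    by_contra h
    obtain rfl : n = 0 := by omega
    have hOfin : Finite (orbit G (∞ : OnePoint k)) := Set.finite_range _
    have := (Nat.card_eq_one_iff_unique.1 (hn.trans (by simp))).1
    exact OnePoint.infty_ne_coe _
      (congrArg Subtype.val (Subsingleton.elim
        (⟨∞, mem_orbit_self _⟩ : orbit G (∞ : OnePoint k)) ⟨_, h0⟩))
  have hodd : Odd (Nat.card (trans G)) := by
    rw [hs']
    exact (hpF.out.odd_of_ne_two hp).pow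
  have hq : 3 ≤ Nat.card (trans G) := by
    have h2 : 1 < Nat.card (trans G) := by
      rw [hs']
      exact Nat.one_lt_pow (by omega) hpF.out.one_lt
    have : Nat.card (trans G) ≠ 2 := by
      intro h
      rw [h] at hodd
      exact absurd hodd (by decide)
    omega
  obtain ⟨e, he, he'⟩ := class_formula p hp h1 hn hn0
  rcases modular_numerics hq hodd Nat.card_pos (card_lin_lt h1) hn0 he with
    ⟨rfl, hm⟩ | ⟨hq3, rfl, hm, rfl⟩
  · rw [one_mul] at hn
    exact Or.inr ⟨s, hs, fun F _ _ hF => modular_PSL_or_PGL h1 h0 hn hm F (hF.trans hs'.symm)⟩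
  · exact Or.inl (modular_A5 p hp h1 hn hq3 hm he')

/-- The second half of the classification: the characteristic divides the order of the group. -/
theorem dickson_modular (p : ℕ) [hpF : Fact p.Prime] [CharP k p] (hp : p ≠ 2)
    (G : Subgroup (PGL2 k)) [Finite G] (hG : p ∣ Nat.card G) :
    (∃ Q C : Subgroup G, Q.Normal ∧ (∃ P : Sylow p G, (P : Subgroup G) = Q) ∧
        (∀ x ∈ Q, x ^ p = 1) ∧ (∀ x ∈ Q, ∀ y ∈ Q, x * y = y * x) ∧
        IsCyclic C ∧ ¬ p ∣ Nat.card C ∧ Q ⊓ C = ⊥ ∧ Q ⊔ C = ⊤) ∨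
      (p = 3 ∧ Nonempty (G ≃* alternatingGroup (Fin 5))) ∨
      (∃ s : ℕ, 1 ≤ s ∧
        ∀ (F : Type) [Field F] [Fintype F], Fintype.card F = p ^ s →
          (Nonempty (G ≃* PSL2 F) ∨ Nonempty (G ≃* PGL2 F))) := by
  -- an element of order `p` has a unique fixed point
  obtain ⟨⟨u, huG⟩, hu⟩ := exists_prime_orderOf_dvd_card' p hG
  rw [← Subgroup.orderOf_coe] at hu
  change orderOf u = p at hu
  have hu1 : u ≠ 1 := by
    rintro rfl
    rw [orderOf_one] at hu
    exact hpF.out.one_lt.ne hu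
  obtain ⟨x, hx⟩ := exists_fixed u
  have hux : ∀ z : OnePoint k, u • z = z ↔ z = x := by
    rcases fixed_dichotomy hu1 hx with ⟨h, -⟩ | ⟨y, -, -, a, ha⟩
    · exact h
    · exfalso
      have h2 : (a : k) ^ p = 1 := by
        rw [← Units.val_pow_eq_pow_val, (ha p).1 (by rw [← hu, pow_orderOf_eq_one]), Units.val_one]
      have h3 : ((a : k) - 1) ^ p = 0 := by
        rw [sub_pow_char, h2, one_pow, sub_self]
      have h4 : a = 1 := Units.ext (sub_eq_zero.1 (pow_eq_zero_iff hpF.out.ne_zero |>.1 h3))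
      have := (ha 1).2 (by rw [h4, one_pow])
      exact hu1 (by rwa [pow_one] at this)
  by_cases hfix : ∀ g ∈ G, g • x = x
  · exact Or.inl (semidirect p G x hfix)
  right
  push Not at hfix
  obtain ⟨g, hg, hgx⟩ := hfix
  -- coordinates in which `u` is `z ↦ z + 1` and `g` sends `∞` to `0`
  obtain ⟨t, ht, ht0, ht1⟩ := exists_smul_triple (x := x) (y := g • x) (z := u • g • x) hgx.symm
    (fun h => hgx (by
      have := hx.trans h
      exact (smul_left_cancel u this).symm))
    (fun h => hgx ((hux _).1 h.symm))
  set G' : Subgroup (PGL2 k) := G.map (MulAut.conj t⁻¹).toMonoidHom with hG'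
  have hmem : ∀ v ∈ G, t⁻¹ * v * t ∈ G' := by
    intro v hv
    exact ⟨v, hv, by simp⟩
  let e : G ≃* G' := G.equivMapOfInjective _ (MulAut.conj t⁻¹).injective
  have hfin : Finite G' := Finite.of_equiv G e.toEquiv
  have h1 : (1 : k) ∈ trans G' := by
    obtain ⟨b, hb0, hb⟩ := exists_eq_aff_one (g := t⁻¹ * u * t) (by
      intro z
      rw [conj_smul_iff, hux, ← ht]
      exact ⟨fun h => smul_left_cancel t h, fun h => by rw [h]⟩)
    have h2 : (t⁻¹ * u * t) • ((0 : k) : OnePoint k) = ((1 : k) : OnePoint k) := by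
      rw [mul_smul, mul_smul, ht0, inv_smul_eq_iff, ht1]
    rw [hb, aff_smul_coe, OnePoint.coe_eq_coe, mul_zero, zero_add] at h2
    subst h2
    rw [mem_trans, ← hb]
    exact hmem u huG
  have h0 : ((0 : k) : OnePoint k) ∈ orbit G' (∞ : OnePoint k) := by
    refine ⟨⟨t⁻¹ * g * t, hmem g hg⟩, ?_⟩
    change (t⁻¹ * g * t) • (∞ : OnePoint k) = _
    rw [mul_smul, mul_smul, ht, inv_smul_eq_iff, ht0]
  rcases dickson_normalized p hp h1 h0 with ⟨hp3, ⟨f⟩⟩ | ⟨s, hs, h⟩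
  · exact Or.inl ⟨hp3, ⟨e.trans f⟩⟩
  · exact Or.inr ⟨s, hs, fun F _ _ hF =>
      (h F hF).imp (fun ⟨f⟩ => ⟨e.trans f⟩) (fun ⟨f⟩ => ⟨e.trans f⟩)⟩

end Main

end Dickson

/-- Dickson's classification of finite subgroups of `PGL₂(k)`, `k` algebraically closed of
characteristic `p ≠ 2`. -/
theorem dickson_classification
    {k : Type*} [Field k] [IsAlgClosed k] (p : ℕ) [CharP k p] (hp : p ≠ 2)
    (G : Subgroup (PGL2 k)) [Finite G] :
    (¬ p ∣ Nat.card G →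
      (IsCyclic G ∨ (∃ n : ℕ, Nonempty (G ≃* DihedralGroup n)) ∨
        Nonempty (G ≃* Equiv.Perm (Fin 4)) ∨
        Nonempty (G ≃* alternatingGroup (Fin 4)) ∨
        Nonempty (G ≃* alternatingGroup (Fin 5)))) ∧
    (0 < p → p ∣ Nat.card G →
      ((∃ Q C : Subgroup G, Q.Normal ∧ (∃ P : Sylow p G, (P : Subgroup G) = Q) ∧
          (∀ x ∈ Q, x ^ p = 1) ∧ (∀ x ∈ Q, ∀ y ∈ Q, x * y = y * x) ∧
          IsCyclic C ∧ ¬ p ∣ Nat.card C ∧ Q ⊓ C = ⊥ ∧ Q ⊔ C = ⊤) ∨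
        (p = 3 ∧ Nonempty (G ≃* alternatingGroup (Fin 5))) ∨
        (∃ s : ℕ, 1 ≤ s ∧
          ∀ (F : Type) [Field F] [Fintype F], Fintype.card F = p ^ s →
            (Nonempty (G ≃* PSL2 F) ∨ Nonempty (G ≃* PGL2 F))))) := by
  classical
  refine ⟨Dickson.dickson_prime_to_char p hp G, fun hp0 hG => ?_⟩
  have : Fact p.Prime :=
    ⟨(CharP.char_is_prime_or_zero k p).resolve_right hp0.ne'⟩
  have : NeZero (2 : k) := ⟨Ring.two_ne_zero (by rwa [ringChar.eq k p])⟩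
  exact Dickson.dickson_modular p hp G hG
end

section
/- Let k be an algebraically closed field of characteristic p ≠ 2 and let A be an element of PGL₂(k) of finite order n > 1. Then either n is coprime to p, or p > 0 and n = p. -/
lemma PGL2.mk_pow_eq_one_iff {k : Type*} [Field k] (g : GL (Fin 2) k) (j : ℕ) :
    ((g : PGL2 k)) ^ j = 1 ↔
      ∃ c : k, (g : Matrix (Fin 2) (Fin 2) k) ^ j = c • (1 : Matrix (Fin 2) (Fin 2) k) := by
  rw [← QuotientGroup.mk_pow, QuotientGroup.eq_one_iff,
    Matrix.GeneralLinearGroup.mem_center_iff_val_mem_range_scalar]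
  simp only [Set.mem_range, Units.val_pow_eq_pow_val, Matrix.scalar_apply,
    ← Matrix.smul_one_eq_diagonal]
  exact exists_congr fun c => eq_comm

/-- Over an algebraically closed field every `2 × 2` matrix is a scalar plus a singular matrix `T`,
and a singular `T` satisfies `T ^ 2 = (tr T) • T`. -/
lemma exists_eq_smul_one_add {k : Type*} [Field k] [IsAlgClosed k]
    (M : Matrix (Fin 2) (Fin 2) k) :
    ∃ (l s : k) (T : Matrix (Fin 2) (Fin 2) k),
      M = l • (1 : Matrix (Fin 2) (Fin 2) k) + T ∧ T ^ 2 = s • T := by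
  obtain ⟨l, hl⟩ := IsAlgClosed.exists_root M.charpoly (by
    rw [Matrix.charpoly_degree_eq_dim]; simp)
  have hdet : (M 0 0 - l) * (M 1 1 - l) - M 0 1 * M 1 0 = 0 := by
    rw [Polynomial.IsRoot, Matrix.eval_charpoly, Matrix.det_fin_two] at hl
    simp at hl
    linear_combination hl
  refine ⟨l, M 0 0 + M 1 1 - 2 * l, M - l • 1, by abel, ?_⟩
  ext i j
  fin_cases i <;> fin_cases j <;> simp [pow_two, Matrix.mul_apply, Fin.sum_univ_two]
  · linear_combination -hdet
  · ring
  · ring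
  · linear_combination -hdet

/-- The powers of `l + T` when `T ^ 2 = s • T`: if `s ≠ 0`, then `T = s • E` with `E` idempotent, so
`(l + T) ^ j = l ^ j + ((l + s) ^ j - l ^ j) • E`; this is that identity multiplied by `s`. -/
lemma smul_pow_of_sq_eq_smul {k : Type*} [Field k] {l s : k} {T : Matrix (Fin 2) (Fin 2) k}
    (hT : T ^ 2 = s • T) (j : ℕ) :
    s • (l • (1 : Matrix (Fin 2) (Fin 2) k) + T) ^ j =
      (s * l ^ j) • (1 : Matrix (Fin 2) (Fin 2) k) + ((l + s) ^ j - l ^ j) • T := by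
  induction j with
  | zero => simp
  | succ j ih =>
    rw [pow_succ, ← smul_mul_assoc, ih]
    simp only [add_mul, mul_add, smul_mul_assoc, mul_smul_comm, one_mul, mul_one, ← pow_two, hT]
    module

/-- When `s ≠ 0`, a factor `p` can be dropped from an exponent giving a scalar power: by injectivity
of Frobenius, `(l + s) ^ (m * p) = l ^ (m * p)` implies `(l + s) ^ m = l ^ m`. -/
lemma pow_scalar_of_pow_mul_char_scalar {k : Type*} [Field k] (p : ℕ) [Fact p.Prime] [CharP k p]
    {l s c : k} {T : Matrix (Fin 2) (Fin 2) k} (hT : T ^ 2 = s • T) (hs : s ≠ 0) (m : ℕ)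
    (hc : (l • (1 : Matrix (Fin 2) (Fin 2) k) + T) ^ (m * p) =
      c • (1 : Matrix (Fin 2) (Fin 2) k)) :
    ∃ d : k, (l • (1 : Matrix (Fin 2) (Fin 2) k) + T) ^ m =
      d • (1 : Matrix (Fin 2) (Fin 2) k) := by
  have hmp := smul_pow_of_sq_eq_smul (l := l) hT (m * p)
  have hm := smul_pow_of_sq_eq_smul (l := l) hT m
  rw [hc] at hmp
  by_cases h : (l + s) ^ (m * p) - l ^ (m * p) = 0
  · have h' : (l + s) ^ m - l ^ m = 0 := by
      rw [pow_mul, pow_mul, ← sub_pow_char] at h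
      exact pow_eq_zero_iff (Fact.out : p.Prime).ne_zero |>.1 h
    rw [h', zero_smul, add_zero, mul_smul] at hm
    exact ⟨l ^ m, smul_right_injective _ hs hm⟩
  · -- A nonzero coefficient of `T` makes `T`, and hence every power of `l + T`, scalar.
    obtain ⟨t, rfl⟩ : ∃ t : k, T = t • (1 : Matrix (Fin 2) (Fin 2) k) := by
      refine ⟨((l + s) ^ (m * p) - l ^ (m * p))⁻¹ * (s * c - s * l ^ (m * p)), ?_⟩
      rw [mul_smul, sub_smul, mul_smul s c, hmp, add_sub_cancel_left, inv_smul_smul₀ h]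
    exact ⟨(l + t) ^ m, by rw [← add_smul, smul_pow, one_pow]⟩

/-- If `A ∈ PGL₂(k)` has finite order `n > 1` (`k` algebraically closed of characteristic
`p ≠ 2`), then either `n` is coprime to `p` (i.e. `p ∤ n`, automatic when `p = 0`),
or `p > 0` and `n = p`. -/
theorem order_in_PGL2_coprime_or_eq_char
    {k : Type*} [Field k] [IsAlgClosed k] (p : ℕ) [CharP k p] (hp : p ≠ 2)
    (A : PGL2 k) (n : ℕ) (hn : 1 < n) (hA : orderOf A = n) :
    ¬ p ∣ n ∨ (0 < p ∧ n = p) := by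
  refine or_iff_not_imp_left.2 fun hdvd => ?_
  obtain ⟨m, rfl⟩ := not_not.1 hdvd
  have hprime : p.Prime := (CharP.char_is_prime_or_zero k p).resolve_right (by rintro rfl; simp at hn)
  have : Fact p.Prime := ⟨hprime⟩
  refine ⟨hprime.pos, ?_⟩
  obtain ⟨g, rfl⟩ := QuotientGroup.mk_surjective A
  obtain ⟨l, s, T, hM, hT⟩ := exists_eq_smul_one_add (g : Matrix (Fin 2) (Fin 2) k)
  by_cases hs : s = 0
  · have hTp : T ^ p = 0 := pow_eq_zero_of_le hprime.two_le (by rw [hT, hs, zero_smul])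
    have hpow : (g : PGL2 k) ^ p = 1 := by
      refine (PGL2.mk_pow_eq_one_iff g p).2 ⟨l ^ p, ?_⟩
      rw [hM, add_pow_char_of_commute _ ((Commute.one_left T).smul_left l), hTp, smul_pow, one_pow,
        add_zero]
    exact Nat.dvd_antisymm (hA ▸ orderOf_dvd_of_pow_eq_one hpow) (dvd_mul_right p m)
  · exfalso
    obtain ⟨c, hc⟩ := (PGL2.mk_pow_eq_one_iff g (m * p)).1 (by
      rw [mul_comm, ← hA, pow_orderOf_eq_one])
    rw [hM] at hc
    have hm := (PGL2.mk_pow_eq_one_iff g m).2 (by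
      rw [hM]; exact pow_scalar_of_pow_mul_char_scalar p hT hs m hc)
    have hmpos : 0 < m := Nat.pos_of_ne_zero (by rintro rfl; simp at hn)
    have hle : p * m ≤ m := hA ▸ orderOf_le_of_pow_eq_one hmpos hm
    nlinarith [hprime.two_le]
end

section
/- Let k be an algebraically closed field of characteristic p ≠ 2 and let A ∈ GL₂(k) have nonscalar image in PGL₂(k). Then: the image of A has order 2 if and only if tr(A) = 0; if p ≠ 3, the image of A has order 3 if and only if tr(A)² = det(A); the image of A has order 4 if and only if tr(A)² = 2·det(A); if p ≠ 3, the image of A has order 6 if and only if tr(A)² = 3·det(A); and if p > 0, the image of A has order p if and only if tr(A)² = 4·det(A). -/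
section

variable {k : Type*} [Field k]

theorem smul_add_smul_one_mem_range_scalar_iff {M : Matrix (Fin 2) (Fin 2) k}
    (hM : M ∉ Set.range (Matrix.scalar (Fin 2))) (c e : k) :
    c • M + e • 1 ∈ Set.range (Matrix.scalar (Fin 2)) ↔ c = 0 := by
  constructor
  · rintro ⟨a, ha⟩
    by_contra hc
    refine hM ⟨c⁻¹ * (a - e), ?_⟩
    have h : c • M = (a - e) • (1 : Matrix (Fin 2) (Fin 2) k) := by
      rw [sub_smul, eq_sub_iff_add_eq, ← ha, Matrix.smul_one_eq_diagonal]
      rfl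
    rw [Matrix.scalar_apply, ← Matrix.smul_one_eq_diagonal, mul_smul, ← h, smul_smul,
      inv_mul_cancel₀ hc, one_smul]
  · rintro rfl
    exact ⟨e, by rw [zero_smul, zero_add, Matrix.smul_one_eq_diagonal]; rfl⟩

theorem PGL2.mk_pow_eq_one_iff_s4 {A : GL (Fin 2) k} (hA : (QuotientGroup.mk A : PGL2 k) ≠ 1)
    {n : ℕ} {c e : k} (h : A.val ^ n = c • A.val + e • 1) :
    (QuotientGroup.mk A : PGL2 k) ^ n = 1 ↔ c = 0 := by
  rw [Ne, QuotientGroup.eq_one_iff,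
    Matrix.GeneralLinearGroup.mem_center_iff_val_mem_range_scalar] at hA
  rw [← QuotientGroup.mk_pow, QuotientGroup.eq_one_iff,
    Matrix.GeneralLinearGroup.mem_center_iff_val_mem_range_scalar, Units.val_pow_eq_pow_val, h,
    smul_add_smul_one_mem_range_scalar_iff hA]

theorem Matrix.sq_eq_trace_smul_sub_det (M : Matrix (Fin 2) (Fin 2) k) :
    M ^ 2 = M.trace • M + (-M.det) • 1 := by
  ext i j
  fin_cases i <;> fin_cases j <;>
    simp [pow_two, Matrix.mul_apply, Matrix.trace_fin_two, Matrix.det_fin_two] <;> ring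

theorem Matrix.pow_succ_eq_of_pow_eq {M : Matrix (Fin 2) (Fin 2) k} {n : ℕ} {c e : k}
    (h : M ^ n = c • M + e • 1) :
    M ^ (n + 1) = (c * M.trace + e) • M + (-(c * M.det)) • 1 := by
  rw [pow_succ, h, add_mul, smul_mul_assoc, ← pow_two, M.sq_eq_trace_smul_sub_det,
    smul_mul_assoc, one_mul]
  module

/-- The Frobenius computation of `M ^ p` in odd characteristic `p = 2 * m + 1`: the coefficient
of `M` vanishes exactly when the discriminant of the characteristic polynomial does. -/
theorem Matrix.pow_char_eq (m : ℕ) [Fact (2 * m + 1).Prime] [CharP k (2 * m + 1)]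
    (h2 : (2 : k) ≠ 0) (M : Matrix (Fin 2) (Fin 2) k) :
    ∃ e : k, M ^ (2 * m + 1) =
      ((2 ^ (2 * m + 1))⁻¹ * ((M.trace ^ 2 - 4 * M.det) ^ m * 2)) • M + e • 1 := by
  set t := M.trace with ht
  set D := t ^ 2 - 4 * M.det with hD
  have hB : ((2 : k) • M - t • 1) ^ 2 = D • (1 : Matrix (Fin 2) (Fin 2) k) := by
    have h := M.sq_eq_trace_smul_sub_det
    rw [pow_two] at h
    rw [pow_two, sub_mul, mul_sub, mul_sub]
    simp only [smul_mul_assoc, mul_smul_comm, one_mul, mul_one, h, hD, ← ht]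
    module
  have hl : ((2 : k) • M - t • 1) ^ (2 * m + 1) =
      (2 : k) ^ (2 * m + 1) • M ^ (2 * m + 1) - t ^ (2 * m + 1) • 1 := by
    rw [sub_pow_char_of_commute (2 * m + 1) (((Commute.one_right M).smul_right t).smul_left 2),
      smul_pow, smul_pow, one_pow]
  have hr : ((2 : k) • M - t • 1) ^ (2 * m + 1) = D ^ m • ((2 : k) • M - t • 1) := by
    rw [pow_succ, pow_mul, hB, smul_pow, one_pow, smul_mul_assoc, one_mul]
  have h2p : (2 : k) ^ (2 * m + 1) ≠ 0 := pow_ne_zero _ h2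
  refine ⟨(2 ^ (2 * m + 1))⁻¹ * (t ^ (2 * m + 1) - D ^ m * t), ?_⟩
  have h : (2 : k) ^ (2 * m + 1) • M ^ (2 * m + 1) =
      (D ^ m * 2) • M + (t ^ (2 * m + 1) - D ^ m * t) • 1 := by
    rw [← sub_add_cancel ((2 : k) ^ (2 * m + 1) • M ^ (2 * m + 1))
      (t ^ (2 * m + 1) • (1 : Matrix (Fin 2) (Fin 2) k)), ← hl, hr]
    module
  rw [mul_smul, mul_smul _ _ (1 : Matrix (Fin 2) (Fin 2) k), ← smul_add, ← h, smul_smul,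
    inv_mul_cancel₀ h2p, one_smul]

end

/-- For `k` algebraically closed of characteristic `p ≠ 2` and `A ∈ GL₂(k)` with nonscalar
image in `PGL₂(k)`: the image of `A` has order `2` (resp. `3` if `p ≠ 3`, `4`, `6` if
`p ≠ 3`, `p` if `p > 0`) iff `tr(A)² = i·det(A)` for `i = 0` (resp. `1`, `2`, `3`, `4`). -/
theorem orderOf_small_iff_trace_sq_eq
    {k : Type*} [Field k] [IsAlgClosed k] (p : ℕ) [CharP k p] (hp : p ≠ 2)
    (A : GL (Fin 2) k) (hA : (QuotientGroup.mk A : PGL2 k) ≠ 1) :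
    (orderOf (QuotientGroup.mk A : PGL2 k) = 2 ↔ A.val.trace = 0) ∧
    (p ≠ 3 → (orderOf (QuotientGroup.mk A : PGL2 k) = 3 ↔ A.val.trace ^ 2 = A.val.det)) ∧
    (orderOf (QuotientGroup.mk A : PGL2 k) = 4 ↔ A.val.trace ^ 2 = 2 * A.val.det) ∧
    (p ≠ 3 → (orderOf (QuotientGroup.mk A : PGL2 k) = 6 ↔ A.val.trace ^ 2 = 3 * A.val.det)) ∧
    (0 < p → (orderOf (QuotientGroup.mk A : PGL2 k) = p ↔ A.val.trace ^ 2 = 4 * A.val.det)) := by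
  have hprime : ∀ q : ℕ, q.Prime → (orderOf (QuotientGroup.mk A : PGL2 k) = q ↔
      (QuotientGroup.mk A : PGL2 k) ^ q = 1) := fun q hq =>
    ⟨fun h => h ▸ pow_orderOf_eq_one _, fun h => haveI := Fact.mk hq; orderOf_eq_prime h hA⟩
  have hchar : ∀ q : ℕ, q.Prime → p ≠ q → (q : k) ≠ 0 := fun q hq hpq h => by
    rcases (Nat.dvd_prime hq).1 ((CharP.cast_eq_zero_iff k p q).1 h) with h1 | h1
    · exact CharP.char_ne_one k p h1
    · exact hpq h1
  have h2 : (2 : k) ≠ 0 := by exact_mod_cast hchar 2 Nat.prime_two hp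
  have hd : A.val.det ≠ 0 := (Matrix.isUnit_iff_isUnit_det _ |>.1 A.isUnit).ne_zero
  have e2 := A.val.sq_eq_trace_smul_sub_det
  have e3 := Matrix.pow_succ_eq_of_pow_eq e2
  have e4 := Matrix.pow_succ_eq_of_pow_eq e3
  have e5 := Matrix.pow_succ_eq_of_pow_eq e4
  have e6 := Matrix.pow_succ_eq_of_pow_eq e5
  have o2 := PGL2.mk_pow_eq_one_iff_s4 hA e2
  have o3 := PGL2.mk_pow_eq_one_iff_s4 hA e3
  have o4 := PGL2.mk_pow_eq_one_iff_s4 hA e4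
  have o6 := PGL2.mk_pow_eq_one_iff_s4 hA e6
  norm_num only at o3 o4 o6
  have op : 0 < p → p.Prime ∧ ((QuotientGroup.mk A : PGL2 k) ^ p = 1 ↔
      A.val.trace ^ 2 = 4 * A.val.det) := fun hp0 => by
    have hpp : p.Prime := (CharP.char_is_prime_or_zero k p).resolve_right hp0.ne'
    obtain ⟨m, rfl⟩ := hpp.odd_of_ne_two hp
    have := Fact.mk hpp
    obtain ⟨e, he⟩ := Matrix.pow_char_eq m h2 A.val
    have hm : m ≠ 0 := by rintro rfl; exact hpp.ne_one rfl
    refine ⟨hpp, ?_⟩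
    rw [PGL2.mk_pow_eq_one_iff_s4 hA he]
    simp [h2, hm, sub_eq_zero]
  clear e2 e3 e4 e5 e6
  generalize A.val.trace = t at *
  generalize A.val.det = d at *
  generalize (QuotientGroup.mk A : PGL2 k) = x at *
  refine ⟨?_, fun _ => ?_, ?_, fun h3 => ?_, fun hp0 => ?_⟩
  · rw [hprime 2 Nat.prime_two, o2]
  · rw [hprime 3 Nat.prime_three, o3]
    constructor <;> intro h <;> linear_combination h
  · constructor
    · intro h
      have ht : t ≠ 0 := fun ht => pow_ne_one_of_lt_orderOf (x := x) two_ne_zero (by omega)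
        (o2.2 ht)
      have := o4.1 (h ▸ pow_orderOf_eq_one x)
      exact mul_left_cancel₀ ht (by linear_combination this)
    · intro h
      refine orderOf_eq_prime_pow (p := 2) (n := 1) ?_ (o4.2 (by linear_combination t * h))
      rw [pow_one, o2]
      rintro rfl
      exact mul_ne_zero h2 hd (by linear_combination -h)
  · have h3' : (3 : k) ≠ 0 := by exact_mod_cast hchar 3 Nat.prime_three h3
    constructor
    · intro h
      have ht : t ≠ 0 := fun ht => pow_ne_one_of_lt_orderOf (x := x) two_ne_zero (by omega)
        (o2.2 ht)
      have ht3 : t ^ 2 - d ≠ 0 := fun ht => pow_ne_one_of_lt_orderOf (x := x) three_ne_zero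
        (by omega) (o3.2 (by linear_combination ht))
      have := o6.1 (h ▸ pow_orderOf_eq_one x)
      exact mul_left_cancel₀ (mul_ne_zero ht ht3) (by linear_combination this)
    · intro h
      have hx2 : x ^ 2 ≠ 1 := by
        rw [Ne, o2]
        rintro rfl
        exact mul_ne_zero h3' hd (by linear_combination -h)
      have hx3 : x ^ 3 ≠ 1 := by
        rw [Ne, o3]
        intro h'
        exact mul_ne_zero h2 hd (by linear_combination h' - h)
      have hx6 : x ^ 6 = 1 := o6.2 (by linear_combination t * (t ^ 2 - d) * h)
      -- The proper divisors of `6` all divide `2` or `3`.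
      have hdvd := orderOf_dvd_of_pow_eq_one hx6
      have hle := Nat.le_of_dvd (by norm_num) hdvd
      rw [Ne, ← orderOf_dvd_iff_pow_eq_one] at hx2 hx3
      generalize orderOf x = n at *
      interval_cases n <;> omega
  · rw [hprime p (op hp0).1, (op hp0).2]
end

section
/- Let n ≥ 3 be an integer and let ζ ∈ ℂ be a primitive n-th root of unity. Then the algebraic number (ζ + ζ⁻¹)/2 is integral over the ring ℤ[1/2], and its minimal polynomial over ℚ is 2^{−φ(n)/2} · ψ_n(2t), where ψ_n ∈ ℤ[t] is the unique monic polynomial of degree φ(n)/2 satisfying Φ_n(t) = t^{φ(n)/2} · ψ_n(t + t⁻¹). -/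
/-!
Evaluating the Laurent identity at `ζ` shows that `ψ (ζ + ζ⁻¹) = 0`, so that the monic polynomial
`2 ^ (-φ(n)/2) * ψ (2 t)` of degree `φ(n)/2` vanishes at `a = (ζ + ζ⁻¹)/2`. It is the minimal
polynomial because no monic `q` over `ℚ` of smaller degree vanishes at `a`: if `q` has degree `d`,
then `X ^ d * q ((X + X⁻¹)/2)` is a nonzero polynomial of degree at most `2 d` vanishing at `ζ`,
whose minimal polynomial `Φ_n` has degree `φ(n)`; thus `φ(n) ≤ 2 d`.
Integrality holds because `ζ` and `ζ⁻¹` are integral over `ℤ` and `1/2` lies in `ℤ[1/2]`.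
-/

open Polynomial in
/-- The polynomial `X ^ d * q ((X + X⁻¹)/2)`, where `d = q.natDegree`. -/
noncomputable def halfSumLift (q : ℚ[X]) : ℚ[X] :=
  ∑ i ∈ Finset.range (q.natDegree + 1),
    C (q.coeff i * (2⁻¹) ^ i) * (X ^ (q.natDegree - i) * (X ^ 2 + 1) ^ i)

open Polynomial in
theorem natDegree_halfSumLift_le (q : ℚ[X]) : (halfSumLift q).natDegree ≤ 2 * q.natDegree := by
  refine natDegree_sum_le_of_forall_le _ _ fun i hi => ?_
  have hi' : i ≤ q.natDegree := by simpa [Nat.lt_succ_iff] using hi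
  have h : (X ^ 2 + 1 : ℚ[X]).natDegree ≤ 2 := by compute_degree
  calc _ ≤ _ := natDegree_C_mul_le _ _
    _ ≤ _ := natDegree_mul_le
    _ ≤ (q.natDegree - i) + i * 2 :=
      add_le_add (natDegree_X_pow_le _) (natDegree_pow_le_of_le i h)
    _ ≤ _ := by omega

open Polynomial in
/-- The constant term of the lift is the leading coefficient of `q` over `2 ^ d`. -/
theorem eval_zero_halfSumLift (q : ℚ[X]) :
    (halfSumLift q).eval 0 = q.leadingCoeff * (2⁻¹) ^ q.natDegree := by
  rw [halfSumLift, eval_finsetSum, Finset.sum_eq_single q.natDegree]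
  · simp
  · intro i hi hne
    have hi' : i < q.natDegree + 1 := by simpa using hi
    have : q.natDegree - i ≠ 0 := by omega
    simp [this]
  · simp

open Polynomial in
theorem aeval_halfSumLift (q : ℚ[X]) {z : ℂ} (hz : z ≠ 0) :
    aeval z (halfSumLift q) = z ^ q.natDegree * aeval ((z + z⁻¹) / 2) q := by
  rw [aeval_eq_sum_range (p := q), halfSumLift, map_sum, Finset.mul_sum]
  refine Finset.sum_congr rfl fun i hi => ?_
  have hi' : i ≤ q.natDegree := by simpa [Nat.lt_succ_iff] using hi
  have hsq : z ^ 2 + 1 = z * (z + z⁻¹) := by field_simp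
  have hp : z ^ q.natDegree = z ^ (q.natDegree - i) * z ^ i := by
    rw [← pow_add, Nat.sub_add_cancel hi']
  simp only [map_mul, map_pow, map_add, map_one, aeval_X, aeval_C, Algebra.smul_def, hsq, hp,
    mul_pow, div_pow, map_inv₀, map_ofNat, inv_pow]
  ring

open Polynomial in
theorem totient_le_of_aeval_half_sum_eq_zero {n : ℕ} (hn : 0 < n) {ζ : ℂ}
    (hζ : IsPrimitiveRoot ζ n) {q : ℚ[X]} (hq : q.Monic)
    (h0 : aeval ((ζ + ζ⁻¹) / 2) q = 0) : n.totient ≤ 2 * q.natDegree := by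
  have hne : halfSumLift q ≠ 0 := by
    intro h
    have := eval_zero_halfSumLift q
    rw [h, eval_zero, hq.leadingCoeff, one_mul] at this
    exact pow_ne_zero _ (by norm_num) this.symm
  have hroot : aeval ζ (halfSumLift q) = 0 := by
    rw [aeval_halfSumLift q (hζ.ne_zero hn.ne'), h0, mul_zero]
  have hle := natDegree_le_of_dvd (minpoly.dvd ℚ ζ hroot) hne
  rw [← cyclotomic_eq_minpoly_rat hζ hn, natDegree_cyclotomic] at hle
  exact hle.trans (natDegree_halfSumLift_le q)

open Polynomial in
theorem aeval_sum_inv_eq_zero {n m : ℕ} (hn : 0 < n) {ζ : ℂ} (hζ : IsPrimitiveRoot ζ n)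
    {ψ : ℤ[X]} (hid : toLaurent (cyclotomic n ℤ) = LaurentPolynomial.T (m : ℤ) *
      aeval (LaurentPolynomial.T 1 + LaurentPolynomial.T (-1)) ψ) :
    aeval (ζ + ζ⁻¹) ψ = 0 := by
  have h0 : ζ ≠ 0 := hζ.ne_zero hn.ne'
  let u : ℂˣ := Units.mk0 ζ h0
  let f : LaurentPolynomial ℤ →+* ℂ := LaurentPolynomial.eval₂ (Int.castRingHom ℂ) u
  have hf := congrArg f hid
  have hT : ∀ k : ℤ, f (LaurentPolynomial.T k) = ζ ^ k := fun k => by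
    simp [f, u]
  have hψ : f (aeval (LaurentPolynomial.T 1 + LaurentPolynomial.T (-1)) ψ)
      = aeval (ζ + ζ⁻¹) ψ := by
    have h := aeval_algHom_apply f.toIntAlgHom
      (LaurentPolynomial.T 1 + LaurentPolynomial.T (-1)) ψ
    have e : f.toIntAlgHom (LaurentPolynomial.T 1 + LaurentPolynomial.T (-1)) = ζ + ζ⁻¹ := by
      change f _ = _
      rw [map_add, hT, hT, zpow_one, zpow_neg_one]
    rw [e] at h
    exact h.symm
  have hΦ : f (toLaurent (cyclotomic n ℤ)) = 0 := by
    have := hζ.isRoot_cyclotomic hn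
    rw [IsRoot.def, ← map_cyclotomic_int, eval_map] at this
    simpa [f, u] using this
  rw [map_mul, hΦ, hT, hψ] at hf
  exact (mul_eq_zero.mp hf.symm).resolve_left (zpow_ne_zero _ h0)


/-- Let `ζ ∈ ℂ` be a primitive `n`-th root of unity, `n ≥ 3`, and let `ψₙ ∈ ℤ[t]` be the
unique monic polynomial of degree `φ(n)/2` with `Φₙ(t) = t^(φ(n)/2)·ψₙ(t + t⁻¹)` in
`ℤ[t,t⁻¹]`.  Then `(ζ + ζ⁻¹)/2` is integral over `ℤ[1/2]`, and its minimal polynomial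
over `ℚ` is `2^(−φ(n)/2)·ψₙ(2t)`. -/
theorem isIntegral_and_minpoly_half_sum_primitiveRoot
    (n : ℕ) (hn : 3 ≤ n) (ζ : ℂ) (hζ : IsPrimitiveRoot ζ n)
    (ψ : Polynomial ℤ) (hmonic : ψ.Monic) (hdeg : ψ.natDegree = n.totient / 2)
    (hid : Polynomial.toLaurent (Polynomial.cyclotomic n ℤ) =
      LaurentPolynomial.T ((n.totient / 2 : ℕ) : ℤ) *
        Polynomial.aeval (LaurentPolynomial.T 1 + LaurentPolynomial.T (-1)) ψ) :
    IsIntegral (Algebra.adjoin ℤ {((2 : ℂ))⁻¹}) ((ζ + ζ⁻¹) / 2) ∧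
    minpoly ℚ ((ζ + ζ⁻¹) / 2) =
      Polynomial.C (((2 : ℚ) ^ (n.totient / 2))⁻¹) *
        ((ψ.map (Int.castRingHom ℚ)).comp (Polynomial.C 2 * Polynomial.X)) := by
  have hpos : 0 < n := by omega
  constructor
  · have hs : IsIntegral ℤ (ζ + ζ⁻¹) := (hζ.isIntegral hpos).add (hζ.inv.isIntegral hpos)
    have hhalf : IsIntegral (Algebra.adjoin ℤ {((2 : ℂ))⁻¹}) ((2 : ℂ)⁻¹) :=
      isIntegral_algebraMap (x := (⟨2⁻¹, Algebra.self_mem_adjoin_singleton ℤ _⟩ :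
        Algebra.adjoin ℤ {((2 : ℂ))⁻¹}))
    rw [div_eq_mul_inv]
    exact hs.tower_top.mul hhalf
  · have hψdeg : (ψ.map (Int.castRingHom ℚ)).natDegree = n.totient / 2 := by
      rw [hmonic.natDegree_map, hdeg]
    have hlin : (Polynomial.C (2 : ℚ) * Polynomial.X).natDegree = 1 :=
      Polynomial.natDegree_C_mul_X _ two_ne_zero
    have hQm : (Polynomial.C (((2 : ℚ) ^ (n.totient / 2))⁻¹) *
        ((ψ.map (Int.castRingHom ℚ)).comp (Polynomial.C 2 * Polynomial.X))).Monic := by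
      rw [Polynomial.Monic, Polynomial.leadingCoeff_mul,
        Polynomial.leadingCoeff_comp (by rw [hlin]; exact one_ne_zero), hψdeg,
        (hmonic.map _).leadingCoeff]
      simp
    have hQd : (Polynomial.C (((2 : ℚ) ^ (n.totient / 2))⁻¹) *
        ((ψ.map (Int.castRingHom ℚ)).comp (Polynomial.C 2 * Polynomial.X))).natDegree
          = n.totient / 2 := by
      rw [Polynomial.natDegree_C_mul (by positivity), Polynomial.natDegree_comp, hlin, hψdeg,
        mul_one]
    symm
    refine minpoly.unique _ _ hQm ?_ fun q hq hq0 => ?_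
    · have h := aeval_sum_inv_eq_zero hpos hζ hid
      rw [map_mul, Polynomial.aeval_comp]
      have e : Polynomial.aeval ((ζ + ζ⁻¹) / 2) (Polynomial.C (2 : ℚ) * Polynomial.X)
          = ζ + ζ⁻¹ := by
        simp [mul_div_cancel₀]
      rw [e, ← algebraMap_int_eq, Polynomial.aeval_map_algebraMap, h, mul_zero]
    · rw [Polynomial.degree_eq_natDegree hQm.ne_zero, Polynomial.degree_eq_natDegree hq.ne_zero,
        Nat.cast_le, hQd]
      have := totient_le_of_aeval_half_sum_eq_zero hpos hζ hq hq0
      omega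
end

section
/- Let k be a field of characteristic different from 2, let n ≥ 3 be an integer invertible in k, and let ζ ∈ k be a primitive n-th root of unity. Then the matrix M_ζ = [[ζ + ζ⁻¹, ζ + ζ⁻¹ − 2],[1, 2]] is invertible (its determinant equals ζ + ζ⁻¹ + 2 ≠ 0), and its image in PGL₂(k) has order exactly n. -/
/-- If `M` is diagonalized by `P` with eigenvalues `z * b` and `b`, then `M ^ m` is scalar exactly
when the ratio `z` of the eigenvalues satisfies `z ^ m = 1`. -/
lemma pow_mem_center_iff {k : Type*} [Field k] (M P D : GL (Fin 2) k) (z b : k) (hb : b ≠ 0)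
    (hD : D.val = Matrix.diagonal ![z * b, b]) (h : M * P = P * D) (m : ℕ) :
    M ^ m ∈ Subgroup.center (GL (Fin 2) k) ↔ z ^ m = 1 := by
  have hM : M = P * D * P⁻¹ := by rw [← h]; group
  have hconj : M ^ m ∈ Subgroup.center (GL (Fin 2) k) ↔
      D ^ m ∈ Subgroup.center (GL (Fin 2) k) := by
    rw [hM, conj_pow, Subgroup.Normal.mem_comm_iff inferInstance, inv_mul_cancel_left]
  rw [hconj, Matrix.GeneralLinearGroup.mem_center_iff_val_mem_range_scalar, Units.val_pow_eq_pow_val,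
    hD, Matrix.diagonal_pow]
  constructor
  · rintro ⟨c, hc⟩
    rw [Matrix.scalar_apply, Matrix.diagonal_eq_diagonal_iff] at hc
    have h0 : c = (z * b) ^ m := by simpa using hc 0
    have h1 : c = b ^ m := by simpa using hc 1
    rw [mul_pow] at h0
    exact mul_right_cancel₀ (pow_ne_zero m hb) (by rw [← h0, h1, one_mul])
  · intro hz
    refine ⟨b ^ m, ?_⟩
    rw [Matrix.scalar_apply, Matrix.diagonal_eq_diagonal_iff]
    intro i
    fin_cases i <;> simp [mul_pow, hz]

/-- Let `k` be a field of characteristic `≠ 2`, `n ≥ 3` invertible in `k`, and `ζ ∈ k`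
a primitive `n`-th root of unity.  The matrix `M_ζ = [[ζ+ζ⁻¹, ζ+ζ⁻¹−2],[1,2]]` has
determinant `ζ + ζ⁻¹ + 2 ≠ 0`, hence is invertible, and its image in `PGL₂(k)` has
order exactly `n`. -/
theorem matrix_Mzeta_det_ne_zero_and_orderOf
    {k : Type*} [Field k] (hchar : ringChar k ≠ 2)
    (n : ℕ) (hn : 3 ≤ n) (hinv : (n : k) ≠ 0)
    (ζ : k) (hζ : IsPrimitiveRoot ζ n) :
    (!![ζ + ζ⁻¹, ζ + ζ⁻¹ - 2; 1, 2] : Matrix (Fin 2) (Fin 2) k).det = ζ + ζ⁻¹ + 2 ∧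
    ζ + ζ⁻¹ + 2 ≠ 0 ∧
    ∃ M : GL (Fin 2) k, M.val = !![ζ + ζ⁻¹, ζ + ζ⁻¹ - 2; 1, 2] ∧
      orderOf (QuotientGroup.mk M : PGL2 k) = n := by
  have hζ0 : ζ ≠ 0 := hζ.ne_zero (by omega)
  have hsq : ζ ^ 2 ≠ 1 := hζ.pow_ne_one_of_pos_of_lt (by omega) (by omega)
  have ha : ζ + 1 ≠ 0 := fun h => hsq (by linear_combination (ζ - 1) * h)
  have hb : 1 + ζ⁻¹ ≠ 0 := by
    intro h
    apply ha
    field_simp at h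
    linear_combination h
  have hdet : (!![ζ + ζ⁻¹, ζ + ζ⁻¹ - 2; 1, 2] : Matrix (Fin 2) (Fin 2) k).det = ζ + ζ⁻¹ + 2 := by
    rw [Matrix.det_fin_two_of]; ring
  have hne : ζ + ζ⁻¹ + 2 ≠ 0 := by
    have h : ζ + ζ⁻¹ + 2 = (ζ + 1) * (1 + ζ⁻¹) := by field_simp; ring
    rw [h]
    exact mul_ne_zero ha hb
  refine ⟨hdet, hne, Matrix.GeneralLinearGroup.mkOfDetNeZero _ (hdet ▸ hne), rfl, ?_⟩
  have hP : (!![ζ - 1, ζ⁻¹ - 1; 1, 1] : Matrix (Fin 2) (Fin 2) k).det ≠ 0 := by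
    rw [Matrix.det_fin_two_of]
    intro h
    apply hsq
    field_simp at h
    linear_combination h
  have hD : (Matrix.diagonal ![ζ * (1 + ζ⁻¹), 1 + ζ⁻¹] : Matrix (Fin 2) (Fin 2) k).det ≠ 0 := by
    simp [Matrix.det_diagonal, hζ0, hb]
  have key := pow_mem_center_iff (Matrix.GeneralLinearGroup.mkOfDetNeZero _ (hdet ▸ hne))
    (Matrix.GeneralLinearGroup.mkOfDetNeZero _ hP)
    (Matrix.GeneralLinearGroup.mkOfDetNeZero _ hD) ζ (1 + ζ⁻¹) hb rfl (by
      apply Units.ext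
      change !![ζ + ζ⁻¹, ζ + ζ⁻¹ - 2; 1, 2] * !![ζ - 1, ζ⁻¹ - 1; 1, 1] =
        !![ζ - 1, ζ⁻¹ - 1; 1, 1] * Matrix.diagonal ![ζ * (1 + ζ⁻¹), 1 + ζ⁻¹]
      ext i j
      fin_cases i <;> fin_cases j <;> simp [Matrix.mul_apply, Fin.sum_univ_two] <;>
        field_simp <;> ring)
  rw [hζ.eq_orderOf]
  refine orderOf_eq_orderOf_iff.mpr fun m => ?_
  rw [← QuotientGroup.mk_pow, QuotientGroup.eq_one_iff]
  exact key m
end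

section
/- Let p be an odd prime, q = p^s a power of p (s ≥ 1), and let A be an element of PGL₂(F_q). Then the order of A divides q − 1, q + 1, or p. -/
/-- An invertible matrix with scalar `n`-th power has projective order dividing `n`. -/
theorem orderOf_mk_dvd_of_pow_eq_algebraMap {F : Type*} [Field F] (g : GL (Fin 2) F) (n : ℕ)
    (a : F) (h : (g : Matrix (Fin 2) (Fin 2) F) ^ n = algebraMap F _ a) :
    orderOf (g : PGL2 F) ∣ n := by
  apply orderOf_dvd_of_pow_eq_one
  rw [← QuotientGroup.mk_pow, QuotientGroup.eq_one_iff, Subgroup.mem_center_iff]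
  intro x
  apply Units.ext
  rw [Units.val_mul, Units.val_mul, Units.val_pow_eq_pow_val, h]
  exact (Algebra.commutes a _).symm

/-- Completing the square in the Cayley–Hamilton identity. -/
theorem exists_eq_algebraMap_add_of_two_ne_zero {F : Type*} [Field F] (h2 : (2 : F) ≠ 0)
    (M : Matrix (Fin 2) (Fin 2) F) :
    ∃ (c e : F) (N : Matrix (Fin 2) (Fin 2) F),
      M = algebraMap F _ c + N ∧ N ^ 2 = algebraMap F _ e := by
  refine ⟨M.trace / 2, (M.trace / 2) ^ 2 - M.det, M - algebraMap F _ (M.trace / 2), by simp, ?_⟩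
  ext i j
  fin_cases i <;> fin_cases j <;>
    simp [pow_two, Matrix.mul_apply, Matrix.algebraMap_matrix_apply, Matrix.trace_fin_two,
      Matrix.det_fin_two] <;> field_simp <;> ring

/-- For `p` an odd prime and `q = p^s` (`s ≥ 1`), the order of any element of
`PGL₂(F_q)` divides `q − 1`, `q + 1`, or `p`. -/
theorem orderOf_PGL2_GaloisField_dvd
    (p : ℕ) [Fact p.Prime] (hp : p ≠ 2) (s : ℕ) (hs : 1 ≤ s)
    (A : PGL2 (GaloisField p s)) :
    orderOf A ∣ p ^ s - 1 ∨ orderOf A ∣ p ^ s + 1 ∨ orderOf A ∣ p := by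
  have hpp : p.Prime := Fact.out
  set F := GaloisField p s with hF
  obtain ⟨g, rfl⟩ := QuotientGroup.mk_surjective A
  have : Fintype F := Fintype.ofFinite F
  have hcard : Fintype.card F = p ^ s := by
    rw [← Nat.card_eq_fintype_card, hF, GaloisField.card p s (by omega)]
  have hchar : ringChar F ≠ 2 := by rwa [ringChar.eq F p]
  have hodd : p ^ s % 2 = 1 :=
    Nat.odd_iff.mp ((hpp.odd_of_ne_two hp).pow)
  obtain ⟨c, e, N, hM, hN⟩ := exists_eq_algebraMap_add_of_two_ne_zero
    (Ring.two_ne_zero hchar) (g : Matrix (Fin 2) (Fin 2) F)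
  have hcomm : Commute (algebraMap F (Matrix (Fin 2) (Fin 2) F) c) N := Algebra.commutes c N
  have hcq : c ^ p ^ s = c := hcard ▸ FiniteField.pow_card c
  have hNq : N ^ p ^ s = algebraMap F _ (e ^ (p ^ s / 2)) * N := by
    conv_lhs => rw [← Nat.div_add_mod (p ^ s) 2, hodd, pow_succ, pow_mul, hN, ← map_pow]
  have hMq : (g : Matrix (Fin 2) (Fin 2) F) ^ p ^ s
      = algebraMap F _ c + algebraMap F _ (e ^ (p ^ s / 2)) * N := by
    rw [hM, add_pow_char_pow_of_commute _ _ hcomm, hNq, ← map_pow, hcq]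
  by_cases he : e = 0
  · right; right
    apply orderOf_mk_dvd_of_pow_eq_algebraMap g p (c ^ p)
    have hNp : N ^ p = 0 := by
      rw [he, map_zero] at hN
      exact pow_eq_zero_of_le hpp.two_le hN
    rw [hM, add_pow_char_of_commute _ hcomm, hNp, add_zero, map_pow]
  rcases FiniteField.pow_dichotomy hchar he with h | h <;> rw [hcard] at h
  · left
    apply orderOf_mk_dvd_of_pow_eq_algebraMap g _ 1
    rw [h, map_one, one_mul, ← hM] at hMq
    have hg : g ^ p ^ s = g := Units.ext (by rw [Units.val_pow_eq_pow_val, hMq])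
    have hg1 : g ^ (p ^ s - 1) = 1 := by
      rw [← mul_left_inj g, ← pow_succ, Nat.sub_add_cancel (Nat.pos_of_ne_zero (by omega)), hg,
        one_mul]
    rw [← Units.val_pow_eq_pow_val, hg1, map_one, Units.val_one]
  · right; left
    apply orderOf_mk_dvd_of_pow_eq_algebraMap g _ (c ^ 2 - e)
    rw [pow_succ, hMq, h, hM, map_neg, map_one, neg_one_mul, map_sub, map_pow, ← hN,
      ← sub_eq_add_neg, sq, sq, hcomm.mul_self_sub_mul_self_eq']
end

section
/- Let p be an odd prime and q = p^s a power of p (s ≥ 1). Then the group PGL₂(F_q) contains exactly q² − 1 elements of order p, and every element of order p in PGL₂(F_q) lies in the subgroup PSL₂(F_q), i.e. admits a representative matrix in SL₂(F_q). -/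
section

variable {k : Type*} [Field k]

/-- Two classes in `PGL₂(k)` agree exactly when the matrices are proportional. -/
lemma mk_eq_mk_iff_exists_smul (M N : GL (Fin 2) k) :
    (QuotientGroup.mk M : PGL2 k) = QuotientGroup.mk N ↔ ∃ c : k, N.val = c • M.val := by
  rw [QuotientGroup.eq, Matrix.GeneralLinearGroup.mem_center_iff_val_mem_range_scalar]
  constructor
  · rintro ⟨c, hc⟩
    refine ⟨c, ?_⟩
    have h : N.val = M.val * (M⁻¹ * N).val := by
      rw [← Units.val_mul, mul_inv_cancel_left]
    rw [h, ← hc, Matrix.scalar_apply, ← Matrix.smul_one_eq_diagonal, mul_smul_comm, mul_one]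
  · rintro ⟨c, hc⟩
    refine ⟨c, ?_⟩
    rw [Units.val_mul, hc, mul_smul_comm, Units.inv_mul, Matrix.scalar_apply,
      Matrix.smul_one_eq_diagonal]

open Classical in
/-- A parametrization by `k²` of the nilpotent `2 × 2` matrices, i.e. the matrices
`!![x, y; z, -x]` with `x² + y z = 0`: for `y ≠ 0` the entries `x, y` are free and determine `z`,
while for `y = 0` also `x = 0` and `z` is free. -/
noncomputable def nilp (v : k × k) : Matrix (Fin 2) (Fin 2) k :=
  if v.2 = 0 then !![0, 0; v.1, 0] else !![v.1, v.2; -v.1 ^ 2 / v.2, -v.1]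

lemma nilp_injective : Function.Injective (nilp : k × k → _) := by
  rintro ⟨x, y⟩ ⟨x', y'⟩ h
  have h00 := congrFun (congrFun h 0) 0
  have h01 := congrFun (congrFun h 0) 1
  have h10 := congrFun (congrFun h 1) 0
  by_cases hy : y = 0 <;> by_cases hy' : y' = 0 <;> simp [nilp, hy, hy'] at h00 h01 h10
  · rw [hy, hy', h10]
  · exact absurd h01.symm hy'
  · rw [h00, h01]

lemma nilp_sq (v : k × k) : nilp v ^ 2 = 0 := by
  unfold nilp
  split_ifs with h
  · ext i j
    fin_cases i <;> fin_cases j <;> simp [sq]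
  · ext i j
    fin_cases i <;> fin_cases j <;> simp [sq] <;> field_simp <;> ring

lemma det_one_add_nilp (v : k × k) : (1 + nilp v).det = 1 := by
  unfold nilp
  split_ifs with h
  · simp [Matrix.det_fin_two]
  · simp only [Matrix.det_fin_two, Matrix.add_apply]
    simp
    field_simp
    ring

lemma trace_nilp (v : k × k) : (nilp v).trace = 0 := by
  unfold nilp
  split_ifs with h <;> simp [Matrix.trace_fin_two]

lemma nilp_zero : nilp (0 : k × k) = 0 := by
  ext i j
  fin_cases i <;> fin_cases j <;> simp [nilp]

lemma exists_nilp_eq (N : Matrix (Fin 2) (Fin 2) k) (hN : IsNilpotent N) :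
    ∃ v, nilp v = N := by
  have ht : N.trace = 0 := (Matrix.isNilpotent_trace_of_isNilpotent hN).eq_zero
  have hd : N.det = 0 := by
    obtain ⟨n, hn⟩ := hN
    have : N.det ^ n * N.det = 0 := by
      rw [← Matrix.det_pow, ← Matrix.det_mul, hn, zero_mul, Matrix.det_zero]
    rcases mul_eq_zero.mp this with h | h
    · exact eq_zero_of_pow_eq_zero h
    · exact h
  rw [Matrix.trace_fin_two] at ht
  rw [Matrix.det_fin_two] at hd
  have h11 : N 1 1 = -N 0 0 := by linear_combination ht
  rw [h11] at hd
  by_cases hy : N 0 1 = 0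
  · have hx : N 0 0 = 0 := by
      rw [hy] at hd
      simpa using hd
    refine ⟨(N 1 0, 0), ?_⟩
    ext i j
    fin_cases i <;> fin_cases j <;> simp [nilp, hx, hy, h11]
  · refine ⟨(N 0 0, N 0 1), ?_⟩
    have hz : -N 0 0 ^ 2 / N 0 1 = N 1 0 := by
      rw [div_eq_iff hy]
      linear_combination hd
    ext i j
    fin_cases i <;> fin_cases j <;> simp [nilp, hy, h11, hz]

/-- The unipotent matrix `1 + nilp v`, as an element of `GL₂(k)`. -/
noncomputable def unip (v : k × k) : GL (Fin 2) k :=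
  Matrix.GeneralLinearGroup.mkOfDetNeZero (1 + nilp v) (by simp [det_one_add_nilp])

lemma coe_unip (v : k × k) : (unip v).val = 1 + nilp v := rfl

lemma unip_zero : unip (0 : k × k) = 1 := by
  ext1
  simp [coe_unip, nilp_zero]

lemma mk_unip_injective (h2 : (2 : k) ≠ 0) :
    Function.Injective fun v : k × k ↦ (QuotientGroup.mk (unip v) : PGL2 k) := by
  intro v w h
  obtain ⟨c, hc⟩ := (mk_eq_mk_iff_exists_smul _ _).mp h
  rw [coe_unip, coe_unip] at hc
  have ht := congrArg Matrix.trace hc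
  simp only [Matrix.trace_add, Matrix.trace_smul, trace_nilp, Matrix.trace_one, add_zero,
    Fintype.card_fin, Nat.cast_ofNat, smul_eq_mul] at ht
  have hc1 : c = 1 := mul_right_cancel₀ h2 (by rw [one_mul, ← ht])
  rw [hc1, one_smul] at hc
  exact (nilp_injective (add_left_cancel hc)).symm

variable (p : ℕ) [Fact p.Prime] [CharP k p]

lemma unip_pow_char (v : k × k) : unip v ^ p = 1 := by
  have hp : 2 ≤ p := (Fact.out : p.Prime).two_le
  ext1
  rw [Units.val_pow_eq_pow_val, coe_unip, add_pow_char_of_commute _ (Commute.one_left _), one_pow,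
    pow_eq_zero_of_le hp (nilp_sq v), add_zero, Units.val_one]

lemma exists_mk_unip_eq [Finite k] (A : PGL2 k) (hA : A ^ p = 1) :
    ∃ v, (QuotientGroup.mk (unip v) : PGL2 k) = A := by
  induction A using QuotientGroup.induction_on with | H M =>
  have hp : p ≠ 0 := (Fact.out : p.Prime).ne_zero
  rw [← QuotientGroup.mk_pow, ← QuotientGroup.mk_one, eq_comm, mk_eq_mk_iff_exists_smul] at hA
  obtain ⟨c, hc⟩ := hA
  rw [Units.val_pow_eq_pow_val, Units.val_one] at hc
  obtain ⟨d, rfl⟩ := surjective_frobenius k p c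
  rw [frobenius_def] at hc
  have hd : d ≠ 0 := by
    rintro rfl
    rw [zero_pow hp, zero_smul, ← Units.val_pow_eq_pow_val] at hc
    exact (M ^ p).ne_zero hc
  have hN : IsNilpotent (d⁻¹ • M.val - 1) := by
    refine ⟨p, ?_⟩
    rw [sub_pow_char_of_commute _ (Commute.one_right _), smul_pow, hc, smul_smul, ← mul_pow,
      inv_mul_cancel₀ hd, one_pow, one_pow, one_smul, sub_self]
  obtain ⟨v, hv⟩ := exists_nilp_eq _ hN
  refine ⟨v, (mk_eq_mk_iff_exists_smul _ _).mpr ⟨d, ?_⟩⟩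
  rw [coe_unip, hv, add_sub_cancel, smul_smul, mul_inv_cancel₀ hd, one_smul]

/-- The elements of order `p` are the classes of the nontrivial unipotent matrices. -/
lemma image_mk_unip [Finite k] (h2 : (2 : k) ≠ 0) :
    (fun v : k × k ↦ (QuotientGroup.mk (unip v) : PGL2 k)) '' {0}ᶜ = {A | orderOf A = p} := by
  ext A
  simp only [Set.mem_image, Set.mem_compl_iff, Set.mem_singleton_iff, Set.mem_ofPred_eq,
    orderOf_eq_prime_iff]
  constructor
  · rintro ⟨v, hv, rfl⟩
    refine ⟨by rw [← QuotientGroup.mk_pow, unip_pow_char, QuotientGroup.mk_one], fun h ↦ hv ?_⟩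
    apply mk_unip_injective h2
    simpa [unip_zero] using h
  · rintro ⟨hA, hA1⟩
    obtain ⟨v, rfl⟩ := exists_mk_unip_eq p A hA
    refine ⟨v, ?_, rfl⟩
    rintro rfl
    exact hA1 (by rw [unip_zero, QuotientGroup.mk_one])

end

/-- For `p` an odd prime and `q = p^s` (`s ≥ 1`), the group `PGL₂(F_q)` contains exactly
`q² − 1` elements of order `p`, and every element of order `p` admits a representative
matrix of determinant `1` (i.e. lies in `PSL₂(F_q)`, the image of `SL₂(F_q)`). -/
theorem card_orderOf_eq_char_PGL2_GaloisField
    (p : ℕ) [Fact p.Prime] (hp : p ≠ 2) (s : ℕ) (hs : 1 ≤ s) :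
    Nat.card {A : PGL2 (GaloisField p s) | orderOf A = p} = (p ^ s) ^ 2 - 1 ∧
    ∀ A : PGL2 (GaloisField p s), orderOf A = p →
      ∃ M : GL (Fin 2) (GaloisField p s),
        (QuotientGroup.mk M : PGL2 (GaloisField p s)) = A ∧ M.val.det = 1 := by
  have h2 : (2 : GaloisField p s) ≠ 0 := Ring.two_ne_zero (by rwa [ringChar.eq _ p])
  refine ⟨?_, fun A hA ↦ ?_⟩
  · have hcard : Nat.card (GaloisField p s) = p ^ s := GaloisField.card p s (by omega)
    rw [Nat.card_coe_set_eq, ← image_mk_unip p h2,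
      Set.ncard_image_of_injective _ (mk_unip_injective h2), Set.ncard_compl, Nat.card_prod, hcard,
      Set.ncard_singleton, sq]
  · obtain ⟨v, hv⟩ := exists_mk_unip_eq p A (orderOf_eq_prime_iff.mp hA).1
    exact ⟨unip v, hv, det_one_add_nilp v⟩
end

section
/- Let p be an odd prime, q = p^s a power of p, and let k be an algebraically closed field containing F_q. Consider the action of PGL₂(F_q) on the projective line P¹(k) via the inclusion F_q ⊆ k. Then a point x ∈ P¹(k) is fixed by some element of order p of PGL₂(F_q) if and only if x belongs to P¹(F_q), i.e. x has homogeneous coordinates in F_q. -/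
/-- An equation `r * v 0 + s * v 1 = 0` with `r, s ∈ F` not both zero cuts out an
`F`-rational point of the projective line. -/
lemma exists_rational_of_row {F k : Type*} [Field F] [Field k] (ι : F →+* k)
    (v : Fin 2 → k) (hv : v ≠ 0) (r s : F) (hrs : ¬(r = 0 ∧ s = 0))
    (h : ι r * v 0 + ι s * v 1 = 0) :
    ∃ (w : Fin 2 → F) (c : k), w ≠ 0 ∧ c ≠ 0 ∧ v = c • fun i => ι (w i) := by
  suffices H : ∃ c : k, v = c • fun i => ι (![s, -r] i) by
    obtain ⟨c, hc⟩ := H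
    refine ⟨![s, -r], c, ?_, ?_, hc⟩
    · intro h0
      have h1 := congrFun h0 0
      have h2 := congrFun h0 1
      simp at h1 h2
      exact hrs ⟨h2, h1⟩
    · rintro rfl
      exact hv (by simpa using hc)
  by_cases hs : s = 0
  · subst hs
    have hr : ι r ≠ 0 := by simpa using hrs
    have h0 : v 0 = 0 := by simpa [hr] using h
    refine ⟨-v 1 / ι r, ?_⟩
    ext i
    fin_cases i
    · simp [h0]
    · simp [hr]
  · have hs' : ι s ≠ 0 := by simpa using hs
    refine ⟨v 0 / ι s, ?_⟩
    ext i
    fin_cases i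
    · simp [hs']
    · simp
      field_simp
      linear_combination h

/-- A class in `PGL₂` is trivial exactly when its representative is a scalar matrix. -/
lemma mk_eq_one_iff_exists_scalar {F : Type*} [Field F] (M : GL (Fin 2) F) :
    (QuotientGroup.mk M : PGL2 F) = 1 ↔ ∃ a : F, M.val = Matrix.scalar (Fin 2) a := by
  rw [QuotientGroup.eq_one_iff, Matrix.GeneralLinearGroup.mem_center_iff_val_mem_range_scalar]
  simp [eq_comm]

/-- If `M` is non-scalar and `M ^ p` is scalar, the eigenvectors of `M` over an extension field
are rational, because `p`-th roots are unique and exist in the perfect field `F`. -/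
lemma rational_of_eigenvector {F k : Type*} [Field F] [Field k] (p : ℕ) [Fact p.Prime]
    [CharP F p] [PerfectRing F p] (ι : F →+* k) (v : Fin 2 → k) (hv : v ≠ 0)
    (M : Matrix (Fin 2) (Fin 2) F) (hM : ¬∃ a : F, M = Matrix.scalar (Fin 2) a)
    (a : F) (ha : M ^ p = Matrix.scalar (Fin 2) a)
    (c : k) (hc : (M.map ι).mulVec v = c • v) :
    ∃ (w : Fin 2 → F) (c : k), w ≠ 0 ∧ c ≠ 0 ∧ v = c • fun i => ι (w i) := by
  have : CharP k p := charP_of_injective_ringHom ι.injective p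
  have hpow : ∀ n : ℕ, ((M ^ n).map ι).mulVec v = c ^ n • v := by
    intro n
    induction n with
    | zero => simp
    | succ n ih =>
      rw [pow_succ, Matrix.map_mul, ← Matrix.mulVec_mulVec, hc, Matrix.mulVec_smul, ih,
        smul_smul, pow_succ']
  obtain ⟨b, hb⟩ := surjective_frobenius F p a
  rw [frobenius_def] at hb
  have hcb : c = ι b := by
    have h1 := hpow p
    obtain ⟨i, hi⟩ := Function.ne_iff.mp hv
    have h2 := congrFun h1 i
    rw [ha] at h2
    have h3 : ι a * v i = c ^ p * v i := by
      simpa [Matrix.diagonal_map, Matrix.mulVec_diagonal] using h2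
    have h4 := mul_right_cancel₀ hi h3
    apply frobenius_inj k p
    rw [frobenius_def, frobenius_def, ← h4, ← hb, map_pow]
  have e0 := congrFun hc 0
  have e1 := congrFun hc 1
  simp [Matrix.mulVec, dotProduct, Fin.sum_univ_two, hcb] at e0 e1
  by_cases h0 : M 0 0 - b = 0 ∧ M 0 1 = 0
  · by_cases h1 : M 1 0 = 0 ∧ M 1 1 - b = 0
    · refine absurd ⟨b, ?_⟩ hM
      ext i j
      fin_cases i <;> fin_cases j
      · simpa using sub_eq_zero.mp h0.1
      · simpa using h0.2
      · simpa using h1.1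
      · simpa using sub_eq_zero.mp h1.2
    · refine exists_rational_of_row ι v hv _ _ h1 ?_
      rw [map_sub]
      linear_combination e1
  · refine exists_rational_of_row ι v hv _ _ h0 ?_
    rw [map_sub]
    linear_combination e0

/-- The square-zero matrix `w (-w₁, w₀)`, whose image and kernel are both spanned by `w`
when `w ≠ 0`. -/
def nilMatrix {F : Type*} [Field F] (w : Fin 2 → F) : Matrix (Fin 2) (Fin 2) F :=
  !![-(w 0 * w 1), w 0 * w 0; -(w 1 * w 1), w 0 * w 1]

lemma one_add_nilMatrix_pow {F : Type*} [Field F] (p : ℕ) [Fact p.Prime] [CharP F p]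
    (w : Fin 2 → F) : (1 + nilMatrix w) ^ p = 1 := by
  have hsq : nilMatrix w ^ 2 = 0 := by
    rw [pow_two]
    ext i j
    fin_cases i <;> fin_cases j <;> simp [nilMatrix, Matrix.mul_apply, Fin.sum_univ_two] <;> ring
  rw [add_pow_char_of_commute (p := p) (Commute.one_left _), one_pow,
    pow_eq_zero_of_le (Fact.out : p.Prime).two_le hsq, add_zero]

lemma one_add_nilMatrix_not_scalar {F : Type*} [Field F] (w : Fin 2 → F) (hw : w ≠ 0) :
    ¬∃ a : F, 1 + nilMatrix w = Matrix.scalar (Fin 2) a := by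
  rintro ⟨a, ha⟩
  have h0 := congrFun (congrFun ha 0) 1
  have h1 := congrFun (congrFun ha 1) 0
  simp [nilMatrix] at h0 h1
  apply hw
  ext i
  fin_cases i
  · exact h0
  · exact h1

/-- Let `p` be an odd prime, `q = p^s`, and `k ⊇ F_q` algebraically closed.  A point of
`P¹(k)`, given by a nonzero vector `v`, is fixed by (the class of) some element of order
`p` of `PGL₂(F_q)` acting through `ι : F_q → k` iff `v` is proportional to a vector with
homogeneous coordinates in `F_q`. -/
theorem fixedPoints_of_order_p_elements_eq_P1_Fq
    (p : ℕ) [Fact p.Prime] (hp : p ≠ 2) (s : ℕ) (hs : 1 ≤ s)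
    {k : Type*} [Field k] [IsAlgClosed k] (ι : GaloisField p s →+* k)
    (v : Fin 2 → k) (hv : v ≠ 0) :
    (∃ M : GL (Fin 2) (GaloisField p s),
        orderOf (QuotientGroup.mk M : PGL2 (GaloisField p s)) = p ∧
        ∃ c : k, c ≠ 0 ∧ (M.val.map ι).mulVec v = c • v) ↔
      ∃ (w : Fin 2 → GaloisField p s) (c : k), w ≠ 0 ∧ c ≠ 0 ∧
        v = c • fun i => ι (w i) := by
  have hprime : p.Prime := Fact.out
  constructor
  · rintro ⟨M, hord, c, -, hc⟩
    have hM : ¬∃ a, M.val = Matrix.scalar (Fin 2) a := by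
      rw [← mk_eq_one_iff_exists_scalar, ← orderOf_eq_one_iff, hord]
      exact hprime.ne_one
    have hMp : (QuotientGroup.mk (M ^ p) : PGL2 (GaloisField p s)) = 1 := by
      rw [QuotientGroup.mk_pow]
      exact orderOf_dvd_iff_pow_eq_one.mp hord.dvd
    obtain ⟨a, ha⟩ := (mk_eq_one_iff_exists_scalar _).mp hMp
    rw [Units.val_pow_eq_pow_val] at ha
    exact rational_of_eigenvector p ι v hv M.val hM a ha c hc
  · rintro ⟨w, c, hw, -, rfl⟩
    have hpow := one_add_nilMatrix_pow p w
    let M : GL (Fin 2) (GaloisField p s) := Units.ofPowEqOne _ p hpow hprime.ne_zero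
    have hMval : M.val = 1 + nilMatrix w := rfl
    refine ⟨M, orderOf_eq_prime ?_ ?_, 1, one_ne_zero, ?_⟩
    · rw [← QuotientGroup.mk_pow, Units.pow_ofPowEqOne, QuotientGroup.mk_one]
    · rw [Ne, mk_eq_one_iff_exists_scalar, hMval]
      exact one_add_nilMatrix_not_scalar w hw
    · rw [hMval]
      ext i
      fin_cases i <;>
        simp [nilMatrix, Matrix.mulVec, dotProduct, Fin.sum_univ_two] <;> ring
end
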